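/- Assume a := ess sup ξ₀ < ∞ and that there exist ε > 0 and λ₀ > 0 such that Q{ξ₀⁻ > λ} ≤ 1/(log λ)^{2+ε} for all λ ≥ λ₀. Then ℙ⊗Q-almost surely, limsup_{n→∞} Z_n/n = a. -/

import Mathlib

open MeasureTheory ProbabilityTheory Filter Set

/-- Nearest-neighbour transition probability of Sinai's walk: from `x`, a step `s`
has probability `p` if `s = 1`, `1 − p` if `s = −1`, and `0` otherwise, where
`p = ω_x` is the environment at the current site. -/
noncomputable def stepProb (p : ℝ) (s : ℤ) : ℝ :=
  if s = 1 then p else if s = -1 then 1 - p else 0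

/-
The upper bound is trivial. For the lower bound fix `η > 0` and let `D = max (a - η - ξ) 0` be the
deficit of the scenery below the level `a - η`; it vanishes at a site with positive probability.

The potential `V` with increments `log ((1 - ω_y) / ω_y)` is a centred random walk. Almost surely
it has, at infinitely many scales, a deep valley in which `V` exceeds its value at the bottom `b` by
`2 j ^ γ` at every distance `j ≥ M` from `b`: a walk of length `N` staying above its minimum comes
back below the curve `2 j ^ γ` with probability at most `ε / √N` as soon as `γ < 1 / 2` and `M` is
large, and summing over the possible positions of the minimum keeps the probability of a sharp
valley bounded below. With a positive conditional probability that does not depend on the scale, `D`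
vanishes within `M` of `b` and is at most `exp (j ^ γ)` at larger distances `j`; here
`γ = 2 / (4 + ε)` makes the tail bound on the scenery summable. Disjoint annuli give independent
trials, so the second Borel-Cantelli lemma applies.

Let `π` be the reversible measure and let `R` be the resistance between `0` and `b`. The expected
number of visits to `y` before time `n` is at most `(R + n / π b) π y`. For
`n = ⌈R π b⌉` this makes both the expected number of exits from the valley and the expected
accumulated deficit over `η n` as small as we please. By Markov's inequality the average of the
scenery up to time `n` is at least `a - 2 η` with conditional probability at least `1 - κ` at some
arbitrarily late, environment-dependent time `n`; `κ` being arbitrary, this happens infinitely often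
almost surely.
-/

namespace Sinai

section ProductMeasure

variable {ι : Type*} {X : ι → Type*}

lemma dependsOn_mem_inter {A B : Set (∀ i, X i)} {S : Set ι} (hA : DependsOn (· ∈ A) S)
    (hB : DependsOn (· ∈ B) S) : DependsOn (· ∈ A ∩ B) S :=
  fun _ _ h => congrArg₂ And (hA h) (hB h)

lemma dependsOn_mem_union {A B : Set (∀ i, X i)} {S : Set ι} (hA : DependsOn (· ∈ A) S)
    (hB : DependsOn (· ∈ B) S) : DependsOn (· ∈ A ∪ B) S :=
  fun _ _ h => congrArg₂ Or (hA h) (hB h)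

lemma dependsOn_mem_compl {A : Set (∀ i, X i)} {S : Set ι} (hA : DependsOn (· ∈ A) S) :
    DependsOn (· ∈ Aᶜ) S :=
  fun _ _ h => congrArg Not (hA h)

lemma dependsOn_mem_iInter {κ : Sort*} {A : κ → Set (∀ i, X i)} {S : Set ι}
    (hA : ∀ k, DependsOn (· ∈ A k) S) : DependsOn (· ∈ ⋂ k, A k) S :=
  fun _ _ h => by simp only [mem_iInter, fun k => hA k h]

lemma dependsOn_mem_iUnion {κ : Sort*} {A : κ → Set (∀ i, X i)} {S : Set ι}
    (hA : ∀ k, DependsOn (· ∈ A k) S) : DependsOn (· ∈ ⋃ k, A k) S :=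
  fun _ _ h => by simp only [mem_iUnion, fun k => hA k h]

lemma dependsOn_mem_preimage {κ : Type*} {Y : κ → Type*} {A : Set (∀ k, Y k)} {T : Set κ}
    (hA : DependsOn (· ∈ A) T) {f : (∀ i, X i) → ∀ k, Y k} {S : Set ι}
    (hf : ∀ k ∈ T, DependsOn (f · k) S) : DependsOn (· ∈ f ⁻¹' A) S :=
  fun _ _ h => hA fun k hk => hf k hk h

variable [∀ i, MeasurableSpace (X i)]

lemma exists_domRestrict_preimage_eq [∀ i, Nonempty (X i)] {A : Set (∀ i, X i)}
    (hA : MeasurableSet A) {S : Set ι} (hAS : DependsOn (· ∈ A) S) :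
    ∃ B, MeasurableSet B ∧ S.domRestrict ⁻¹' B = A := by
  classical
  let extend (y : ∀ i : S, X i) (i : ι) : X i :=
    if h : i ∈ S then y ⟨i, h⟩ else Classical.arbitrary _
  have hext : Measurable extend := by
    refine measurable_pi_lambda _ fun i => ?_
    by_cases h : i ∈ S
    · simpa only [extend, h, dite_true] using measurable_pi_apply _
    · simp only [extend, h, dite_false, measurable_const]
  refine ⟨extend ⁻¹' A, hext hA, Set.ext fun x => iff_of_eq (hAS fun i hi => ?_)⟩
  simp only [extend, hi, dite_true, Set.domRestrict_apply]

variable (μ : ∀ i, Measure (X i)) [∀ i, IsProbabilityMeasure (μ i)]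

lemma indepFun_domRestrict {S T : Set ι} (hST : Disjoint S T) :
    IndepFun S.domRestrict T.domRestrict (Measure.infinitePi μ) := by
  have hle (U : Set ι) : MeasurableSpace.comap (U.domRestrict (π := X)) MeasurableSpace.pi ≤
      ⨆ i ∈ U, MeasurableSpace.comap (fun x => x i) inferInstance := by
    rw [MeasurableSpace.pi, MeasurableSpace.comap_iSup]
    refine iSup_le fun i => ?_
    rw [MeasurableSpace.comap_comp]
    exact le_iSup₂_of_le i.1 i.2 le_rfl
  have hindep : iIndepFun (fun i (x : ∀ i, X i) => x i) (Measure.infinitePi μ) :=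
    iIndepFun_infinitePi (X := fun _ x => x) (by fun_prop)
  exact indep_of_indep_of_le_left (indep_of_indep_of_le_right
    (indep_iSup_of_disjoint (fun i => (measurable_pi_apply i).comap_le) hindep hST) (hle T)) (hle S)

theorem infinitePi_inter_of_dependsOn {A B : Set (∀ i, X i)} (hA : MeasurableSet A)
    (hB : MeasurableSet B) {S T : Set ι} (hAS : DependsOn (· ∈ A) S) (hBT : DependsOn (· ∈ B) T)
    (hST : Disjoint S T) :
    Measure.infinitePi μ (A ∩ B) = Measure.infinitePi μ A * Measure.infinitePi μ B := by
  have := fun i => nonempty_of_isProbabilityMeasure (μ i)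
  obtain ⟨A', hA', rfl⟩ := exists_domRestrict_preimage_eq hA hAS
  obtain ⟨B', hB', rfl⟩ := exists_domRestrict_preimage_eq hB hBT
  exact (indepFun_domRestrict μ hST).measure_inter_preimage_eq_mul _ _ hA' hB'

theorem iIndepSet_infinitePi_of_dependsOn {κ : Type*} {A : κ → Set (∀ i, X i)}
    (hA : ∀ k, MeasurableSet (A k)) {S : κ → Set ι} (hAS : ∀ k, DependsOn (· ∈ A k) (S k))
    (hS : Pairwise (Function.onFun Disjoint S)) : iIndepSet A (Measure.infinitePi μ) := by
  classical
  rw [iIndepSet_iff_meas_biInter hA]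
  intro s
  induction s using Finset.induction_on with
  | empty => simp only [Finset.notMem_empty, iInter_of_empty, iInter_univ, measure_univ,
      Finset.prod_empty]
  | insert k s hk ih =>
    have hdep : DependsOn (· ∈ ⋂ j ∈ s, A j) (⋃ j ∈ s, S j) :=
      dependsOn_mem_iInter fun j => dependsOn_mem_iInter fun hj =>
        (hAS j).mono (subset_biUnion_of_mem (u := S) hj)
    have hdisj : Disjoint (S k) (⋃ j ∈ s, S j) :=
      disjoint_iUnion₂_right.2 fun j hj => hS (ne_of_mem_of_not_mem hj hk).symm
    rw [Finset.set_biInter_insert, Finset.prod_insert hk, ← ih]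
    exact infinitePi_inter_of_dependsOn μ (hA k) (s.measurableSet_biInter fun j _ => hA j)
      (hAS k) hdep hdisj

end ProductMeasure

section IIDSequences

/-- Law of an i.i.d. sequence with marginal `ν`. -/
noncomputable abbrev iidSeq (ν : Measure ℝ) : Measure (ℕ → ℝ) :=
  Measure.infinitePi fun _ => ν

/-- Partial sums of a sequence of increments: the random walk started from `0`. -/
def walk (w : ℕ → ℝ) (m : ℕ) : ℝ := ∑ i ∈ Finset.range m, w i

/-- The sequence seen from time `k` on. -/
def shift (k : ℕ) (w : ℕ → ℝ) : ℕ → ℝ := fun i => w (k + i)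

/-- The sequence starting with `z` and continuing with `w`. -/
def cons (z : ℝ) (w : ℕ → ℝ) : ℕ → ℝ := fun n => Nat.casesOn n z w

@[simp] lemma cons_succ (z : ℝ) (w : ℕ → ℝ) (n : ℕ) : cons z w (n + 1) = w n := rfl

lemma cons_zero_shift_one (w : ℕ → ℝ) : cons (w 0) (shift 1 w) = w := by
  ext (_ | n)
  · rfl
  · simp only [cons_succ, shift, add_comm]

@[simp] lemma walk_zero (w : ℕ → ℝ) : walk w 0 = 0 := Finset.sum_range_zero _

lemma walk_succ (w : ℕ → ℝ) (m : ℕ) : walk w (m + 1) = walk w m + w m :=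
  Finset.sum_range_succ _ _

lemma walk_cons_succ (z : ℝ) (w : ℕ → ℝ) (m : ℕ) : walk (cons z w) (m + 1) = z + walk w m :=
  (Finset.sum_range_succ' _ _).trans (add_comm _ _)

lemma walk_shift (w : ℕ → ℝ) (k m : ℕ) : walk (shift k w) m = walk w (k + m) - walk w k := by
  simp only [walk, shift, Finset.sum_range_add, add_sub_cancel_left]

lemma walk_neg (w : ℕ → ℝ) (m : ℕ) : walk (-w) m = -walk w m := Finset.sum_neg_distrib _

lemma walk_congr {w w' : ℕ → ℝ} {m N : ℕ} (h : m ≤ N) (hw : ∀ i ∈ Iio N, w i = w' i) :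
    walk w m = walk w' m :=
  Finset.sum_congr rfl fun _ hi => hw _ ((Finset.mem_range.1 hi).trans_le h)

@[fun_prop]
lemma measurable_walk (m : ℕ) : Measurable (walk · m) := by
  unfold walk; fun_prop

@[fun_prop]
lemma measurable_shift (k : ℕ) : Measurable (shift k) := by
  unfold shift; fun_prop

lemma measurable_cons : Measurable fun p : ℝ × (ℕ → ℝ) => cons p.1 p.2 :=
  measurable_pi_lambda _ fun n => by
    cases n with
    | zero => exact measurable_fst
    | succ n => exact (measurable_pi_apply n).comp measurable_snd

variable (ν : Measure ℝ) [IsProbabilityMeasure ν]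

lemma measurePreserving_shift (k : ℕ) : MeasurePreserving (shift k) (iidSeq ν) (iidSeq ν) :=
  ⟨measurable_shift k, Measure.map_infinitePi_infinitePi_of_inj (add_right_injective k)⟩

instance : IsProbabilityMeasure (ν.map Neg.neg) :=
  Measure.isProbabilityMeasure_map measurable_neg.aemeasurable

lemma measurePreserving_neg :
    MeasurePreserving (fun w : ℕ → ℝ => -w) (iidSeq ν) (iidSeq (ν.map Neg.neg)) :=
  ⟨by fun_prop, Measure.infinitePi_map_pi (fun _ => ν) fun _ => measurable_neg⟩

lemma dependsOn_mem_shift_preimage {A : Set (ℕ → ℝ)} {N : ℕ} (hA : DependsOn (· ∈ A) (Iio N))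
    (k : ℕ) : DependsOn (· ∈ shift k ⁻¹' A) (Ico k (k + N)) :=
  dependsOn_mem_preimage hA fun _ hi _ _ h =>
    h _ ⟨Nat.le_add_right _ _, Nat.add_lt_add_left (mem_Iio.1 hi) k⟩

lemma iidSeq_inter_shift_preimage {A B : Set (ℕ → ℝ)} (hA : MeasurableSet A)
    (hB : MeasurableSet B) {m : ℕ} (hAm : DependsOn (· ∈ A) (Iio m)) :
    iidSeq ν (A ∩ shift m ⁻¹' B) = iidSeq ν A * iidSeq ν B := by
  have hBm : DependsOn (· ∈ shift m ⁻¹' B) (Ici m) :=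
    dependsOn_mem_preimage (dependsOn_univ _) fun _ _ _ _ h => h _ (Nat.le_add_right m _)
  rw [infinitePi_inter_of_dependsOn _ hA (measurable_shift m hB) hAm hBm
      (Iio_disjoint_Ici le_rfl),
    (measurePreserving_shift ν m).measure_preimage hB.nullMeasurableSet]

lemma measurePreserving_cons :
    MeasurePreserving (fun p : ℝ × (ℕ → ℝ) => cons p.1 p.2) (ν.prod (iidSeq ν)) (iidSeq ν) := by
  refine ⟨measurable_cons, ?_⟩
  have hindep : IndepFun (fun w : ℕ → ℝ => w 0) (shift 1) (iidSeq ν) := by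
    rw [indepFun_iff_measure_inter_preimage_eq_mul]
    intro s t hs ht
    have hdep : DependsOn (· ∈ (fun w : ℕ → ℝ => w 0) ⁻¹' s) (Iio 1) := fun _ _ h =>
      congrArg (· ∈ s) (h 0 Nat.one_pos)
    rw [iidSeq_inter_shift_preimage ν (measurable_pi_apply 0 hs) ht hdep,
      (measurePreserving_shift ν 1).measure_preimage ht.nullMeasurableSet]
  have hlaw := (indepFun_iff_map_prod_eq_prod_map_map
    (measurable_pi_apply 0).aemeasurable (by fun_prop)).1 hindep
  rw [(measurePreserving_shift ν 1).map_eq, Measure.infinitePi_map_eval] at hlaw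
  rw [← hlaw, Measure.map_map measurable_cons (by fun_prop)]
  exact (congrArg (Measure.map · _) (funext cons_zero_shift_one)).trans Measure.map_id

lemma integrable_real_cons_preimage {E : Set (ℕ → ℝ)} (hE : MeasurableSet E) :
    Integrable (fun z => (iidSeq ν).real (cons z ⁻¹' E)) ν :=
  .of_bound (measurable_measure_prodMk_left
    (measurable_cons hE)).ennreal_toReal.aestronglyMeasurable 1 <|
      ae_of_all _ fun _ => (Real.norm_of_nonneg measureReal_nonneg).trans_le measureReal_le_one

lemma iidSeq_real_eq_integral_cons {E : Set (ℕ → ℝ)} (hE : MeasurableSet E) :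
    (iidSeq ν).real E = ∫ z, (iidSeq ν).real (cons z ⁻¹' E) ∂ν := by
  simp only [Measure.real]
  rw [← (measurePreserving_cons ν).measure_preimage hE.nullMeasurableSet,
    Measure.prod_apply (measurable_cons hE), ← integral_toReal
      (measurable_measure_prodMk_left (measurable_cons hE)).aemeasurable
      (ae_of_all _ fun _ => measure_lt_top _ _)]
  rfl

lemma iidSeq_real_le_integral {E : Set (ℕ → ℝ)} (hE : MeasurableSet E) {φ : ℝ → ℝ}
    (hφ : Integrable φ ν) (h : ∀ᵐ z ∂ν, (iidSeq ν).real (cons z ⁻¹' E) ≤ φ z) :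
    (iidSeq ν).real E ≤ ∫ z, φ z ∂ν :=
  (iidSeq_real_eq_integral_cons ν hE).trans_le
    (integral_mono_ae (integrable_real_cons_preimage ν hE) hφ h)

lemma pow_le_iidSeq_real_blocks {B : ℕ → Set (ℕ → ℝ)} (hB : ∀ i, MeasurableSet (B i)) {N : ℕ}
    (hBN : ∀ i, DependsOn (· ∈ B i) (Iio N)) {c : ℝ} (hc : 0 ≤ c)
    (hle : ∀ i, c ≤ (iidSeq ν).real (B i)) (n : ℕ) :
    c ^ n ≤ (iidSeq ν).real {w | ∀ i < n, shift (i * N) w ∈ B i} := by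
  have hmeas (i) : MeasurableSet (shift (i * N) ⁻¹' B i) := measurable_shift _ (hB i)
  have hdisj : Pairwise (Function.onFun Disjoint fun i => Ico (i * N) (i * N + N)) := by
    have hmono : Monotone fun i => i * N := fun _ _ h => Nat.mul_le_mul_right N h
    simpa only [Nat.succ_eq_succ, Nat.succ_mul] using hmono.pairwise_disjoint_on_Ico_succ
  have hindep := iIndepSet_infinitePi_of_dependsOn (fun _ => ν) hmeas
    (fun i => dependsOn_mem_shift_preimage (hBN i) (i * N)) hdisj
  have hset : {w | ∀ i < n, shift (i * N) w ∈ B i} =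
      ⋂ i ∈ Finset.range n, shift (i * N) ⁻¹' B i := by
    ext w; simp only [mem_ofPred_eq, Finset.mem_range, mem_iInter, mem_preimage]
  rw [hset, Measure.real, (iIndepSet_iff_meas_biInter hmeas).1 hindep, ENNReal.toReal_prod]
  calc c ^ n = ∏ _i ∈ Finset.range n, c := by rw [Finset.prod_const, Finset.card_range]
    _ ≤ ∏ i ∈ Finset.range n, (iidSeq ν (shift (i * N) ⁻¹' B i)).toReal :=
      Finset.prod_le_prod (fun _ _ => hc) fun i _ => by
        rw [(measurePreserving_shift ν _).measure_preimage (hB i).nullMeasurableSet]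
        exact hle i

end IIDSequences

section Survival

/-- A bounded, centred, nondegenerate law of the increments of a random walk; `c` bounds the
absolute value of the increments. -/
structure StepLaw (ν : Measure ℝ) (c : ℝ) : Prop where
  bdd : ∀ᵐ z ∂ν, |z| ≤ c
  integral_eq_zero : ∫ z, z ∂ν = 0
  variance_pos : 0 < Var[id; ν]

namespace StepLaw

variable {ν : Measure ℝ} {c : ℝ}

lemma nonneg [IsProbabilityMeasure ν] (h : StepLaw ν c) : 0 ≤ c :=
  let ⟨_, hz⟩ := h.bdd.exists
  (abs_nonneg _).trans hz

lemma integral_sq (h : StepLaw ν c) : ∫ z, z ^ 2 ∂ν = Var[id; ν] :=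
  (variance_of_integral_eq_zero aemeasurable_id h.integral_eq_zero).symm

lemma memLp [IsFiniteMeasure ν] (h : StepLaw ν c) (p : ENNReal) : MemLp id p ν :=
  .of_bound aestronglyMeasurable_id c h.bdd

lemma integrable [IsFiniteMeasure ν] (h : StepLaw ν c) : Integrable (fun z => z) ν :=
  memLp_one_iff_integrable.1 (h.memLp 1)

lemma integrable_sq [IsFiniteMeasure ν] (h : StepLaw ν c) : Integrable (fun z => z ^ 2) ν :=
  (h.memLp 2).integrable_sq

lemma neg (h : StepLaw ν c) : StepLaw (ν.map Neg.neg) c where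
  bdd := by
    rw [ae_map_iff (by fun_prop) (measurableSet_le (by fun_prop) (by fun_prop))]
    simpa only [abs_neg] using h.bdd
  integral_eq_zero := by
    rw [integral_map (by fun_prop) (by fun_prop), integral_neg, h.integral_eq_zero, neg_zero]
  variance_pos := by
    rw [variance_map aemeasurable_id measurable_neg.aemeasurable]
    exact (variance_neg (X := id)).symm ▸ h.variance_pos

lemma integrable_quadratic [IsFiniteMeasure ν] (h : StepLaw ν c) (α β κ : ℝ) :
    Integrable (fun z => α + β * z + κ * z ^ 2) ν :=
  ((integrable_const α).add (h.integrable.const_mul β)).add (h.integrable_sq.const_mul κ)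

lemma integral_quadratic [IsProbabilityMeasure ν] (h : StepLaw ν c) (α β κ : ℝ) :
    ∫ z, (α + β * z + κ * z ^ 2) ∂ν = α + κ * Var[id; ν] := by
  rw [integral_add (f := fun z => α + β * z) ((integrable_const α).add (h.integrable.const_mul β))
      (h.integrable_sq.const_mul κ),
    integral_add (integrable_const α) (h.integrable.const_mul β), integral_const_mul,
    integral_const_mul, h.integral_eq_zero, h.integral_sq, integral_const, probReal_univ,
    one_smul, mul_zero, add_zero]

end StepLaw

/-- The event that the walk started from `v` is nonnegative up to time `N`. -/
def stayNonneg (N : ℕ) (v : ℝ) : Set (ℕ → ℝ) := {w | ∀ m ≤ N, 0 ≤ v + walk w m}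

lemma measurableSet_stayNonneg (N : ℕ) (v : ℝ) : MeasurableSet (stayNonneg N v) := by
  simp only [stayNonneg, ofPred_forall]
  exact .iInter fun _ => .iInter fun _ => measurableSet_le (by fun_prop) (by fun_prop)

lemma dependsOn_stayNonneg {N N' : ℕ} (h : N ≤ N') (v : ℝ) :
    DependsOn (· ∈ stayNonneg N v) (Iio N') := fun _ _ hw =>
  propext (forall₂_congr fun _ hm => by rw [walk_congr (hm.trans h) hw])

lemma stayNonneg_eq_empty {v : ℝ} (hv : v < 0) (N : ℕ) : stayNonneg N v = ∅ :=
  eq_empty_of_forall_notMem fun w hw => hv.not_ge (by simpa using hw 0 N.zero_le)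

lemma stayNonneg_zero {v : ℝ} (hv : 0 ≤ v) : stayNonneg 0 v = univ :=
  eq_univ_of_forall fun w m hm => by simpa [Nat.le_zero.1 hm] using hv

lemma stayNonneg_anti (v : ℝ) : Antitone (stayNonneg · v) :=
  fun _ _ h _ hw m hm => hw m (hm.trans h)

lemma cons_preimage_stayNonneg {v : ℝ} (hv : 0 ≤ v) (N : ℕ) (z : ℝ) :
    cons z ⁻¹' stayNonneg (N + 1) v = stayNonneg N (v + z) := by
  ext w
  refine ⟨fun h m hm => ?_, fun h m hm => ?_⟩
  · simpa only [walk_cons_succ, add_assoc] using h (m + 1) (Nat.succ_le_succ hm)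
  · cases m with
    | zero => simpa only [walk_zero, add_zero] using hv
    | succ m => simpa only [walk_cons_succ, add_assoc] using h m (Nat.le_of_succ_le_succ hm)

variable {ν : Measure ℝ} [IsProbabilityMeasure ν] {c : ℝ}

lemma integrable_stayNonneg {v : ℝ} (hv : 0 ≤ v) (N : ℕ) :
    Integrable (fun z => (iidSeq ν).real (stayNonneg N (v + z))) ν := by
  simpa only [cons_preimage_stayNonneg hv] using
    integrable_real_cons_preimage ν (measurableSet_stayNonneg (N + 1) v)

lemma sum_stayNonneg_succ {v : ℝ} (hv : 0 ≤ v) (n : ℕ) :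
    ∑ j ∈ Finset.range (n + 1), (iidSeq ν).real (stayNonneg j v) =
      ∫ z, ∑ j ∈ Finset.range n, (iidSeq ν).real (stayNonneg j (v + z)) ∂ν + 1 := by
  rw [Finset.sum_range_succ', integral_finsetSum _ fun j _ => integrable_stayNonneg hv j,
    stayNonneg_zero hv, probReal_univ]
  refine congrArg (· + 1) (Finset.sum_congr rfl fun _ _ => ?_)
  rw [iidSeq_real_eq_integral_cons ν (measurableSet_stayNonneg _ _)]
  simp only [cons_preimage_stayNonneg hv]

/- The right-hand side `v ↦ (v + c) (2L + c - v)` decreases by the step variance in each step, so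
it dominates the expected time spent in `[0, L]` before the walk leaves this interval. -/
lemma variance_mul_sum_stayNonneg_le (h : StepLaw ν c) {N : ℕ} {L : ℝ}
    (hL : 0 < L) (hLN : Var[id; ν] * N ≤ L ^ 2) {n : ℕ} (hn : n ≤ N) {v : ℝ} (hcv : -c ≤ v)
    (hvL : v ≤ L + c) :
    Var[id; ν] * ∑ j ∈ Finset.range n, (iidSeq ν).real (stayNonneg j v) ≤
      (v + c) * (2 * L + c - v) := by
  have hc := h.nonneg
  have hσ := h.variance_pos
  induction n generalizing v with
  | zero => simpa using mul_nonneg (neg_le_iff_add_nonneg.1 hcv) (by linarith)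
  | succ n ih =>
    rcases lt_or_ge v 0 with hv | hv
    · simpa [stayNonneg_eq_empty hv] using
        mul_nonneg (neg_le_iff_add_nonneg.1 hcv) (by linarith)
    rcases le_or_gt L v with hLv | hLv
    · calc Var[id; ν] * ∑ j ∈ Finset.range (n + 1), (iidSeq ν).real (stayNonneg j v)
          ≤ Var[id; ν] * ∑ _j ∈ Finset.range (n + 1), (1 : ℝ) := by
            gcongr; exact measureReal_le_one
        _ ≤ Var[id; ν] * N := by
            gcongr; simpa using mod_cast hn
        _ ≤ L ^ 2 := hLN
        _ ≤ (v + c) * (2 * L + c - v) := by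
            nlinarith [mul_nonneg (sub_nonneg.2 hLv) (by linarith : 0 ≤ L + c - v)]
    · have hint : Integrable (fun z => ∑ j ∈ Finset.range n,
          (iidSeq ν).real (stayNonneg j (v + z))) ν :=
        integrable_finsetSum _ fun j _ => integrable_stayNonneg hv j
      have hstep : ∀ᵐ z ∂ν, Var[id; ν] * ∑ j ∈ Finset.range n,
          (iidSeq ν).real (stayNonneg j (v + z)) ≤
            (v + c) * (2 * L + c - v) + (2 * L - 2 * v) * z + (-1) * z ^ 2 := by
        filter_upwards [h.bdd] with z hz
        obtain ⟨hz₁, hz₂⟩ := abs_le.1 hz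
        exact (ih (by omega) (by linarith) (by linarith)).trans_eq (by ring)
      have hmono := integral_mono_ae (hint.const_mul _) (h.integrable_quadratic _ _ _) hstep
      rw [integral_const_mul, h.integral_quadratic] at hmono
      rw [sum_stayNonneg_succ hv]
      linarith

lemma mul_stayNonneg_le (h : StepLaw ν c) {N : ℕ} (hN : 0 < N) {v : ℝ} (hv : 0 ≤ v)
    (hvN : v ≤ √(Var[id; ν] * N)) :
    Var[id; ν] * N * (iidSeq ν).real (stayNonneg N v) ≤
      (v + c) * (2 * √(Var[id; ν] * N) + c) := by
  have hσ := h.variance_pos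
  have hc := h.nonneg
  have hL : 0 < √(Var[id; ν] * N) := by positivity
  calc Var[id; ν] * N * (iidSeq ν).real (stayNonneg N v)
      = Var[id; ν] * ∑ _j ∈ Finset.range N, (iidSeq ν).real (stayNonneg N v) := by
        rw [Finset.sum_const, Finset.card_range, nsmul_eq_mul, mul_assoc]
    _ ≤ Var[id; ν] * ∑ j ∈ Finset.range N, (iidSeq ν).real (stayNonneg j v) := by
        gcongr with j hj
        · finiteness
        · exact stayNonneg_anti v (Finset.mem_range.1 hj).le
    _ ≤ (v + c) * (2 * √(Var[id; ν] * N) + c - v) :=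
        variance_mul_sum_stayNonneg_le h hL (Real.sq_sqrt (by positivity)).ge le_rfl
          (by linarith) (by linarith)
    _ ≤ (v + c) * (2 * √(Var[id; ν] * N) + c) := by gcongr; linarith

theorem exists_real_stayNonneg_le (h : StepLaw ν c) :
    ∃ C > 0, ∀ N : ℕ, 0 < N → ∀ v : ℝ, 0 ≤ v →
      (iidSeq ν).real (stayNonneg N v) ≤ C * (v + 1) / √N := by
  have hσ := h.variance_pos
  have hc := h.nonneg
  set s := √Var[id; ν]
  have hs : 0 < s := Real.sqrt_pos.2 hσ
  refine ⟨(1 + c) * (2 * s + c) / s ^ 2 + 1 / s, by positivity, fun N hN v hv => ?_⟩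
  have hN₁ : 1 ≤ √(N : ℝ) := Real.one_le_sqrt.2 (mod_cast hN)
  have hsN : √(Var[id; ν] * N) = s * √N := Real.sqrt_mul hσ.le _
  rw [add_mul, add_div]
  rcases le_or_gt v (s * √N) with hvN | hvN
  · have hmul := mul_stayNonneg_le h hN hv (hsN ▸ hvN)
    nth_rw 1 [hsN, ← Real.sq_sqrt hσ.le, ← Real.sq_sqrt (N.cast_nonneg (α := ℝ))] at hmul
    refine le_add_of_le_of_nonneg ?_ (by positivity)
    have hbound : (v + c) * (2 * (s * √N) + c) ≤
        ((1 + c) * (v + 1)) * ((2 * s + c) * √N) := by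
      gcongr
      · nlinarith
      · nlinarith
    rw [le_div_iff₀ (by positivity), ← mul_le_mul_iff_right₀ (by positivity : 0 < s ^ 2 * √N)]
    calc s ^ 2 * √N * ((iidSeq ν).real (stayNonneg N v) * √N)
        = s ^ 2 * √N ^ 2 * (iidSeq ν).real (stayNonneg N v) := by ring
      _ ≤ ((1 + c) * (v + 1)) * ((2 * s + c) * √N) := hmul.trans hbound
      _ = s ^ 2 * √N * ((1 + c) * (2 * s + c) / s ^ 2 * (v + 1)) := by field_simp
  · refine measureReal_le_one.trans (le_add_of_nonneg_of_le (by positivity) ?_)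
    rw [le_div_iff₀ (by positivity), one_div_mul_eq_div, le_div_iff₀ hs]
    linarith

end Survival

section Dips

/-- The event that the walk started from `y` is below `h` at some time `m ∈ [a, a + k)` and stays
nonnegative up to time `m + N`. -/
def dip (h : ℝ) (N a k : ℕ) (y : ℝ) : Set (ℕ → ℝ) :=
  {w | ∃ m ∈ Ico a (a + k), y + walk w m < h ∧ w ∈ stayNonneg (m + N) y}

lemma measurableSet_dip (h : ℝ) (N a k : ℕ) (y : ℝ) : MeasurableSet (dip h N a k y) := by
  simp only [dip, ofPred_exists, ofPred_and]
  exact .iUnion fun m => (MeasurableSet.const _).inter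
    ((measurableSet_lt (by fun_prop) (by fun_prop)).inter (measurableSet_stayNonneg _ _))

lemma dip_eq_empty {y : ℝ} (hy : y < 0) (h : ℝ) (N a k : ℕ) : dip h N a k y = ∅ := by
  simp only [dip, stayNonneg_eq_empty hy, mem_empty_iff_false, and_false, exists_false,
    ofPred_false]

lemma dip_zero_succ_subset {h y : ℝ} (hy : h ≤ y) (N k : ℕ) :
    dip h N 0 (k + 1) y ⊆ dip h N 1 k y := by
  rintro w ⟨m, hm, hlow, hstay⟩
  refine ⟨m, ⟨Nat.one_le_iff_ne_zero.2 ?_, by have := hm.2; omega⟩, hlow, hstay⟩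
  rintro rfl
  rw [walk_zero, add_zero] at hlow
  exact hlow.not_ge hy

lemma cons_preimage_dip_succ_subset {h y : ℝ} (hy : 0 ≤ y) (N a k : ℕ) (z : ℝ) :
    cons z ⁻¹' dip h N (a + 1) k y ⊆ dip h N a k (y + z) := by
  rintro w ⟨_ | m, ⟨hm₁, hm₂⟩, hlow, hstay⟩
  · omega
  · rw [walk_cons_succ, ← add_assoc] at hlow
    rw [add_right_comm, ← mem_preimage, cons_preimage_stayNonneg hy] at hstay
    exact ⟨m, ⟨by omega, by omega⟩, hlow, hstay⟩

variable {ν : Measure ℝ} [IsProbabilityMeasure ν] {c : ℝ}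

lemma real_dip_zero_le {h K : ℝ} {N : ℕ} (hK₀ : 0 ≤ K)
    (hK : ∀ y, 0 ≤ y → y < h → (iidSeq ν).real (stayNonneg N y) ≤ K) (k : ℕ) (y : ℝ) :
    (iidSeq ν).real (dip h N 0 k y) ≤ K := by
  rcases lt_or_ge y 0 with hy₀ | hy₀
  · rwa [dip_eq_empty hy₀, measureReal_empty]
  induction k generalizing y with
  | zero => simpa [dip] using hK₀
  | succ k ih =>
    rcases lt_or_ge y h with hy | hy
    · refine (measureReal_mono ?_).trans (hK y hy₀ hy)
      rintro w ⟨m, -, -, hstay⟩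
      exact stayNonneg_anti y (Nat.le_add_left N m) hstay
    · refine (measureReal_mono (dip_zero_succ_subset hy N k)).trans ?_
      refine (iidSeq_real_le_integral ν (measurableSet_dip _ _ _ _ _) (integrable_const K)
        (ae_of_all _ fun z => ?_)).trans_eq (by simp only [integral_const, probReal_univ, one_smul])
      refine (measureReal_mono (cons_preimage_dip_succ_subset hy₀ N 0 k z)).trans ?_
      rcases lt_or_ge (y + z) 0 with hz | hz
      · rwa [dip_eq_empty hz, measureReal_empty]
      · exact ih (y + z) hz

lemma real_dip_le {h K : ℝ} {N : ℕ} (hK₀ : 0 ≤ K)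
    (hK : ∀ y, 0 ≤ y → y < h → (iidSeq ν).real (stayNonneg N y) ≤ K) (a k : ℕ) (y : ℝ) :
    (iidSeq ν).real (dip h N a k y) ≤ K * (iidSeq ν).real (stayNonneg a y) := by
  induction a generalizing y with
  | zero =>
    rcases lt_or_ge y 0 with hy | hy
    · simp only [dip_eq_empty hy, stayNonneg_eq_empty hy, measureReal_empty, mul_zero, le_refl]
    · simpa only [stayNonneg_zero hy, probReal_univ, mul_one] using real_dip_zero_le hK₀ hK k y
  | succ a ih =>
    rcases lt_or_ge y 0 with hy | hy
    · simp only [dip_eq_empty hy, stayNonneg_eq_empty hy, measureReal_empty, mul_zero, le_refl]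
    · rw [iidSeq_real_eq_integral_cons ν (measurableSet_stayNonneg (a + 1) y),
        ← integral_const_mul]
      refine iidSeq_real_le_integral ν (measurableSet_dip _ _ _ _ _)
        ((integrable_real_cons_preimage ν (measurableSet_stayNonneg _ _)).const_mul K)
        (ae_of_all _ fun z => ?_)
      rw [cons_preimage_stayNonneg hy]
      exact (measureReal_mono (cons_preimage_dip_succ_subset hy N a k z)).trans (ih (y + z))

/-- The event that the walk is nonnegative up to time `l`, but at some time `m ∈ [M, l - N]` is
below the curve `2 m ^ γ`. -/
def lowVisit (γ : ℝ) (M N l : ℕ) : Set (ℕ → ℝ) :=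
  stayNonneg l 0 ∩ {w | ∃ m, M ≤ m ∧ m + N ≤ l ∧ walk w m < 2 * (m : ℝ) ^ γ}

lemma measurableSet_lowVisit (γ : ℝ) (M N l : ℕ) : MeasurableSet (lowVisit γ M N l) := by
  simp only [lowVisit, ofPred_exists, ofPred_and]
  exact (measurableSet_stayNonneg l 0).inter <| .iUnion fun m => (MeasurableSet.const _).inter <|
    (MeasurableSet.const _).inter (measurableSet_lt (by fun_prop) (by fun_prop))

lemma dependsOn_lowVisit (γ : ℝ) (M N l : ℕ) : DependsOn (· ∈ lowVisit γ M N l) (Iio l) :=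
  dependsOn_mem_inter (dependsOn_stayNonneg le_rfl 0) fun _ _ hw =>
    propext <| exists_congr fun m => and_congr_right fun _ => and_congr_right fun hm => by
      rw [walk_congr (Nat.le_of_add_right_le hm) hw]

lemma lowVisit_subset_biUnion_dip {γ : ℝ} (hγ : 0 ≤ γ) {j₀ M : ℕ} (hM : 2 ^ j₀ ≤ M) (N l : ℕ) :
    lowVisit γ M N l ⊆
      ⋃ j ∈ Finset.Ico j₀ l, dip (2 * (2 ^ γ) ^ (j + 1)) N (2 ^ j) (2 ^ j) 0 := by
  rintro w ⟨hw, m, hMm, hml, hlow⟩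
  have hm₀ : m ≠ 0 := ((Nat.two_pow_pos j₀).trans_le (hM.trans hMm)).ne'
  have hlt : m < 2 ^ (Nat.log 2 m + 1) := Nat.lt_pow_succ_log_self one_lt_two m
  have hj : j₀ ≤ Nat.log 2 m := (Nat.le_log_iff_pow_le one_lt_two hm₀).2 (hM.trans hMm)
  have hl : Nat.log 2 m < l := (Nat.log_lt_self 2 hm₀).trans_le (Nat.le_of_add_right_le hml)
  have hcurve : (m : ℝ) ^ γ ≤ (2 ^ γ) ^ (Nat.log 2 m + 1) := by
    rw [← Real.rpow_natCast, ← Real.rpow_mul two_pos.le, mul_comm, Real.rpow_mul two_pos.le,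
      Real.rpow_natCast]
    exact Real.rpow_le_rpow m.cast_nonneg (mod_cast hlt.le) hγ
  refine mem_biUnion (Finset.mem_Ico.2 ⟨hj, hl⟩) ⟨m, ⟨Nat.pow_log_le_self 2 hm₀, ?_⟩, ?_, ?_⟩
  · rwa [← two_mul, ← pow_succ']
  · rw [zero_add]
    linarith
  · exact stayNonneg_anti 0 hml hw

lemma exists_real_dip_dyadic_le (h : StepLaw ν c) {γ : ℝ} (hγ₀ : 0 ≤ γ) (hγ : γ < 1 / 2) :
    ∃ K > 0, ∃ r ∈ Ioo (0 : ℝ) 1, ∀ N > 0, ∀ j : ℕ,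
      (iidSeq ν).real (dip (2 * (2 ^ γ) ^ (j + 1)) N (2 ^ j) (2 ^ j) 0) ≤ K * r ^ j / √N := by
  obtain ⟨C, hC, hstay⟩ := exists_real_stayNonneg_le h
  have hone : 1 ≤ (2 : ℝ) ^ γ := Real.one_le_rpow one_le_two hγ₀
  have hlt : (2 : ℝ) ^ γ < √2 := by
    rw [Real.sqrt_eq_rpow]
    exact Real.rpow_lt_rpow_of_exponent_lt one_lt_two hγ
  have hsqrt : √2 ≤ (2 : ℝ) := Real.sqrt_le_iff.2 (by norm_num)
  refine ⟨5 * C ^ 2, by positivity, 2 ^ γ / √2, ⟨by positivity, (div_lt_one (by positivity)).2 hlt⟩,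
    fun N hN j => ?_⟩
  have hpow : 1 ≤ ((2 : ℝ) ^ γ) ^ j := one_le_pow₀ hone
  have hlevel : 2 * ((2 : ℝ) ^ γ) ^ (j + 1) + 1 ≤ 5 * (2 ^ γ) ^ j := by
    rw [pow_succ]
    nlinarith
  calc (iidSeq ν).real (dip (2 * (2 ^ γ) ^ (j + 1)) N (2 ^ j) (2 ^ j) 0)
      ≤ C * (2 * (2 ^ γ) ^ (j + 1) + 1) / √N * (iidSeq ν).real (stayNonneg (2 ^ j) 0) :=
        real_dip_le (by positivity) (fun y hy₀ hy => (hstay N hN y hy₀).trans (by gcongr)) _ _ _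
    _ ≤ C * (5 * (2 ^ γ) ^ j) / √N * (C * (0 + 1) / √(2 ^ j : ℕ)) := by
        gcongr
        exact hstay _ (Nat.two_pow_pos j) 0 le_rfl
    _ = 5 * C ^ 2 * (2 ^ γ / √2) ^ j / √N := by
        have hsqrt_pow : √((2 ^ j : ℕ) : ℝ) = √2 ^ j := by
          rw [Nat.cast_pow, Nat.cast_ofNat, Real.sqrt_eq_iff_eq_sq (by positivity) (by positivity),
            pow_right_comm, Real.sq_sqrt two_pos.le]
        rw [hsqrt_pow]
        ring

/- A walk that stays nonnegative for `N` further steps after a visit below `2 m ^ γ` pays the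
factor `m ^ γ / √N` on top of the cost `1 / √m` of surviving up to time `m`; these costs are
summable over dyadic `m` because `γ < 1 / 2`. -/
theorem exists_real_lowVisit_le (h : StepLaw ν c) {γ : ℝ} (hγ₀ : 0 ≤ γ) (hγ : γ < 1 / 2) {ε : ℝ}
    (hε : 0 < ε) :
    ∃ M₀ : ℕ, ∀ M ≥ M₀, ∀ N > 0, ∀ l, (iidSeq ν).real (lowVisit γ M N l) ≤ ε / √N := by
  obtain ⟨K, hK, r, ⟨hr₀, hr₁⟩, hdip⟩ := exists_real_dip_dyadic_le h hγ₀ hγ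
  obtain ⟨j₀, hj₀⟩ := exists_pow_lt_of_lt_one (by have := sub_pos.2 hr₁; positivity :
    0 < ε * (1 - r) / K) hr₁
  refine ⟨2 ^ j₀, fun M hM N hN l => ?_⟩
  calc (iidSeq ν).real (lowVisit γ M N l)
      ≤ ∑ j ∈ Finset.Ico j₀ l,
          (iidSeq ν).real (dip (2 * (2 ^ γ) ^ (j + 1)) N (2 ^ j) (2 ^ j) 0) :=
        (measureReal_mono (lowVisit_subset_biUnion_dip hγ₀ hM N l) (measure_ne_top _ _)).trans
          (measureReal_biUnion_finset_le _ _)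
    _ ≤ ∑ j ∈ Finset.Ico j₀ l, K * r ^ j / √N := Finset.sum_le_sum fun j _ => hdip N hN j
    _ = K * (∑ j ∈ Finset.Ico j₀ l, r ^ j) / √N := by rw [← Finset.sum_div, ← Finset.mul_sum]
    _ ≤ K * (r ^ j₀ / (1 - r)) / √N := by
        gcongr
        exact geom_sum_Ico_le_of_lt_one hr₀.le hr₁
    _ ≤ ε / √N := by
        gcongr
        rw [← mul_div_assoc, div_le_iff₀ (sub_pos.2 hr₁), mul_comm K]
        exact ((lt_div_iff₀ hK).1 hj₀).le

end Dips

section Blocks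

variable {ν : Measure ℝ} [IsProbabilityMeasure ν] {c : ℝ}

lemma measurableSet_exists_lt_abs_walk (r v : ℝ) (N : ℕ) :
    MeasurableSet {w : ℕ → ℝ | ∃ m ≤ N, r < |v + walk w m|} := by
  simp only [ofPred_exists, ofPred_and]
  exact .iUnion fun m => (MeasurableSet.const _).inter (measurableSet_lt (by fun_prop)
    (by fun_prop))

lemma real_exists_lt_abs_walk_le (h : StepLaw ν c) {r : ℝ} (hr : 0 < r) (N : ℕ) (v : ℝ) :
    (iidSeq ν).real {w | ∃ m ≤ N, r < |v + walk w m|} ≤ (v ^ 2 + Var[id; ν] * N) / r ^ 2 := by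
  have hvar := h.variance_pos
  induction N generalizing v with
  | zero =>
    by_cases hv : r < |v|
    · refine measureReal_le_one.trans ((one_le_div₀ (by positivity)).2 ?_)
      simpa only [sq_abs, CharP.cast_eq_zero, mul_zero, add_zero] using
        pow_le_pow_left₀ hr.le hv.le 2
    · simp only [nonpos_iff_eq_zero, exists_eq_left, walk_zero, add_zero, hv, ofPred_false,
        measureReal_empty]
      positivity
  | succ N ih =>
    by_cases hv : r < |v|
    · refine measureReal_le_one.trans ((one_le_div₀ (by positivity)).2 ?_)
      have hsq : r ^ 2 ≤ v ^ 2 := sq_abs v ▸ pow_le_pow_left₀ hr.le hv.le 2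
      exact hsq.trans (le_add_of_nonneg_right (by positivity))
    · have hstep (z : ℝ) :
          cons z ⁻¹' {w | ∃ m ≤ N + 1, r < |v + walk w m|} ⊆
            {w | ∃ m ≤ N, r < |v + z + walk w m|} := by
        rintro w ⟨_ | m, hm, hw⟩
        · exact absurd (by simpa only [walk_zero, add_zero] using hw) hv
        · exact ⟨m, by omega, by rwa [walk_cons_succ, ← add_assoc] at hw⟩
      calc (iidSeq ν).real {w | ∃ m ≤ N + 1, r < |v + walk w m|}
          ≤ ∫ z, ((v ^ 2 + Var[id; ν] * N) / r ^ 2 + 2 * v / r ^ 2 * z + 1 / r ^ 2 * z ^ 2) ∂ν := by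
            refine iidSeq_real_le_integral ν (measurableSet_exists_lt_abs_walk _ _ _)
              (h.integrable_quadratic _ _ _) (ae_of_all _ fun z => ?_)
            exact (measureReal_mono (hstep z)).trans ((ih (v + z)).trans_eq (by ring))
        _ = (v ^ 2 + Var[id; ν] * (N + 1 : ℕ)) / r ^ 2 := by
            rw [h.integral_quadratic]; push_cast; ring

lemma exists_le_real_sqrt_lt_walk (h : StepLaw ν c) :
    ∃ p > 0, ∀ᶠ n : ℕ in atTop, p ≤ (iidSeq ν).real {w | √n < walk w n} := by
  set γ := gaussianReal 0 Var[id; ν].toNNReal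
  have hlaw (i : ℕ) : HasLaw (fun w : ℕ → ℝ => w i) ν (iidSeq ν) :=
    (measurePreserving_eval_infinitePi (fun _ => ν) i).hasLaw
  have hvar : Var[fun w : ℕ → ℝ => w 0; iidSeq ν] = Var[id; ν] := (hlaw 0).variance_eq
  have hmean : ∫ w : ℕ → ℝ, w 0 ∂iidSeq ν = 0 := (hlaw 0).integral_eq.trans h.integral_eq_zero
  have hclt := tendstoInDistribution_inv_sqrt_mul_sum_sub (P := iidSeq ν) (P' := γ) (Y := id)
    (X := fun i w => w i) (by rw [hvar]; exact .id)
    ((h.memLp 2).comp_measurePreserving (measurePreserving_eval_infinitePi _ 0))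
    (iIndepFun_infinitePi (X := fun _ x => x) fun _ => measurable_id)
    fun i => (hlaw i).identDistrib (hlaw 0)
  have hpos : 0 < γ (Ioi 1) := pos_iff_ne_zero.2 fun h0 =>
    (isOpen_Ioi.measure_pos volume nonempty_Ioi).ne' (gaussianReal_absolutelyContinuous' 0
      (Real.toNNReal_pos.2 h.variance_pos).ne' h0)
  obtain ⟨p, -, hpγ⟩ := ENNReal.lt_iff_exists_real_btwn.1 hpos
  have hlim := ProbabilityMeasure.le_liminf_measure_open_of_tendsto hclt.tendsto
    (G := Ioi 1) isOpen_Ioi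
  simp only [hmean, mul_zero, sub_zero, ProbabilityMeasure.coe_mk, Measure.map_id] at hlim
  refine ⟨p, ENNReal.ofReal_pos.1 hpγ.1, ?_⟩
  filter_upwards [eventually_lt_of_lt_liminf (hpγ.2.trans_le hlim), eventually_gt_atTop 0]
    with n hn hn0
  rw [Measure.map_apply (by fun_prop) measurableSet_Ioi] at hn
  refine ((ENNReal.ofReal_le_iff_le_toReal (measure_ne_top _ _)).1 hn.le).trans_eq
    (congrArg (iidSeq ν).real (ext fun w => ?_))
  have hsqrt : 0 < √(n : ℝ) := Real.sqrt_pos.2 (Nat.cast_pos.2 hn0)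
  rw [mem_preimage, mem_Ioi, inv_mul_eq_div, one_lt_div hsqrt]
  rfl

/-- The event that the walk rises by at least `H` within `H ^ 2` steps, without leaving
`[-t * H, t * H]`. -/
def upBlock (t : ℝ) (H : ℕ) : Set (ℕ → ℝ) :=
  {w | H ≤ walk w (H * H) ∧ ∀ m ≤ H * H, |walk w m| ≤ t * H}

lemma measurableSet_upBlock (t : ℝ) (H : ℕ) : MeasurableSet (upBlock t H) := by
  simp only [upBlock, ofPred_and, ofPred_forall]
  exact (measurableSet_le (by fun_prop) (by fun_prop)).inter
    (.iInter fun _ => .iInter fun _ => measurableSet_le (by fun_prop) (by fun_prop))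

lemma dependsOn_upBlock (t : ℝ) (H : ℕ) : DependsOn (· ∈ upBlock t H) (Iio (H * H)) :=
  fun _ _ hw => propext <| and_congr (by rw [walk_congr le_rfl hw]) <|
    forall₂_congr fun _ hm => by rw [walk_congr hm hw]

lemma exists_le_real_upBlock (h : StepLaw ν c) :
    ∃ T > 0, ∃ p > 0, ∀ t ≥ T, ∀ᶠ H : ℕ in atTop, p ≤ (iidSeq ν).real (upBlock t H) := by
  obtain ⟨p, hp, hup⟩ := exists_le_real_sqrt_lt_walk h
  have hvar := h.variance_pos
  refine ⟨√(2 * Var[id; ν] / p), by positivity, p / 2, by positivity, fun t ht => ?_⟩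
  have ht0 : 0 < t := lt_of_lt_of_le (by positivity) ht
  have htend : Tendsto (fun H : ℕ => H * H) atTop atTop := tendsto_id.atTop_mul_atTop₀ tendsto_id
  filter_upwards [htend.eventually hup, eventually_gt_atTop 0] with H hH hH0
  have hescape : (iidSeq ν).real {w | ∃ m ≤ H * H, t * H < |0 + walk w m|} ≤ p / 2 := by
    refine (real_exists_lt_abs_walk_le h (by positivity) _ 0).trans ?_
    have ht2 : 2 * Var[id; ν] / p ≤ t ^ 2 := Real.sqrt_le_left ht0.le |>.1 ht
    rw [div_le_iff₀ hp] at ht2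
    rw [div_le_iff₀ (by positivity)]
    push_cast
    nlinarith [mul_le_mul_of_nonneg_right ht2 (mul_self_nonneg (H : ℝ))]
  have hcover : {w | √(H * H : ℕ) < walk w (H * H)} ⊆
      upBlock t H ∪ {w | ∃ m ≤ H * H, t * H < |0 + walk w m|} := by
    intro w hw
    rw [mem_ofPred_eq, Nat.cast_mul, Real.sqrt_mul_self H.cast_nonneg] at hw
    by_contra hcon
    simp only [mem_union, mem_ofPred_eq, not_or, not_exists, not_and, not_lt, zero_add] at hcon
    exact hcon.1 ⟨hw.le, hcon.2⟩
  linarith [hH.trans ((measureReal_mono hcover).trans (measureReal_union_le _ _))]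

end Blocks

section TwoSidedSpace

/-- Index set of the increments of the potential (`Sum.inl`) and of the scenery (`Sum.inr`). -/
abbrev Coord := ℤ ⊕ ℤ

/-- Joint law of an i.i.d. family of increments of the potential, with marginal `ν`, and an
independent i.i.d. scenery, with marginal `ρ`. -/
noncomputable abbrev jointLaw (ν ρ : Measure ℝ) : Measure (Coord → ℝ) :=
  Measure.infinitePi (Sum.elim (fun _ => ν) fun _ => ρ)

/-- The increments of the potential read to the right of the site `y`. -/
def rightIncr (y : ℤ) (x : Coord → ℝ) : ℕ → ℝ := fun i => x (.inl (y + 1 + i))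

/-- The increments of the potential read to the left of the site `y`, with the sign for which the
partial sums are again differences of the potential. -/
def leftIncr (y : ℤ) (x : Coord → ℝ) : ℕ → ℝ := fun i => -x (.inl (y - i))

@[fun_prop]
lemma measurable_rightIncr (y : ℤ) : Measurable (rightIncr y) := by
  unfold rightIncr; fun_prop

@[fun_prop]
lemma measurable_leftIncr (y : ℤ) : Measurable (leftIncr y) := by
  unfold leftIncr; fun_prop

lemma dependsOn_rightIncr_preimage {A : Set (ℕ → ℝ)} {m : ℕ} (hA : DependsOn (· ∈ A) (Iio m))
    (y : ℤ) : DependsOn (· ∈ rightIncr y ⁻¹' A) (Sum.inl '' Ioc y (y + m)) :=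
  dependsOn_mem_preimage hA fun i hi _ _ h =>
    h _ ⟨_, by rw [mem_Iio] at hi; constructor <;> omega, rfl⟩

lemma dependsOn_leftIncr_preimage {A : Set (ℕ → ℝ)} {m : ℕ} (hA : DependsOn (· ∈ A) (Iio m))
    (y : ℤ) : DependsOn (· ∈ leftIncr y ⁻¹' A) (Sum.inl '' Ioc (y - m) y) :=
  dependsOn_mem_preimage hA fun i hi _ _ h =>
    congrArg Neg.neg (h _ ⟨_, by rw [mem_Iio] at hi; constructor <;> omega, rfl⟩)

variable (ν ρ : Measure ℝ) [IsProbabilityMeasure ν] [IsProbabilityMeasure ρ]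

instance (i : Coord) : IsProbabilityMeasure (Sum.elim (fun _ : ℤ => ν) (fun _ : ℤ => ρ) i) := by
  cases i <;> assumption

lemma measurePreserving_rightIncr (y : ℤ) :
    MeasurePreserving (rightIncr y) (jointLaw ν ρ) (iidSeq ν) := by
  have hinj : Function.Injective fun i : ℕ => (.inl (y + 1 + i) : Coord) :=
    Sum.inl_injective.comp ((add_right_injective _).comp Nat.cast_injective)
  exact ⟨measurable_rightIncr y, Measure.map_infinitePi_infinitePi_of_inj hinj⟩

lemma measurePreserving_leftIncr (y : ℤ) :
    MeasurePreserving (leftIncr y) (jointLaw ν ρ) (iidSeq (ν.map Neg.neg)) := by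
  have hinj : Function.Injective fun i : ℕ => (.inl (y - i) : Coord) :=
    Sum.inl_injective.comp ((sub_right_injective).comp Nat.cast_injective)
  have hread : MeasurePreserving (fun (x : Coord → ℝ) (i : ℕ) => x (.inl (y - i))) (jointLaw ν ρ)
      (iidSeq ν) := ⟨by fun_prop, Measure.map_infinitePi_infinitePi_of_inj hinj⟩
  exact (measurePreserving_neg ν).comp hread

lemma jointLaw_real_rightIncr_preimage (y : ℤ) {A : Set (ℕ → ℝ)} (hA : MeasurableSet A) :
    (jointLaw ν ρ).real (rightIncr y ⁻¹' A) = (iidSeq ν).real A :=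
  (measurePreserving_rightIncr ν ρ y).measureReal_preimage hA.nullMeasurableSet

lemma jointLaw_real_leftIncr_preimage (y : ℤ) {A : Set (ℕ → ℝ)} (hA : MeasurableSet A) :
    (jointLaw ν ρ).real (leftIncr y ⁻¹' A) = (iidSeq (ν.map Neg.neg)).real A :=
  (measurePreserving_leftIncr ν ρ y).measureReal_preimage hA.nullMeasurableSet

variable {ν ρ} in
lemma jointLaw_real_inter {A B : Set (Coord → ℝ)} (hA : MeasurableSet A) (hB : MeasurableSet B)
    {S T : Set Coord} (hAS : DependsOn (· ∈ A) S) (hBT : DependsOn (· ∈ B) T)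
    (hST : Disjoint S T) :
    (jointLaw ν ρ).real (A ∩ B) = (jointLaw ν ρ).real A * (jointLaw ν ρ).real B := by
  simp only [Measure.real, infinitePi_inter_of_dependsOn _ hA hB hAS hBT hST, ENNReal.toReal_mul]

lemma jointLaw_real_rightIncr_inter_leftIncr (y : ℤ) {A B : Set (ℕ → ℝ)} (hA : MeasurableSet A)
    (hB : MeasurableSet B) {m n : ℕ} (hAm : DependsOn (· ∈ A) (Iio m))
    (hBn : DependsOn (· ∈ B) (Iio n)) :
    (jointLaw ν ρ).real (rightIncr y ⁻¹' A ∩ leftIncr y ⁻¹' B) =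
      (iidSeq ν).real A * (iidSeq (ν.map Neg.neg)).real B := by
  rw [jointLaw_real_inter (measurable_rightIncr y hA) (measurable_leftIncr y hB)
    (dependsOn_rightIncr_preimage hAm y) (dependsOn_leftIncr_preimage hBn y),
    jointLaw_real_rightIncr_preimage ν ρ y hA, jointLaw_real_leftIncr_preimage ν ρ y hB]
  exact disjoint_image_of_injective Sum.inl_injective (Ioc_disjoint_Ioc_of_le le_rfl).symm

end TwoSidedSpace

section BluntMinima

/-- The event that the site `r + b` is a minimum of the potential over `[r, r + R]` on one side and
over a window of length `N` on the other, but a blunt one: on the first side the potential comes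
back within `2 * m ^ γ` of the minimum at some distance `m ≥ M`. -/
def bluntMin (γ : ℝ) (M N R : ℕ) (r : ℤ) (b : ℕ) : Set (Coord → ℝ) :=
  (rightIncr (r + b) ⁻¹' lowVisit γ M N (R - b) ∩ leftIncr (r + b) ⁻¹' stayNonneg N 0) ∪
    (rightIncr (r + b) ⁻¹' stayNonneg N 0 ∩ leftIncr (r + b) ⁻¹' lowVisit γ M N b)

lemma measurableSet_bluntMin (γ : ℝ) (M N R : ℕ) (r : ℤ) (b : ℕ) :
    MeasurableSet (bluntMin γ M N R r b) :=
  ((measurable_rightIncr _ (measurableSet_lowVisit _ _ _ _)).inter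
      (measurable_leftIncr _ (measurableSet_stayNonneg _ _))).union
    ((measurable_rightIncr _ (measurableSet_stayNonneg _ _)).inter
      (measurable_leftIncr _ (measurableSet_lowVisit _ _ _ _)))

lemma dependsOn_bluntMin (γ : ℝ) (M : ℕ) {N R : ℕ} (r : ℤ) {b : ℕ} (hb : N ≤ b) (hbR : b + N ≤ R) :
    DependsOn (· ∈ bluntMin γ M N R r b) (Sum.inl '' Ioc r (r + R)) := by
  have hright {A : Set (ℕ → ℝ)} {l : ℕ} (hl : b + l ≤ R) (hA : DependsOn (· ∈ A) (Iio l)) :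
      DependsOn (· ∈ rightIncr (r + b) ⁻¹' A) (Sum.inl '' Ioc r (r + R)) :=
    (dependsOn_rightIncr_preimage hA _).mono (image_mono (Ioc_subset_Ioc (by omega) (by omega)))
  have hleft {A : Set (ℕ → ℝ)} {l : ℕ} (hl : l ≤ b) (hA : DependsOn (· ∈ A) (Iio l)) :
      DependsOn (· ∈ leftIncr (r + b) ⁻¹' A) (Sum.inl '' Ioc r (r + R)) :=
    (dependsOn_leftIncr_preimage hA _).mono (image_mono (Ioc_subset_Ioc (by omega) (by omega)))
  exact dependsOn_mem_union
    (dependsOn_mem_inter (hright (by omega) (dependsOn_lowVisit _ _ _ _))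
      (hleft hb (dependsOn_stayNonneg le_rfl _)))
    (dependsOn_mem_inter (hright hbR (dependsOn_stayNonneg le_rfl _))
      (hleft le_rfl (dependsOn_lowVisit _ _ _ _)))

variable {ν : Measure ℝ} [IsProbabilityMeasure ν] (ρ : Measure ℝ) [IsProbabilityMeasure ρ] {c : ℝ}

lemma exists_jointLaw_real_bluntMin_le (h : StepLaw ν c) {γ : ℝ} (hγ₀ : 0 ≤ γ) (hγ : γ < 1 / 2)
    {ε : ℝ} (hε : 0 < ε) :
    ∃ M₀ : ℕ, ∀ M ≥ M₀, ∀ N > 0, ∀ R r b,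
      (jointLaw ν ρ).real (bluntMin γ M N R r b) ≤ ε / N := by
  obtain ⟨C₁, hC₁, hstay₁⟩ := exists_real_stayNonneg_le h
  obtain ⟨C₂, hC₂, hstay₂⟩ := exists_real_stayNonneg_le h.neg
  have hC : 0 < C₁ + C₂ := add_pos hC₁ hC₂
  obtain ⟨M₁, hM₁⟩ := exists_real_lowVisit_le h hγ₀ hγ (div_pos hε hC)
  obtain ⟨M₂, hM₂⟩ := exists_real_lowVisit_le h.neg hγ₀ hγ (div_pos hε hC)
  refine ⟨max M₁ M₂, fun M hM N hN R r b => ?_⟩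
  have hsqrt : √(N : ℝ) * √N = N := Real.mul_self_sqrt N.cast_nonneg
  have hr := mul_le_mul (hM₁ M (le_of_max_le_left hM) N hN (R - b)) (hstay₂ N hN 0 le_rfl)
    measureReal_nonneg (by positivity)
  have hl := mul_le_mul (hstay₁ N hN 0 le_rfl) (hM₂ M (le_of_max_le_right hM) N hN b)
    measureReal_nonneg (by positivity)
  refine (measureReal_union_le _ _).trans ?_
  rw [jointLaw_real_rightIncr_inter_leftIncr ν ρ _ (measurableSet_lowVisit _ _ _ _)
      (measurableSet_stayNonneg _ _) (dependsOn_lowVisit _ _ _ _) (dependsOn_stayNonneg le_rfl _),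
    jointLaw_real_rightIncr_inter_leftIncr ν ρ _ (measurableSet_stayNonneg _ _)
      (measurableSet_lowVisit _ _ _ _) (dependsOn_stayNonneg le_rfl _) (dependsOn_lowVisit _ _ _ _)]
  refine (add_le_add hr hl).trans_eq ?_
  rw [div_mul_div_comm, div_mul_div_comm, hsqrt]
  field_simp
  ring

end BluntMinima

section ValleyEvents

/-- Parameters of the valleys that are looked for at a scale `H`: across `Q` blocks of `H ^ 2`
sites, the potential decreases by `H` along each of the first `J` blocks, increases by `H` along
each of the others, and moves by at most `t * H` inside a block; at distances `m ≥ M` from its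
minimum it exceeds it by `2 * m ^ γ`. -/
structure ValleyShape where
  J : ℕ
  Q : ℕ
  M : ℕ
  t : ℝ
  γ : ℝ

/-- The number of sites of a valley at scale `H`. -/
abbrev ValleyShape.width (s : ValleyShape) (H : ℕ) : ℕ := s.Q * (H * H)

/-- The event that, along `Q` blocks of length `H ^ 2`, the walk goes down by `H` in the first `J`
blocks and up by `H` in the others. -/
def descentAscent (J Q : ℕ) (t : ℝ) (H : ℕ) : Set (ℕ → ℝ) :=
  {w | ∀ i < Q, shift (i * (H * H)) w ∈
    if i < J then (fun w => -w) ⁻¹' upBlock t H else upBlock t H}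

/-- The event that the walk attains its minimum over `[0, R]` for the first time at `b`. -/
def firstArgmin (R b : ℕ) : Set (ℕ → ℝ) :=
  {w | (∀ m < b, walk w b < walk w m) ∧ ∀ m ≤ R, walk w b ≤ walk w m}

/-- The event that no site of `[r + N, r + R - N]` is a blunt minimum. -/
def noBluntMin (γ : ℝ) (M N R : ℕ) (r : ℤ) : Set (Coord → ℝ) :=
  ⋂ b ∈ Finset.Icc N (R - N), (bluntMin γ M N R r b)ᶜ

/-- The event that the potential has a sharp valley of the prescribed shape to the right of `r`. -/
def rightValley (s : ValleyShape) (H : ℕ) (r : ℤ) : Set (Coord → ℝ) :=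
  rightIncr r ⁻¹' descentAscent s.J s.Q s.t H ∩ noBluntMin s.γ s.M (H * H) (s.width H) r

/-- The event that the scenery on `U` is at most a function `f` of the distance to `y`. -/
def sceneryLE (f : ℕ → ℝ) (U : Finset ℤ) (y : ℤ) : Set (Coord → ℝ) :=
  {x | ∀ u ∈ U, x (.inr u) ≤ f (u - y).natAbs}

/-- The bound imposed on the scenery at distance `j` from the bottom of a valley. -/
noncomputable def sceneryCap (γ : ℝ) (M j : ℕ) : ℝ := if j < M then 0 else Real.exp ((j : ℝ) ^ γ)

/-- The sites at distance between `r` and `r + R` from the origin. -/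
noncomputable def annulusSites (r R : ℕ) : Finset ℤ :=
  Finset.Ioc (r : ℤ) (r + R) ∪ Finset.Ico (-r - R : ℤ) (-r)

/-- The event that the potential has a sharp valley to the right of `r`, with a small scenery around
its bottom, while it increases to the left of `-r`. -/
def valleyEvent (s : ValleyShape) (H r : ℕ) : Set (Coord → ℝ) :=
  leftIncr (-r) ⁻¹' descentAscent 0 s.Q s.t H ∩
    ⋃ b ∈ Finset.range (s.width H + 1),
      (rightValley s H r ∩ rightIncr r ⁻¹' firstArgmin (s.width H) b) ∩
        sceneryLE (sceneryCap s.γ s.M) (annulusSites r (s.width H)) (r + b)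

lemma measurable_neg_seq : Measurable fun w : ℕ → ℝ => -w := by fun_prop

lemma measurableSet_block (J : ℕ) (t : ℝ) (H i : ℕ) :
    MeasurableSet (if i < J then (fun w => -w) ⁻¹' upBlock t H else upBlock t H) := by
  split_ifs
  exacts [measurable_neg_seq (measurableSet_upBlock t H), measurableSet_upBlock t H]

lemma dependsOn_block (J : ℕ) (t : ℝ) (H i : ℕ) :
    DependsOn (· ∈ if i < J then (fun w => -w) ⁻¹' upBlock t H else upBlock t H)
      (Iio (H * H)) := by
  split_ifs
  · exact dependsOn_mem_preimage (dependsOn_upBlock t H) fun k hk _ _ h => congrArg Neg.neg (h k hk)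
  · exact dependsOn_upBlock t H

lemma measurableSet_descentAscent (J Q : ℕ) (t : ℝ) (H : ℕ) :
    MeasurableSet (descentAscent J Q t H) := by
  simp only [descentAscent, ofPred_forall]
  exact .iInter fun i => .iInter fun _ => measurable_shift _ (measurableSet_block J t H i)

lemma dependsOn_descentAscent (J Q : ℕ) (t : ℝ) (H : ℕ) :
    DependsOn (· ∈ descentAscent J Q t H) (Iio (Q * (H * H))) := by
  simp only [descentAscent, ofPred_forall]
  refine dependsOn_mem_iInter fun i => dependsOn_mem_iInter fun hi =>
    (dependsOn_mem_shift_preimage (dependsOn_block J t H i) _).mono fun j hj => hj.2.trans_le ?_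
  exact (Nat.succ_mul i _).symm.trans_le (Nat.mul_le_mul_right _ hi)

lemma measurableSet_firstArgmin (R b : ℕ) : MeasurableSet (firstArgmin R b) := by
  simp only [firstArgmin, ofPred_and, ofPred_forall]
  exact (MeasurableSet.iInter fun _ => .iInter fun _ =>
    measurableSet_lt (by fun_prop) (by fun_prop)).inter
    (.iInter fun _ => .iInter fun _ => measurableSet_le (by fun_prop) (by fun_prop))

lemma dependsOn_firstArgmin {R b : ℕ} (hb : b ≤ R) :
    DependsOn (· ∈ firstArgmin R b) (Iio R) :=
  fun _ _ hw => propext <| and_congr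
    (forall₂_congr fun _ hm => by rw [walk_congr (hm.le.trans hb) hw, walk_congr hb hw])
    (forall₂_congr fun _ hm => by rw [walk_congr hm hw, walk_congr hb hw])

lemma exists_mem_firstArgmin (R : ℕ) (w : ℕ → ℝ) : ∃ b ≤ R, w ∈ firstArgmin R b := by
  classical
  have hex : ∃ b, b ≤ R ∧ ∀ m ≤ R, walk w b ≤ walk w m := by
    simpa only [Finset.mem_range, Nat.lt_succ_iff] using
      Finset.exists_min_image (Finset.range (R + 1)) (walk w) ⟨0, by simp⟩
  obtain ⟨hle, hmin⟩ := Nat.find_spec hex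
  refine ⟨Nat.find hex, hle, fun m hm => ?_, hmin⟩
  by_contra! hcon
  exact Nat.find_min hex hm ⟨hm.le.trans hle, fun k hk => hcon.trans (hmin k hk)⟩

lemma pairwiseDisjoint_firstArgmin (R : ℕ) :
    (Iic R).PairwiseDisjoint (firstArgmin R) := by
  have hlt {b b' : ℕ} (hbb : b < b') (hb' : b' ≤ R) :
      Disjoint (firstArgmin R b) (firstArgmin R b') :=
    disjoint_left.2 fun _ hw hw' => (hw'.1 b hbb).not_ge (hw.2 b' hb')
  intro b hb b' hb' hne
  exact hne.lt_or_gt.elim (hlt · hb') fun h => (hlt h hb).symm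

lemma measurableSet_rightValley (s : ValleyShape) (H : ℕ) (r : ℤ) :
    MeasurableSet (rightValley s H r) :=
  (measurable_rightIncr r (measurableSet_descentAscent _ _ _ _)).inter
    (Finset.measurableSet_biInter _ fun _ _ => (measurableSet_bluntMin _ _ _ _ _ _).compl)

lemma dependsOn_rightValley (s : ValleyShape) (H : ℕ) (r : ℤ) :
    DependsOn (· ∈ rightValley s H r) (Sum.inl '' Ioc r (r + s.width H)) :=
  dependsOn_mem_inter (dependsOn_rightIncr_preimage (dependsOn_descentAscent _ _ _ _) r)
    (dependsOn_mem_iInter fun b => dependsOn_mem_iInter fun hb => dependsOn_mem_compl <| by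
      rw [Finset.mem_Icc] at hb
      exact dependsOn_bluntMin _ _ _ hb.1 (by omega))

lemma measurableSet_sceneryLE (f : ℕ → ℝ) (U : Finset ℤ) (y : ℤ) :
    MeasurableSet (sceneryLE f U y) := by
  simp only [sceneryLE, ofPred_forall]
  exact .iInter fun _ => .iInter fun _ => measurableSet_le (by fun_prop) (by fun_prop)

lemma dependsOn_sceneryLE (f : ℕ → ℝ) (U : Finset ℤ) (y : ℤ) :
    DependsOn (· ∈ sceneryLE f U y) (Sum.inr '' (U : Set ℤ)) :=
  fun _ _ hx => propext <| forall₂_congr fun u hu => by rw [hx _ (mem_image_of_mem _ hu)]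

lemma measurableSet_valleyEvent (s : ValleyShape) (H r : ℕ) :
    MeasurableSet (valleyEvent s H r) :=
  (measurable_leftIncr _ (measurableSet_descentAscent _ _ _ _)).inter <|
    Finset.measurableSet_biUnion _ fun _ _ =>
      ((measurableSet_rightValley _ _ _).inter
        (measurable_rightIncr _ (measurableSet_firstArgmin _ _))).inter
      (measurableSet_sceneryLE _ _ _)

/-- The distance of a coordinate to the origin; the increment at `y` sits on the edge between
`y - 1` and `y`. -/
def radius : Coord → ℤ := Sum.elim (fun y => max y (1 - y)) abs

lemma dependsOn_valleyEvent (s : ValleyShape) (H r : ℕ) :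
    DependsOn (· ∈ valleyEvent s H r) (radius ⁻¹' Ioc (r : ℤ) ((r + s.width H : ℕ) : ℤ)) := by
  have hright : Sum.inl '' Ioc (r : ℤ) (r + s.width H) ⊆
      radius ⁻¹' Ioc (r : ℤ) ((r + s.width H : ℕ) : ℤ) := by
    rintro _ ⟨y, hy, rfl⟩
    simp only [mem_preimage, radius, Sum.elim_inl, mem_Ioc] at hy ⊢
    omega
  have hleft : Sum.inl '' Ioc (-r - s.width H : ℤ) (-r) ⊆
      radius ⁻¹' Ioc (r : ℤ) ((r + s.width H : ℕ) : ℤ) := by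
    rintro _ ⟨y, hy, rfl⟩
    simp only [mem_preimage, radius, Sum.elim_inl, mem_Ioc] at hy ⊢
    omega
  have hscenery : Sum.inr '' (annulusSites r (s.width H) : Set ℤ) ⊆
      radius ⁻¹' Ioc (r : ℤ) ((r + s.width H : ℕ) : ℤ) := by
    rintro _ ⟨u, hu, rfl⟩
    simp only [annulusSites, Finset.mem_coe, Finset.mem_union, Finset.mem_Ioc,
      Finset.mem_Ico] at hu
    simp only [mem_preimage, radius, Sum.elim_inr, mem_Ioc, abs_le, lt_abs]
    omega
  refine dependsOn_mem_inter
    ((dependsOn_leftIncr_preimage (dependsOn_descentAscent _ _ _ _) _).mono hleft)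
    (dependsOn_mem_iUnion fun b => dependsOn_mem_iUnion fun hb => dependsOn_mem_inter
      (dependsOn_mem_inter ((dependsOn_rightValley _ _ _).mono hright)
        ((dependsOn_rightIncr_preimage (dependsOn_firstArgmin ?_) _).mono hright))
      ((dependsOn_sceneryLE _ _ _).mono hscenery))
  exact Nat.lt_succ_iff.1 (Finset.mem_range.1 hb)

end ValleyEvents

section ValleyProbability

variable {ν ρ : Measure ℝ} [IsProbabilityMeasure ν] [IsProbabilityMeasure ρ] {c γ : ℝ}

lemma summable_natAbs {f : ℕ → ℝ} (hf : Summable f) : Summable fun u : ℤ => f u.natAbs :=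
  summable_int_iff_summable_nat_and_neg.2 ⟨by simpa using hf, by simpa using hf⟩

lemma jointLaw_real_sceneryLE (f : ℕ → ℝ) (U : Finset ℤ) (y : ℤ) :
    (jointLaw ν ρ).real (sceneryLE f U y) = ∏ u ∈ U, ρ.real (Iic (f (u - y).natAbs)) := by
  have hset : sceneryLE f U y =
      Set.pi (U.map ⟨Sum.inr, Sum.inr_injective⟩ : Finset Coord)
        (Sum.elim (fun _ => univ) fun u => Iic (f (u - y).natAbs)) := by
    ext x
    simp only [sceneryLE, mem_ofPred_eq, Set.mem_pi, Finset.mem_coe, Finset.mem_map,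
      Function.Embedding.coeFn_mk, forall_exists_index, and_imp, forall_apply_eq_imp_iff₂,
      Sum.elim_inr, mem_Iic]
  rw [hset, Measure.real, Measure.infinitePi_pi, ENNReal.toReal_prod, Finset.prod_map]
  · rfl
  · rintro (y | u) -
    exacts [MeasurableSet.univ, measurableSet_Iic]

lemma exists_le_real_sceneryLE {f : ℕ → ℝ} (hpos : ∀ j, 0 < ρ.real (Iic (f j)))
    (hsum : Summable fun j => ρ.real (Ioi (f j))) :
    ∃ p > 0, ∀ U y, p ≤ (jointLaw ν ρ).real (sceneryLE f U y) := by
  have hlog : Summable fun j => Real.log (ρ.real (Iic (f j))) := by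
    refine (Real.summable_log_one_add_of_summable hsum.neg).congr fun j => ?_
    rw [← compl_Ioi, probReal_compl_eq_one_sub measurableSet_Ioi, sub_eq_add_neg]
  set φ : ℤ → ℝ := fun u => Real.log (ρ.real (Iic (f u.natAbs)))
  have hφ : Summable φ := summable_natAbs hlog
  refine ⟨Real.exp (∑' u, φ u), Real.exp_pos _, fun U y => ?_⟩
  have hle : ∑' u, φ u ≤ ∑ u ∈ U, φ (u - y) := by
    have hsum_le := (hφ.comp_injective (Equiv.subRight y).injective).neg.sum_le_tsum U fun u _ =>
      neg_nonneg.2 (Real.log_nonpos measureReal_nonneg measureReal_le_one)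
    rw [Finset.sum_neg_distrib, tsum_neg, neg_le_neg_iff] at hsum_le
    exact ((Equiv.subRight y).tsum_eq φ).symm.trans_le hsum_le
  rw [jointLaw_real_sceneryLE]
  refine (Real.exp_le_exp.2 hle).trans_eq ?_
  rw [Real.exp_sum]
  exact Finset.prod_congr rfl fun u _ => Real.exp_log (hpos _)

lemma sceneryCap_nonneg (γ : ℝ) (M j : ℕ) : 0 ≤ sceneryCap γ M j := by
  unfold sceneryCap; split_ifs <;> positivity

lemma exists_le_real_sceneryLE_sceneryCap (hzero : 0 < ρ.real (Iic 0))
    (hsum : Summable fun j : ℕ => ρ.real (Ioi (Real.exp ((j : ℝ) ^ γ)))) (M : ℕ) :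
    ∃ p > 0, ∀ U y, p ≤ (jointLaw ν ρ).real (sceneryLE (sceneryCap γ M) U y) := by
  refine exists_le_real_sceneryLE (fun j => hzero.trans_le (measureReal_mono
    (Iic_subset_Iic.2 (sceneryCap_nonneg γ M j)))) ?_
  refine hsum.congr_cofinite ?_
  rw [Nat.cofinite_eq_atTop]
  filter_upwards [eventually_ge_atTop M] with j hj
  rw [sceneryCap, if_neg hj.not_gt]

lemma exists_le_real_descentAscent (h : StepLaw ν c) :
    ∃ T > 0, ∃ p > 0, ∀ t ≥ T, ∀ᶠ H : ℕ in atTop, ∀ J Q,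
      p ^ Q ≤ (iidSeq ν).real (descentAscent J Q t H) := by
  obtain ⟨T₁, hT₁, p₁, hp₁, hup⟩ := exists_le_real_upBlock h
  obtain ⟨T₂, -, p₂, hp₂, hdown⟩ := exists_le_real_upBlock h.neg
  have hp : 0 < min p₁ p₂ := lt_min hp₁ hp₂
  refine ⟨max T₁ T₂, lt_max_of_lt_left hT₁, min p₁ p₂, hp, fun t ht => ?_⟩
  filter_upwards [hup t (le_of_max_le_left ht), hdown t (le_of_max_le_right ht)]
    with H hup hdown J Q
  refine pow_le_iidSeq_real_blocks ν (measurableSet_block J t H) (dependsOn_block J t H) hp.le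
    (fun i => ?_) Q
  split_ifs with hi
  · rw [(measurePreserving_neg ν).measureReal_preimage
      (measurableSet_upBlock t H).nullMeasurableSet]
    exact (min_le_right _ _).trans hdown
  · exact (min_le_left _ _).trans hup

lemma exists_le_real_rightValley (h : StepLaw ν c) (hγ₀ : 0 ≤ γ) (hγ : γ < 1 / 2) :
    ∃ T > 0, ∀ t ≥ T, ∀ J Q, ∃ M₀ : ℕ, ∀ M ≥ M₀, ∃ p > 0, ∀ᶠ H : ℕ in atTop, ∀ r : ℤ,
      p ≤ (jointLaw ν ρ).real (rightValley ⟨J, Q, M, t, γ⟩ H r) := by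
  obtain ⟨T, hT, p, hp, hshape⟩ := exists_le_real_descentAscent h
  refine ⟨T, hT, fun t ht J Q => ?_⟩
  obtain ⟨M₀, hblunt⟩ := exists_jointLaw_real_bluntMin_le ρ h hγ₀ hγ
    (show 0 < p ^ Q / (2 * (Q + 1)) by positivity)
  refine ⟨M₀, fun M hM => ⟨p ^ Q / 2, by positivity, ?_⟩⟩
  filter_upwards [hshape t ht, eventually_gt_atTop 0] with H hshape hH r
  set N := H * H
  set E := rightIncr r ⁻¹' descentAscent J Q t H
  set B := ⋃ b ∈ Finset.Icc N (Q * N - N), bluntMin γ M N (Q * N) r b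
  have hN : 0 < N := Nat.mul_pos hH hH
  have hB : (jointLaw ν ρ).real B ≤ p ^ Q / 2 := by
    calc (jointLaw ν ρ).real B
        ≤ ∑ b ∈ Finset.Icc N (Q * N - N), (jointLaw ν ρ).real (bluntMin γ M N (Q * N) r b) :=
          measureReal_biUnion_finset_le _ _
      _ ≤ (Finset.Icc N (Q * N - N)).card • (p ^ Q / (2 * (Q + 1)) / N) :=
          Finset.sum_le_card_nsmul _ _ _ fun b _ => hblunt M hM N hN _ r b
      _ ≤ (Q * N : ℕ) • (p ^ Q / (2 * (Q + 1)) / N) := by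
          gcongr
          rw [Nat.card_Icc]
          omega
      _ = Q / (Q + 1) * (p ^ Q / 2) := by
          rw [nsmul_eq_mul]; push_cast; field_simp
      _ ≤ p ^ Q / 2 := mul_le_of_le_one_left (by positivity)
          ((div_le_one₀ (by positivity)).2 (le_add_of_nonneg_right zero_le_one))
  have hE : p ^ Q ≤ (jointLaw ν ρ).real E :=
    (hshape J Q).trans_eq
      (jointLaw_real_rightIncr_preimage ν ρ r (measurableSet_descentAscent _ _ _ _)).symm
  have hcover : E ⊆ rightValley ⟨J, Q, M, t, γ⟩ H r ∪ B := by
    intro x hx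
    by_cases hxB : x ∈ B
    · exact .inr hxB
    · exact .inl ⟨hx, by simpa only [B, mem_iUnion, not_exists, noBluntMin, mem_iInter] using! hxB⟩
  linarith [hE.trans ((measureReal_mono hcover).trans (measureReal_union_le _ _))]

lemma mul_le_real_iUnion_firstArgmin {G : Set (Coord → ℝ)} (hG : MeasurableSet G) {R : ℕ} {r : ℤ}
    (hGr : DependsOn (· ∈ G) (Sum.inl '' Ioc r (r + R))) {f : ℕ → ℝ} {U : Finset ℤ} {p : ℝ}
    (hp : ∀ y, p ≤ (jointLaw ν ρ).real (sceneryLE f U y)) :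
    (jointLaw ν ρ).real G * p ≤ (jointLaw ν ρ).real (⋃ b ∈ Finset.range (R + 1),
      (G ∩ rightIncr r ⁻¹' firstArgmin R b) ∩ sceneryLE f U (r + b)) := by
  set A : ℕ → Set (Coord → ℝ) := fun b => G ∩ rightIncr r ⁻¹' firstArgmin R b
  have hA (b) : MeasurableSet (A b) :=
    hG.inter (measurable_rightIncr r (measurableSet_firstArgmin R b))
  have hdisj : (Finset.range (R + 1) : Set ℕ).PairwiseDisjoint A := fun b hb b' hb' hne => by
    rw [Finset.mem_coe, Finset.mem_range, Nat.lt_succ_iff] at hb hb'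
    exact ((pairwiseDisjoint_firstArgmin R hb hb' hne).preimage _).mono inter_subset_right
      inter_subset_right
  have hunion : G = ⋃ b ∈ Finset.range (R + 1), A b := by
    refine Subset.antisymm (fun x hx => ?_) (iUnion₂_subset fun b _ => inter_subset_left)
    obtain ⟨b, hb, hxb⟩ := exists_mem_firstArgmin R (rightIncr r x)
    exact mem_biUnion (Finset.mem_coe.2 (Finset.mem_range_succ_iff.2 hb)) ⟨hx, hxb⟩
  have hindep (b) (hb : b ∈ Finset.range (R + 1)) :
      (jointLaw ν ρ).real (A b) * p ≤ (jointLaw ν ρ).real (A b ∩ sceneryLE f U (r + b)) := by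
    have hAb : DependsOn (· ∈ A b) (Sum.inl '' Ioc r (r + R)) :=
      dependsOn_mem_inter hGr (dependsOn_rightIncr_preimage
        (dependsOn_firstArgmin (Finset.mem_range_succ_iff.1 hb)) r)
    rw [jointLaw_real_inter (hA b) (measurableSet_sceneryLE _ _ _) hAb
      (dependsOn_sceneryLE _ _ _) disjoint_image_inl_image_inr]
    exact mul_le_mul_of_nonneg_left (hp _) measureReal_nonneg
  calc (jointLaw ν ρ).real G * p
      = (∑ b ∈ Finset.range (R + 1), (jointLaw ν ρ).real (A b)) * p := by
        rw [← measureReal_biUnion_finset hdisj fun b _ => hA b, ← hunion]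
    _ ≤ ∑ b ∈ Finset.range (R + 1), (jointLaw ν ρ).real (A b ∩ sceneryLE f U (r + b)) := by
        rw [Finset.sum_mul]; exact Finset.sum_le_sum hindep
    _ = (jointLaw ν ρ).real (⋃ b ∈ Finset.range (R + 1), A b ∩ sceneryLE f U (r + b)) :=
        (measureReal_biUnion_finset (hdisj.mono fun b => inter_subset_left)
          fun b _ => (hA b).inter (measurableSet_sceneryLE _ _ _)).symm

end ValleyProbability

section InfinitelyManyValleys

variable {ν ρ : Measure ℝ} [IsProbabilityMeasure ν] [IsProbabilityMeasure ρ] {c γ : ℝ}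

lemma exists_le_real_valleyEvent (h : StepLaw ν c) (hγ₀ : 0 ≤ γ) (hγ : γ < 1 / 2)
    (hzero : 0 < ρ.real (Iic 0))
    (hsum : Summable fun j : ℕ => ρ.real (Ioi (Real.exp ((j : ℝ) ^ γ)))) :
    ∃ t > 0, ∀ J Q, ∃ M₀ : ℕ, ∀ M ≥ M₀, ∃ p > 0, ∀ᶠ H : ℕ in atTop, ∀ r : ℕ,
      p ≤ (jointLaw ν ρ).real (valleyEvent ⟨J, Q, M, t, γ⟩ H r) := by
  obtain ⟨T₁, hT₁, hvalley⟩ := exists_le_real_rightValley (ρ := ρ) h hγ₀ hγ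
  obtain ⟨T₂, -, p₂, hp₂, hascent⟩ := exists_le_real_descentAscent h.neg
  refine ⟨max T₁ T₂, lt_max_of_lt_left hT₁, fun J Q => ?_⟩
  obtain ⟨M₀, hM₀⟩ := hvalley _ (le_max_left T₁ T₂) J Q
  refine ⟨M₀, fun M hM => ?_⟩
  obtain ⟨p₁, hp₁, hvalley⟩ := hM₀ M hM
  obtain ⟨p₃, hp₃, hscenery⟩ := exists_le_real_sceneryLE_sceneryCap (ν := ν) hzero hsum M
  refine ⟨p₂ ^ Q * (p₁ * p₃), by positivity, ?_⟩
  filter_upwards [hvalley, hascent _ (le_max_right T₁ T₂)] with H hvalley hascent r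
  set s : ValleyShape := ⟨J, Q, M, max T₁ T₂, γ⟩
  have hright : DependsOn (· ∈ ⋃ b ∈ Finset.range (s.width H + 1),
      (rightValley s H r ∩ rightIncr r ⁻¹' firstArgmin (s.width H) b) ∩
        sceneryLE (sceneryCap s.γ s.M) (annulusSites r (s.width H)) (r + b))
      (Sum.inl '' Ioc (r : ℤ) (r + s.width H) ∪ range Sum.inr) :=
    dependsOn_mem_iUnion fun b => dependsOn_mem_iUnion fun hb => dependsOn_mem_inter
      ((dependsOn_mem_inter (dependsOn_rightValley s H r) (dependsOn_rightIncr_preimage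
        (dependsOn_firstArgmin (Finset.mem_range_succ_iff.1 hb)) r)).mono subset_union_left)
      ((dependsOn_sceneryLE _ _ _).mono
        ((image_subset_range _ _).trans subset_union_right))
  have hdisj : Disjoint (Sum.inl '' Ioc (-r - (Q * (H * H) : ℕ) : ℤ) (-r))
      (Sum.inl '' Ioc (r : ℤ) (r + s.width H) ∪ range Sum.inr : Set Coord) := by
    refine disjoint_union_right.2 ⟨disjoint_image_of_injective Sum.inl_injective
      (Ioc_disjoint_Ioc_of_le (by omega)), disjoint_image_inl_range_inr⟩
  rw [valleyEvent, jointLaw_real_inter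
    (measurable_leftIncr _ (measurableSet_descentAscent _ _ _ _))
    (Finset.measurableSet_biUnion _ fun b _ => ((measurableSet_rightValley _ _ _).inter
      (measurable_rightIncr _ (measurableSet_firstArgmin _ _))).inter
        (measurableSet_sceneryLE _ _ _))
    (dependsOn_leftIncr_preimage (dependsOn_descentAscent _ _ _ _) _) hright hdisj,
    jointLaw_real_leftIncr_preimage ν ρ _ (measurableSet_descentAscent _ _ _ _)]
  refine mul_le_mul (hascent 0 Q) ?_ (by positivity) measureReal_nonneg
  exact (mul_le_mul_of_nonneg_right (hvalley r) hp₃.le).trans (mul_le_real_iUnion_firstArgmin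
    (measurableSet_rightValley s H r) (dependsOn_rightValley s H r) fun y => hscenery _ y)

/-- The inner radius of the `k`-th of a sequence of disjoint annuli; the `k`-th valley has scale
`(annulusRadius Q k₀ k + k + k₀ + 1) ^ 2`, much larger than its distance to the origin. -/
def annulusRadius (Q k₀ : ℕ) : ℕ → ℕ
  | 0 => 0
  | k + 1 => annulusRadius Q k₀ k + Q * ((annulusRadius Q k₀ k + k + k₀ + 1) ^ 2 *
      (annulusRadius Q k₀ k + k + k₀ + 1) ^ 2)

lemma ae_frequently_mem_valleyEvent (s : ValleyShape) {p : ℝ} (hp : 0 < p)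
    (hlow : ∀ᶠ H : ℕ in atTop, ∀ r : ℕ, p ≤ (jointLaw ν ρ).real (valleyEvent s H r)) :
    ∀ᵐ x ∂jointLaw ν ρ, ∃ᶠ q : ℕ in atTop, ∃ r ≤ q, x ∈ valleyEvent s (q ^ 2) r := by
  obtain ⟨k₀, hk₀⟩ := eventually_atTop.1 hlow
  set rad := annulusRadius s.Q k₀
  set q : ℕ → ℕ := fun k => rad k + k + k₀ + 1
  set E : ℕ → Set (Coord → ℝ) := fun k => valleyEvent s (q k ^ 2) (rad k)
  have hmeas (k) : MeasurableSet (E k) := measurableSet_valleyEvent _ _ _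
  have hmono : Monotone fun k => (rad k : ℤ) :=
    monotone_nat_of_le_succ fun k => Nat.cast_le.2 (Nat.le_add_right _ _)
  have hindep : iIndepSet E (jointLaw ν ρ) :=
    iIndepSet_infinitePi_of_dependsOn _ hmeas (fun k => dependsOn_valleyEvent _ _ _)
      fun j k hjk => (hmono.pairwise_disjoint_on_Ioc_succ hjk).preimage radius
  have hdiv : ∑' k, jointLaw ν ρ (E k) = ⊤ := by
    have hscale (k) : k₀ ≤ q k ^ 2 :=
      (show k₀ ≤ rad k + k + k₀ + 1 by omega).trans (Nat.le_self_pow two_ne_zero _)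
    rw [← top_le_iff, ← ENNReal.tsum_const_eq_top_of_ne_zero (α := ℕ)
      (ENNReal.ofReal_pos.2 hp).ne']
    exact ENNReal.tsum_le_tsum fun k => ENNReal.ofReal_le_of_le_toReal (hk₀ _ (hscale k) _)
  have hlim := measure_limsup_eq_one hmeas hindep hdiv
  rw [← mem_ae_iff_prob_eq_one (.measurableSet_limsup hmeas)] at hlim
  filter_upwards [hlim] with x hx
  rw [mem_limsup_iff_frequently_mem] at hx
  have hq : Tendsto q atTop atTop :=
    tendsto_atTop_mono (fun k => show k ≤ rad k + k + k₀ + 1 by omega) tendsto_id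
  exact hq.frequently (hx.mono fun k hk => ⟨rad k, show rad k ≤ rad k + k + k₀ + 1 by omega, hk⟩)

end InfinitelyManyValleys

section DescentAscent

namespace descentAscent

variable {J Q H : ℕ} {t : ℝ} {w : ℕ → ℝ}

lemma abs_walk_sub_le (hw : w ∈ descentAscent J Q t H) {i m : ℕ} (hi : i < Q) (hm : m ≤ H * H) :
    |walk w (i * (H * H) + m) - walk w (i * (H * H))| ≤ t * H := by
  have hblock := hw i hi
  rw [← walk_shift]
  split_ifs at hblock
  · simpa only [walk_neg, abs_neg] using hblock.2 m hm
  · exact hblock.2 m hm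

lemma abs_walk_sub_walk_div_le (hw : w ∈ descentAscent J Q t H) {m : ℕ} (hm : m < Q * (H * H)) :
    |walk w m - walk w (m / (H * H) * (H * H))| ≤ t * H := by
  have hpos : 0 < H * H := Nat.pos_of_mul_pos_left (Nat.zero_lt_of_lt hm)
  have h := abs_walk_sub_le hw ((Nat.div_lt_iff_lt_mul hpos).2 hm) (Nat.mod_lt m hpos).le
  rwa [Nat.div_add_mod'] at h

lemma walk_le_neg (hw : w ∈ descentAscent J Q t H) {i : ℕ} (hJ : i ≤ J) (hQ : i ≤ Q) :
    walk w (i * (H * H)) ≤ -(i * H) := by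
  induction i with
  | zero => simp
  | succ i ih =>
    have hblock := hw i hQ
    rw [if_pos (Nat.lt_of_succ_le hJ)] at hblock
    have hstep := hblock.1
    rw [walk_neg, walk_shift] at hstep
    have := ih (by omega) (by omega)
    rw [Nat.succ_mul]
    push_cast
    linarith

lemma neg_le_walk (hw : w ∈ descentAscent J Q t H) {i : ℕ} (hQ : i ≤ Q) :
    -(i * (t * H)) ≤ walk w (i * (H * H)) := by
  induction i with
  | zero => simp
  | succ i ih =>
    have hstep := (abs_le.1 (abs_walk_sub_le hw hQ le_rfl)).1
    have := ih (by omega)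
    rw [Nat.succ_mul]
    push_cast
    linarith

lemma walk_add_le (hw : w ∈ descentAscent J Q t H) {i k : ℕ} (hJ : J ≤ i) (hQ : i + k ≤ Q) :
    walk w (i * (H * H)) + k * H ≤ walk w ((i + k) * (H * H)) := by
  induction k with
  | zero => simp
  | succ k ih =>
    have hblock := hw (i + k) hQ
    rw [if_neg (by omega)] at hblock
    have hstep := hblock.1
    rw [walk_shift] at hstep
    have := ih (by omega)
    rw [← add_assoc, Nat.succ_mul]
    push_cast
    linarith

lemma neg_le_walk_of_le (hw : w ∈ descentAscent J Q t H) (hQ : 0 < Q) {m : ℕ} (hm : m ≤ H * H) :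
    -(t * H) ≤ walk w m := by
  simpa using (abs_le.1 (abs_walk_sub_le hw hQ hm)).1

lemma neg_le_walk_of_ascent (hw : w ∈ descentAscent 0 Q t H) (ht : 0 ≤ t) {m : ℕ}
    (hm : m ≤ Q * (H * H)) : -(t * H) ≤ walk w m := by
  have hbase {i : ℕ} (hi : i ≤ Q) : (i * H : ℝ) ≤ walk w (i * (H * H)) := by
    simpa using walk_add_le hw le_rfl ((zero_add i).trans_le hi)
  have hH : 0 ≤ t * H := by positivity
  rcases hm.eq_or_lt with rfl | hm
  · have : (0 : ℝ) ≤ Q * H := by positivity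
    linarith [hbase le_rfl]
  · have h := (abs_le.1 (abs_walk_sub_walk_div_le hw hm)).1
    have := hbase (Nat.div_le_of_le_mul (mul_comm Q _ ▸ hm.le))
    have : (0 : ℝ) ≤ (m / (H * H) : ℕ) * H := by positivity
    linarith

end descentAscent

/-- The slopes of the valley are long enough for its depth to exceed, by a fixed multiple of the
fluctuation `t * H` inside a block, the height of the barriers before its bottom. -/
structure ValleyShape.IsDeep (s : ValleyShape) : Prop where
  t_pos : 0 < s.t
  descent : 6 * s.t ≤ s.J
  ascent : s.J + 1 + (s.J + 7) * s.t ≤ s.Q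

namespace ValleyShape.IsDeep

variable {s : ValleyShape} {H b m : ℕ} {w : ℕ → ℝ}

lemma lt (h : s.IsDeep) : s.J + 1 < s.Q := by
  have := h.t_pos
  have : (0 : ℝ) < (s.J + 7) * s.t := by positivity
  exact_mod_cast (lt_add_of_pos_right _ this).trans_le h.ascent

lemma walk_le_of_mem_firstArgmin (h : s.IsDeep) (hw : w ∈ descentAscent s.J s.Q s.t H)
    (hb : w ∈ firstArgmin (s.width H) b) : walk w b ≤ -(6 * (s.t * H)) := by
  have hJ := h.lt
  have hmin := hb.2 (s.J * (H * H)) (Nat.mul_le_mul_right _ (by omega))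
  have hdesc := descentAscent.walk_le_neg hw le_rfl (by omega)
  have := mul_le_mul_of_nonneg_right h.descent (Nat.cast_nonneg (α := ℝ) H)
  linarith

lemma le_walk_of_le_add (h : s.IsDeep) (hw : w ∈ descentAscent s.J s.Q s.t H)
    (hm : m ≤ s.width H) (hm' : s.width H ≤ m + H * H) : 6 * (s.t * H) ≤ walk w m := by
  obtain ⟨k, hk⟩ : ∃ k, s.Q = s.J + k + 1 := ⟨s.Q - s.J - 1, by have := h.lt; omega⟩
  have hasc := h.ascent
  rw [hk] at hasc
  rw [ValleyShape.width, hk, Nat.succ_mul] at hm hm'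
  have hblock := (abs_le.1 (descentAscent.abs_walk_sub_le hw (i := s.J + k)
    (m := m - (s.J + k) * (H * H)) (by omega) (by omega))).1
  rw [Nat.add_sub_cancel' (by omega)] at hblock
  have hup := descentAscent.walk_add_le hw le_rfl (k := k) (by omega)
  have hlow := descentAscent.neg_le_walk hw (i := s.J) (by omega)
  push_cast at hasc
  have : (s.J + 7) * s.t * H ≤ k * H := by
    gcongr
    linarith
  linarith

lemma lt_argmin (h : s.IsDeep) (hH : 0 < H) (hw : w ∈ descentAscent s.J s.Q s.t H)
    (hb : w ∈ firstArgmin (s.width H) b) : H * H < b := by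
  have := h.walk_le_of_mem_firstArgmin hw hb
  have : 0 < s.t * H := mul_pos h.t_pos (Nat.cast_pos.2 hH)
  by_contra! hle
  have := descentAscent.neg_le_walk_of_le hw (by have := h.lt; omega) hle
  linarith

lemma argmin_add_lt (h : s.IsDeep) (hH : 0 < H) (hw : w ∈ descentAscent s.J s.Q s.t H)
    (hb : w ∈ firstArgmin (s.width H) b) (hle : b ≤ s.width H) : b + H * H < s.width H := by
  have := h.walk_le_of_mem_firstArgmin hw hb
  have : 0 < s.t * H := mul_pos h.t_pos (Nat.cast_pos.2 hH)
  by_contra! hcon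
  have := h.le_walk_of_le_add hw hle hcon
  linarith

lemma walk_le_of_le_argmin (h : s.IsDeep) (hw : w ∈ descentAscent s.J s.Q s.t H)
    (hb : w ∈ firstArgmin (s.width H) b) (hlt : b < s.width H) (hm : m ≤ b) :
    walk w m ≤ 2 * (s.t * H) := by
  have hH : 0 ≤ s.t * H := mul_nonneg h.t_pos.le (Nat.cast_nonneg H)
  have hpos : 0 < H * H := Nat.pos_of_mul_pos_left (Nat.zero_lt_of_lt hlt)
  have hblock := (abs_le.1 (descentAscent.abs_walk_sub_walk_div_le hw (hm.trans_lt hlt))).2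
  have hQ : b / (H * H) < s.Q := (Nat.div_lt_iff_lt_mul hpos).2 hlt
  obtain ⟨k, hk⟩ := Nat.exists_eq_add_of_le (Nat.div_le_div_right (c := H * H) hm)
  rcases le_total (m / (H * H)) s.J with hJ | hJ
  · have hdesc := descentAscent.walk_le_neg hw hJ (by omega)
    have : (0 : ℝ) ≤ (m / (H * H) : ℕ) * H := by positivity
    linarith
  · have hup := descentAscent.walk_add_le hw hJ (k := k) (by omega)
    have hblock' := (abs_le.1 (descentAscent.abs_walk_sub_walk_div_le hw hlt)).1
    rw [hk] at hblock'
    have hmin := hb.2 0 (Nat.zero_le _)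
    rw [walk_zero] at hmin
    have : (0 : ℝ) ≤ k * H := by positivity
    linarith

end ValleyShape.IsDeep

end DescentAscent

section Potential

/-- The potential with increments `z`, normalised to vanish at `0`. -/
noncomputable def potential (z : ℤ → ℝ) (y : ℤ) : ℝ :=
  ∑ i ∈ Finset.Ioc 0 y, z i - ∑ i ∈ Finset.Ioc y 0, z i

lemma potential_zero (z : ℤ → ℝ) : potential z 0 = 0 := by simp [potential]

lemma potential_sub_pred (z : ℤ → ℝ) (y : ℤ) : potential z y - potential z (y - 1) = z y := by
  unfold potential
  rcases le_or_gt y 0 with h | h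
  · have hIoc : Finset.Ioc (y - 1) 0 = insert y (Finset.Ioc y 0) := by
      ext; simp only [Finset.mem_Ioc, Finset.mem_insert]; omega
    rw [hIoc, Finset.sum_insert (by simp), Finset.Ioc_eq_empty_of_le h,
      Finset.Ioc_eq_empty_of_le (by omega : y - 1 ≤ 0)]
    ring
  · have hIoc : Finset.Ioc 0 y = insert y (Finset.Ioc 0 (y - 1)) := by
      ext; simp only [Finset.mem_Ioc, Finset.mem_insert]; omega
    rw [hIoc, Finset.sum_insert (by simp), Finset.Ioc_eq_empty_of_le h.le,
      Finset.Ioc_eq_empty_of_le (by omega : 0 ≤ y - 1)]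
    ring

lemma walk_rightIncr (x : Coord → ℝ) (y : ℤ) (m : ℕ) :
    walk (rightIncr y x) m = potential (x ∘ .inl) (y + m) - potential (x ∘ .inl) y := by
  induction m with
  | zero => simp
  | succ m ih =>
    have := potential_sub_pred (x ∘ .inl) (y + 1 + m)
    rw [add_right_comm, add_sub_cancel_right] at this
    rw [walk_succ, ih, rightIncr, Nat.cast_succ, ← add_assoc, add_right_comm y 1]
    simp only [Function.comp_apply] at this
    linarith

lemma walk_leftIncr (x : Coord → ℝ) (y : ℤ) (m : ℕ) :
    walk (leftIncr y x) m = potential (x ∘ .inl) (y - m) - potential (x ∘ .inl) y := by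
  induction m with
  | zero => simp
  | succ m ih =>
    have := potential_sub_pred (x ∘ .inl) (y - m)
    rw [walk_succ, ih, leftIncr, Nat.cast_succ, ← sub_sub]
    simp only [Function.comp_apply] at this
    linarith

lemma abs_le_mul_natAbs {V : ℤ → ℝ} {c : ℝ} (h₀ : V 0 = 0) (hV : ∀ y, |V y - V (y - 1)| ≤ c)
    (y : ℤ) : |V y| ≤ c * y.natAbs := by
  induction y using Int.induction_on with
  | zero => simp [h₀]
  | succ i ih =>
    have hstep := hV (i + 1)
    rw [Int.natAbs_natCast] at ih
    rw [add_sub_cancel_right, abs_le] at hstep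
    rw [show ((i : ℤ) + 1).natAbs = i + 1 by omega, Nat.cast_succ, abs_le]
    constructor <;> linarith [abs_le.1 ih]
  | pred i ih =>
    have hstep := hV (-i)
    rw [Int.natAbs_neg, Int.natAbs_natCast] at ih
    rw [abs_le] at hstep
    rw [show (-(i : ℤ) - 1).natAbs = i + 1 by omega, Nat.cast_succ, abs_le]
    constructor <;> linarith [abs_le.1 ih]

end Potential

section SharpValley

/-- A potential `V` with, on `[r, r + R]`, a valley of bottom `r + b` and depth of order `T`, sharp
away from its two ends of length `N`, and a barrier on `[-(r + R), -r]`; the scenery `D` is capped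
around the bottom. -/
structure IsSharpValley (V D : ℤ → ℝ) (γ : ℝ) (M N r R b : ℕ) (T : ℝ) : Prop where
  lt_bottom : N < b
  bottom_add_lt : b + N < R
  barrier_le : ∀ m ≤ b, V (r + m) ≤ V r + 2 * T
  bottom_le : V (r + b) ≤ V r - 6 * T
  le_first : ∀ m ≤ N, V r - T ≤ V (r + m)
  le_last : ∀ m ≤ R, R ≤ m + N → V r + 6 * T ≤ V (r + m)
  sharp : ∀ m : ℕ, N ≤ m → m + N ≤ R → M ≤ (m - b : ℤ).natAbs →
    2 * ((m - b : ℤ).natAbs : ℝ) ^ γ ≤ V (r + m) - V (r + b)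
  le_left : ∀ m ≤ R, V (-r) - T ≤ V (-r - m)
  le_left_end : V (-r) + 6 * T ≤ V (-r - R)
  scenery_le : ∀ u ∈ annulusSites r R, D u ≤ sceneryCap γ M (u - (r + b)).natAbs

/-- At the first minimum both one-sided walks stay nonnegative, so a dip of one of them below the
threshold would make the minimum blunt. -/
lemma two_mul_rpow_le_of_noBluntMin {γ : ℝ} {M N R b : ℕ} {r : ℤ} {x : Coord → ℝ}
    (hx : x ∈ noBluntMin γ M N R r) (hb : rightIncr r x ∈ firstArgmin R b) (hNb : N ≤ b)
    (hbN : b + N ≤ R) {m : ℕ} (hNm : N ≤ m) (hmN : m + N ≤ R) (hM : M ≤ (m - b : ℤ).natAbs) :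
    2 * ((m - b : ℤ).natAbs : ℝ) ^ γ ≤ walk (rightIncr r x) m - walk (rightIncr r x) b := by
  have hright (k : ℕ) : walk (rightIncr (r + b) x) k =
      walk (rightIncr r x) (b + k) - walk (rightIncr r x) b := by
    simp only [walk_rightIncr]; push_cast; ring_nf
  have hleft {k : ℕ} (hk : k ≤ b) : walk (leftIncr (r + b) x) k =
      walk (rightIncr r x) (b - k) - walk (rightIncr r x) b := by
    simp only [walk_rightIncr, walk_leftIncr]; push_cast [hk]; ring_nf
  have hright_mem {l : ℕ} (hl : l ≤ R - b) : rightIncr (r + b) x ∈ stayNonneg l 0 := fun k hk => by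
    rw [zero_add, hright]
    exact sub_nonneg.2 (hb.2 _ (by omega))
  have hleft_mem {l : ℕ} (hl : l ≤ b) : leftIncr (r + b) x ∈ stayNonneg l 0 := fun k hk => by
    rw [zero_add, hleft (hk.trans hl)]
    exact sub_nonneg.2 (hb.2 _ (by omega))
  have hsharp := mem_iInter₂.1 hx b (Finset.mem_Icc.2 ⟨hNb, by omega⟩)
  by_contra! hcon
  refine hsharp ?_
  rcases le_or_gt b m with h | h
  · rw [show (m - b : ℤ).natAbs = m - b by omega] at hM hcon
    refine .inl ⟨⟨hright_mem le_rfl, m - b, hM, by omega, ?_⟩, hleft_mem hNb⟩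
    rwa [hright, Nat.add_sub_cancel' h]
  · rw [show (m - b : ℤ).natAbs = b - m by omega] at hM hcon
    refine .inr ⟨hright_mem (by omega), hleft_mem le_rfl, b - m, hM, by omega, ?_⟩
    rwa [hleft (Nat.sub_le _ _), Nat.sub_sub_self h.le]

lemma exists_isSharpValley {s : ValleyShape} (hs : s.IsDeep) {H r : ℕ} (hH : 0 < H) {x : Coord → ℝ}
    (hx : x ∈ valleyEvent s H r) :
    ∃ b, IsSharpValley (potential (x ∘ .inl)) (x ∘ .inr) s.γ s.M (H * H) r (s.width H) b
      (s.t * H) := by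
  obtain ⟨hleft, hvalley⟩ := hx
  obtain ⟨b, hb, ⟨⟨hright, hsharp⟩, hmin⟩, hscenery⟩ := mem_iUnion₂.1 hvalley
  have hle : b ≤ s.width H := Nat.lt_succ_iff.1 (Finset.mem_range.1 hb)
  have hlt := hs.lt_argmin hH hright hmin
  have hadd_lt := hs.argmin_add_lt hH hright hmin hle
  have hV (m : ℕ) := walk_rightIncr x r m
  have hV' (m : ℕ) := walk_leftIncr x (-r) m
  refine ⟨b, hlt, hadd_lt, fun m hm => ?_, ?_, fun m hm => ?_, fun m hm hm' => ?_,
    fun m hNm hmN hM => ?_, fun m hm => ?_, ?_, hscenery⟩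
  · linarith [hs.walk_le_of_le_argmin hright hmin (by omega) hm, hV m]
  · linarith [hs.walk_le_of_mem_firstArgmin hright hmin, hV b]
  · have := descentAscent.neg_le_walk_of_le hright (by have := hs.lt; omega) hm
    linarith [hV m]
  · linarith [hs.le_walk_of_le_add hright hm hm', hV m]
  · have := two_mul_rpow_le_of_noBluntMin hsharp hmin hlt.le hadd_lt.le hNm hmN hM
    linarith [hV m, hV b]
  · linarith [descentAscent.neg_le_walk_of_ascent hleft hs.t_pos.le hm, hV' m]
  · have hup := descentAscent.walk_add_le hleft le_rfl (k := s.Q) (by omega)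
    simp only [zero_mul, zero_add, walk_zero] at hup
    have hle : 6 * s.t ≤ s.Q :=
      hs.descent.trans (by exact_mod_cast (Nat.le_succ s.J).trans hs.lt.le)
    have := mul_le_mul_of_nonneg_right hle (Nat.cast_nonneg (α := ℝ) H)
    linarith [hV' (s.width H)]

end SharpValley

section Traps

/-- The reversible measure of the walk in the potential `V`: the sum of the conductances of the two
edges at `y`. -/
noncomputable def edgeMeasure (V : ℤ → ℝ) (y : ℤ) : ℝ :=
  Real.exp (-V y) + Real.exp (-V (y - 1))

/-- The resistance between `0` and `b` in the potential `V`. -/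
noncomputable def resistance (V : ℤ → ℝ) (b : ℕ) : ℝ := ∑ j ∈ Finset.range b, Real.exp (V j)

/-- There are an interval containing `0` and a site `b` in it such that the walk reaches `b` much
before the ends of the interval, spends there a time of order at least `m` before leaving, and sees
in the meantime, per visit to `b`, a total scenery `D` of order at most `κ`. -/
def HasTrap (V D : ℤ → ℝ) (κ m : ℝ) : Prop :=
  ∃ A B b : ℕ, 0 < b ∧ b < B ∧ 0 < A ∧
    resistance V b * (edgeMeasure V (-A) + edgeMeasure V B) ≤ κ ∧
    ∑ u ∈ Finset.Ioo (-A : ℤ) B, D u * edgeMeasure V u ≤ κ * edgeMeasure V b ∧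
    m ≤ resistance V b * edgeMeasure V b

/-- The bound obtained at distance `j` from the bottom of a sharp valley for the product of the
scenery and the invariant measure. -/
noncomputable def sharpWeight (γ : ℝ) (M j : ℕ) : ℝ := if j < M then 0 else Real.exp (-(j : ℝ) ^ γ)

lemma sharpWeight_nonneg (γ : ℝ) (M j : ℕ) : 0 ≤ sharpWeight γ M j := by
  unfold sharpWeight; split_ifs <;> positivity

lemma sceneryCap_le_exp_rpow {γ : ℝ} (hγ : 0 ≤ γ) (M : ℕ) {j : ℕ} {L : ℝ} (hj : j ≤ L) :
    sceneryCap γ M j ≤ Real.exp (L ^ γ) := by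
  unfold sceneryCap
  split_ifs
  · positivity
  · gcongr

lemma edgeMeasure_pos (V : ℤ → ℝ) (y : ℤ) : 0 < edgeMeasure V y := by
  unfold edgeMeasure; positivity

lemma exp_neg_le_edgeMeasure (V : ℤ → ℝ) (y : ℤ) : Real.exp (-V y) ≤ edgeMeasure V y :=
  le_add_of_nonneg_right (Real.exp_pos _).le

lemma edgeMeasure_le {V : ℤ → ℝ} {c : ℝ} {y : ℤ} (hV : |V y - V (y - 1)| ≤ c) :
    edgeMeasure V y ≤ (1 + Real.exp c) * Real.exp (-V y) := by
  rw [edgeMeasure, add_mul, one_mul, ← Real.exp_add]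
  gcongr
  linarith [abs_le.1 hV]

lemma one_le_resistance {V : ℤ → ℝ} (h₀ : V 0 = 0) {b : ℕ} (hb : 0 < b) : 1 ≤ resistance V b := by
  simpa [resistance, h₀] using Finset.single_le_sum (f := fun j : ℕ => Real.exp (V j))
    (fun _ _ => (Real.exp_pos _).le) (Finset.mem_range.2 hb)

end Traps

namespace IsSharpValley

variable {V D : ℤ → ℝ} {γ c K : ℝ} {M N r R b : ℕ} {T : ℝ}

lemma resistance_le (h : IsSharpValley V D γ M N r R b T) (hT : 0 ≤ T)
    (hV : ∀ y, |V y| ≤ c * y.natAbs) (hc : 0 ≤ c) :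
    resistance V (r + b) ≤ (r + R : ℕ) * Real.exp (c * r + 2 * T) := by
  have hle : ∀ j ∈ Finset.range (r + b), Real.exp (V j) ≤ Real.exp (c * r + 2 * T) := by
    intro j hj
    rw [Finset.mem_range] at hj
    refine Real.exp_le_exp.2 ?_
    rcases le_or_gt j r with hjr | hjr
    · have := mul_le_mul_of_nonneg_left (Nat.cast_le (α := ℝ).2 hjr) hc
      have := (abs_le.1 (hV j)).2
      rw [Int.natAbs_natCast] at this
      linarith
    · have hbar := h.barrier_le (j - r) (by omega)
      rw [show (r + (j - r : ℕ) : ℤ) = j by omega] at hbar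
      have := (abs_le.1 (hV r)).2
      rw [Int.natAbs_natCast] at this
      linarith
  refine (Finset.sum_le_card_nsmul _ _ _ hle).trans ?_
  rw [Finset.card_range, nsmul_eq_mul]
  gcongr
  linarith [h.bottom_add_lt]

lemma potential_bottom_le (h : IsSharpValley V D γ M N r R b T) (hV : ∀ y, |V y| ≤ c * y.natAbs) :
    V (r + b : ℕ) ≤ c * r - 6 * T := by
  have := (abs_le.1 (hV r)).2
  rw [Int.natAbs_natCast] at this
  push_cast
  linarith [h.bottom_le]

lemma le_potential_left_end (h : IsSharpValley V D γ M N r R b T)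
    (hV : ∀ y, |V y| ≤ c * y.natAbs) : 6 * T - c * r ≤ V (-(r + R : ℕ)) := by
  have := (abs_le.1 (hV (-r))).1
  rw [Int.natAbs_neg, Int.natAbs_natCast] at this
  rw [Nat.cast_add, neg_add, ← sub_eq_add_neg]
  linarith [h.le_left_end]

lemma le_potential_right_end (h : IsSharpValley V D γ M N r R b T)
    (hV : ∀ y, |V y| ≤ c * y.natAbs) : 6 * T - c * r ≤ V (r + R : ℕ) := by
  have := (abs_le.1 (hV r)).1
  rw [Int.natAbs_natCast] at this
  push_cast
  linarith [h.le_last R le_rfl (Nat.le_add_right _ _)]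

lemma mul_exp_le_of_core (h : IsSharpValley V D γ M N r R b T) (hV : ∀ y, |V y| ≤ c * y.natAbs)
    (hc : 0 ≤ c) (hK : 0 ≤ K) (hD : ∀ u, D u ≤ K * Real.exp u.natAbs) {u : ℤ} (hu : u.natAbs ≤ r) :
    D u * Real.exp (V (r + b : ℕ) - V u) ≤ K * Real.exp ((2 * c + 1) * r - 6 * T) := by
  calc D u * Real.exp (V (r + b : ℕ) - V u)
      ≤ K * Real.exp u.natAbs * Real.exp (V (r + b : ℕ) - V u) := by gcongr; exact hD u
    _ = K * Real.exp (u.natAbs + (V (r + b : ℕ) - V u)) := by rw [mul_assoc, Real.exp_add]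
    _ ≤ K * Real.exp ((2 * c + 1) * r - 6 * T) := by
      gcongr
      have hur : (u.natAbs : ℝ) ≤ r := by exact_mod_cast hu
      have := mul_le_mul_of_nonneg_left hur hc
      linarith [(abs_le.1 (hV u)).1, h.potential_bottom_le hV]

lemma mul_exp_le_of_annulus (h : IsSharpValley V D γ M N r R b T) (hγ : 0 ≤ γ) {u : ℤ} {L v : ℝ}
    (hu : u ∈ annulusSites r R) (hL : (u - (r + b)).natAbs ≤ L) (hv : V (r + b : ℕ) - V u ≤ v) :
    D u * Real.exp (V (r + b : ℕ) - V u) ≤ Real.exp (L ^ γ + v) := by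
  rw [Real.exp_add]
  gcongr
  exact (h.scenery_le u hu).trans (sceneryCap_le_exp_rpow hγ M hL)

lemma mul_exp_le_of_sharp (h : IsSharpValley V D γ M N r R b T) {m : ℕ} (hNm : N ≤ m)
    (hmN : m + N ≤ R) (hm : (r + m : ℤ) ∈ annulusSites r R) :
    D (r + m) * Real.exp (V (r + b : ℕ) - V (r + m)) ≤ sharpWeight γ M (m - b : ℤ).natAbs := by
  have hcap := h.scenery_le _ hm
  rw [add_sub_add_left_eq_sub] at hcap
  refine (mul_le_mul_of_nonneg_right hcap (Real.exp_pos _).le).trans ?_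
  unfold sceneryCap sharpWeight
  split_ifs with hM
  · simp
  · rw [← Real.exp_add, Real.exp_le_exp]
    push_cast
    linarith [h.sharp m hNm hmN (not_lt.1 hM)]

lemma potential_sub_le_or_middle (h : IsSharpValley V D γ M N r R b T)
    (hV : ∀ y, |V y| ≤ c * y.natAbs) {u : ℤ} (hT : 0 ≤ T) (hu : u ∈ annulusSites r R) :
    V (r + b : ℕ) - V u ≤ 2 * c * r - 5 * T ∨ ∃ m : ℕ, u = r + m ∧ N ≤ m ∧ m + N ≤ R := by
  have hbottom := h.potential_bottom_le hV
  have hr := abs_le.1 (hV r)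
  have hr' := abs_le.1 (hV (-r))
  rw [Int.natAbs_natCast] at hr
  rw [Int.natAbs_neg, Int.natAbs_natCast] at hr'
  rw [annulusSites, Finset.mem_union, Finset.mem_Ioc, Finset.mem_Ico] at hu
  rcases hu with hu | hu
  · obtain ⟨m, rfl⟩ : ∃ m : ℕ, u = r + m := ⟨(u - r).toNat, by omega⟩
    by_cases hmN : N ≤ m ∧ m + N ≤ R
    · exact .inr ⟨m, rfl, hmN⟩
    rcases not_and_or.1 hmN with hm | hm
    · exact .inl (by linarith [h.le_first m (by omega)])
    · exact .inl (by linarith [h.le_last m (by omega) (by omega)])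
  · obtain ⟨m, rfl⟩ : ∃ m : ℕ, u = -r - m := ⟨(-u - r).toNat, by omega⟩
    exact .inl (by linarith [h.le_left m (by omega)])

lemma mul_exp_le (h : IsSharpValley V D γ M N r R b T) (hV : ∀ y, |V y| ≤ c * y.natAbs)
    (hc : 0 ≤ c) (hT : 0 ≤ T) (hγ : 0 ≤ γ) (hK : 0 ≤ K) (hD : ∀ u, D u ≤ K * Real.exp u.natAbs)
    {u : ℤ} (hu : u ∈ Finset.Ioo (-(r + R : ℕ) : ℤ) (r + R : ℕ)) :
    D u * Real.exp (V (r + b : ℕ) - V u) ≤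
      (1 + K) * Real.exp ((2 * (r + R : ℕ) : ℝ) ^ γ + (2 * c + 1) * r - 5 * T) +
        sharpWeight γ M (u - (r + b : ℕ)).natAbs := by
  have hb := h.bottom_add_lt
  rw [Finset.mem_Ioo] at hu
  have hweight := sharpWeight_nonneg γ M (u - (r + b : ℕ)).natAbs
  have hexp := Real.exp_pos ((2 * (r + R : ℕ) : ℝ) ^ γ + (2 * c + 1) * r - 5 * T)
  have hdist : ((u - (r + b)).natAbs : ℝ) ≤ 2 * (r + R : ℕ) := by
    exact_mod_cast (by omega : (u - (r + b)).natAbs ≤ 2 * (r + R))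
  have hpow : 0 ≤ (2 * (r + R : ℕ) : ℝ) ^ γ := by positivity
  rcases le_or_gt u.natAbs r with hcore | hout
  · have hmono : Real.exp ((2 * c + 1) * r - 6 * T) ≤
        Real.exp ((2 * (r + R : ℕ) : ℝ) ^ γ + (2 * c + 1) * r - 5 * T) :=
      Real.exp_le_exp.2 (by linarith)
    have := mul_le_mul_of_nonneg_left hmono hK
    linarith [h.mul_exp_le_of_core hV hc hK hD hcore]
  have hannulus : u ∈ annulusSites r R := by
    rw [annulusSites, Finset.mem_union, Finset.mem_Ioc, Finset.mem_Ico]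
    omega
  rcases h.potential_sub_le_or_middle hV hT hannulus with hdeep | ⟨m, rfl, hNm, hmN⟩
  · have hmono : Real.exp ((2 * (r + R : ℕ) : ℝ) ^ γ + (2 * c * r - 5 * T)) ≤
        Real.exp ((2 * (r + R : ℕ) : ℝ) ^ γ + (2 * c + 1) * r - 5 * T) :=
      Real.exp_le_exp.2 (by linarith [Nat.cast_nonneg (α := ℝ) r])
    have := mul_nonneg hK hexp.le
    linarith [h.mul_exp_le_of_annulus hγ hannulus hdist hdeep]
  · have := h.mul_exp_le_of_sharp hNm hmN hannulus
    rw [Nat.cast_add, add_sub_add_left_eq_sub]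
    rw [Nat.cast_add] at this
    have : 0 ≤ (1 + K) * Real.exp ((2 * (r + R : ℕ) : ℝ) ^ γ + (2 * c + 1) * r - 5 * T) := by
      positivity
    linarith

end IsSharpValley

section TrapEstimates

namespace IsSharpValley

variable {V D : ℤ → ℝ} {γ c K : ℝ} {M N r R b : ℕ} {T : ℝ}

lemma resistance_mul_le (h : IsSharpValley V D γ M N r R b T) (hT : 0 ≤ T) (h₀ : V 0 = 0)
    (hV : ∀ y, |V y - V (y - 1)| ≤ c) :
    resistance V (r + b) * (edgeMeasure V (-(r + R : ℕ)) + edgeMeasure V (r + R : ℕ)) ≤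
      2 * (1 + Real.exp c) * (r + R : ℕ) * Real.exp (2 * c * r - 4 * T) := by
  have hlip := abs_le_mul_natAbs h₀ hV
  have hc : 0 ≤ c := (abs_nonneg _).trans (hV 0)
  have hend {y : ℤ} (hy : 6 * T - c * r ≤ V y) :
      edgeMeasure V y ≤ (1 + Real.exp c) * Real.exp (c * r - 6 * T) := by
    refine (edgeMeasure_le (hV y)).trans ?_
    gcongr
    linarith
  calc resistance V (r + b) * (edgeMeasure V (-(r + R : ℕ)) + edgeMeasure V (r + R : ℕ))
      ≤ ((r + R : ℕ) * Real.exp (c * r + 2 * T)) *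
          ((1 + Real.exp c) * Real.exp (c * r - 6 * T) +
            (1 + Real.exp c) * Real.exp (c * r - 6 * T)) :=
        mul_le_mul (h.resistance_le hT hlip hc)
          (add_le_add (hend (h.le_potential_left_end hlip)) (hend (h.le_potential_right_end hlip)))
          (add_pos (edgeMeasure_pos _ _) (edgeMeasure_pos _ _)).le (by positivity)
    _ = 2 * (1 + Real.exp c) * (r + R : ℕ) * Real.exp (2 * c * r - 4 * T) := by
      rw [show 2 * c * r - 4 * T = (c * r + 2 * T) + (c * r - 6 * T) by ring,
        Real.exp_add (c * r + 2 * T)]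
      ring

lemma sum_mul_edgeMeasure_le (h : IsSharpValley V D γ M N r R b T) (hT : 0 ≤ T) (hγ : 0 ≤ γ)
    (h₀ : V 0 = 0) (hV : ∀ y, |V y - V (y - 1)| ≤ c) (hD₀ : ∀ u, 0 ≤ D u)
    (hD : ∀ u, D u ≤ K * Real.exp u.natAbs) {w : ℝ}
    (hw : ∀ (I : Finset ℤ) (y : ℤ), ∑ u ∈ I, sharpWeight γ M (u - y).natAbs ≤ w) :
    ∑ u ∈ Finset.Ioo (-(r + R : ℕ) : ℤ) (r + R : ℕ), D u * edgeMeasure V u ≤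
      (1 + Real.exp c) * (2 * (r + R : ℕ) *
        ((1 + K) * Real.exp ((2 * (r + R : ℕ) : ℝ) ^ γ + (2 * c + 1) * r - 5 * T)) + w) *
        edgeMeasure V (r + b : ℕ) := by
  have hc : 0 ≤ c := (abs_nonneg _).trans (hV 0)
  have hK : 0 ≤ K := by simpa using (hD₀ 0).trans (hD 0)
  set E := (1 + K) * Real.exp ((2 * (r + R : ℕ) : ℝ) ^ γ + (2 * c + 1) * r - 5 * T)
  have : 0 ≤ E := by positivity
  have hterm : ∀ u ∈ Finset.Ioo (-(r + R : ℕ) : ℤ) (r + R : ℕ), D u * edgeMeasure V u ≤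
      (1 + Real.exp c) * (E + sharpWeight γ M (u - (r + b : ℕ)).natAbs) *
        edgeMeasure V (r + b : ℕ) := fun u hu => calc
    D u * edgeMeasure V u ≤ D u * ((1 + Real.exp c) * Real.exp (-V u)) :=
      mul_le_mul_of_nonneg_left (edgeMeasure_le (hV u)) (hD₀ u)
    _ = (1 + Real.exp c) * (D u * Real.exp (V (r + b : ℕ) - V u)) *
        Real.exp (-V (r + b : ℕ)) := by
      rw [sub_eq_add_neg, Real.exp_add, Real.exp_neg (V (r + b : ℕ))]
      field_simp
    _ ≤ _ := by
      have := sharpWeight_nonneg γ M (u - (r + b : ℕ)).natAbs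
      gcongr
      · exact h.mul_exp_le (abs_le_mul_natAbs h₀ hV) hc hT hγ hK hD hu
      · exact exp_neg_le_edgeMeasure V _
  refine (Finset.sum_le_sum hterm).trans ?_
  rw [← Finset.sum_mul, ← Finset.mul_sum, Finset.sum_add_distrib, Finset.sum_const, nsmul_eq_mul]
  have hcard : ((Finset.Ioo (-(r + R : ℕ) : ℤ) (r + R : ℕ)).card : ℝ) ≤ 2 * (r + R : ℕ) := by
    have : (Finset.Ioo (-(r + R : ℕ) : ℤ) (r + R : ℕ)).card ≤ 2 * (r + R) := by
      rw [Int.card_Ioo]; omega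
    exact_mod_cast this
  gcongr
  · exact (edgeMeasure_pos V _).le
  · exact hw _ _

lemma le_resistance_mul (h : IsSharpValley V D γ M N r R b T) (h₀ : V 0 = 0)
    (hV : ∀ y, |V y - V (y - 1)| ≤ c) :
    6 * T - c * r ≤ resistance V (r + b) * edgeMeasure V (r + b : ℕ) := by
  have hbottom := h.potential_bottom_le (abs_le_mul_natAbs h₀ hV)
  have hpos : 0 < r + b := by have := h.lt_bottom; omega
  have hmeasure := exp_neg_le_edgeMeasure V (r + b : ℕ)
  calc 6 * T - c * r ≤ -V (r + b : ℕ) + 1 := by linarith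
    _ ≤ edgeMeasure V (r + b : ℕ) := (Real.add_one_le_exp _).trans hmeasure
    _ ≤ _ := le_mul_of_one_le_left (edgeMeasure_pos V _).le (one_le_resistance h₀ hpos)

lemma hasTrap (h : IsSharpValley V D γ M N r R b T) (hT : 0 ≤ T) (hγ : 0 ≤ γ)
    (h₀ : V 0 = 0) (hV : ∀ y, |V y - V (y - 1)| ≤ c) (hD₀ : ∀ u, 0 ≤ D u)
    (hD : ∀ u, D u ≤ K * Real.exp u.natAbs) {κ m : ℝ}
    (hends : 2 * (1 + Real.exp c) * (r + R : ℕ) * Real.exp (2 * c * r - 4 * T) ≤ κ)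
    (hmass : 2 * (1 + Real.exp c) * (1 + K) * (r + R : ℕ) *
      Real.exp ((2 * (r + R : ℕ) : ℝ) ^ γ + (2 * c + 1) * r - 5 * T) ≤ κ / 2)
    (hw : ∀ (I : Finset ℤ) (y : ℤ),
      ∑ u ∈ I, sharpWeight γ M (u - y).natAbs ≤ κ / 2 / (1 + Real.exp c))
    (hm : m ≤ 6 * T - c * r) : HasTrap V D κ m := by
  have hb := h.bottom_add_lt
  have hNb := h.lt_bottom
  refine ⟨r + R, r + R, r + b, by omega, by omega, by omega,
    (h.resistance_mul_le hT h₀ hV).trans hends,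
    (h.sum_mul_edgeMeasure_le hT hγ h₀ hV hD₀ hD hw).trans ?_, hm.trans (h.le_resistance_mul h₀ hV)⟩
  refine mul_le_mul_of_nonneg_right ?_ (edgeMeasure_pos V _).le
  rw [mul_add, mul_div_cancel₀ _ (by positivity)]
  linarith

end IsSharpValley

end TrapEstimates

section Asymptotics

variable {γ t : ℝ}

lemma summable_exp_neg_rpow (hγ : 0 < γ) : Summable fun j : ℕ => Real.exp (-(j : ℝ) ^ γ) := by
  have hO := (isLittleO_exp_neg_mul_rpow_atTop one_pos (-(2 / γ))).isBigO.comp_tendsto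
    ((tendsto_rpow_atTop hγ).comp tendsto_natCast_atTop_atTop)
  refine summable_of_isBigO_nat (Real.summable_nat_rpow.2 (by norm_num : (-2 : ℝ) < -1)) ?_
  refine hO.congr (fun j => by simp) fun j => ?_
  rw [Function.comp_apply, Function.comp_apply, ← Real.rpow_mul (Nat.cast_nonneg j)]
  congr 1
  field_simp

lemma exists_sum_sharpWeight_le (hγ : 0 < γ) {w : ℝ} (hw : 0 < w) :
    ∃ M₀ : ℕ, ∀ M ≥ M₀, ∀ (I : Finset ℤ) (y : ℤ),
      ∑ u ∈ I, sharpWeight γ M (u - y).natAbs ≤ w := by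
  obtain ⟨s, hs⟩ := summable_iff_vanishing_norm.1
    (summable_natAbs (summable_exp_neg_rpow hγ)) w hw
  refine ⟨s.sup Int.natAbs + 1, fun M hM I y => ?_⟩
  have hfar := hs ((I.filter fun u => M ≤ (u - y).natAbs).image fun u => u - y) <| by
    rw [Finset.disjoint_left]
    intro v hv hvs
    obtain ⟨u, hu, rfl⟩ := Finset.mem_image.1 hv
    have := (Finset.mem_filter.1 hu).2
    have := Finset.le_sup (f := Int.natAbs) hvs
    omega
  rw [Finset.sum_image sub_left_injective.injOn, Finset.sum_filter] at hfar
  refine (Finset.sum_congr rfl fun u _ => ?_).trans_le ((le_abs_self _).trans hfar.le)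
  simp only [sharpWeight, ← not_lt, ite_not]

lemma eventually_mul_rpow_le_mul_sq {p : ℝ} (hp : p < 2) (ht : 0 < t) (C : ℝ) :
    ∀ᶠ q : ℕ in atTop, C * (q : ℝ) ^ p ≤ t * (q : ℝ) ^ 2 := by
  filter_upwards [((tendsto_rpow_atTop (sub_pos.2 hp)).comp
    tendsto_natCast_atTop_atTop).eventually_ge_atTop (C / t), eventually_gt_atTop 0] with q hq hq₀
  rw [Function.comp_apply, div_le_iff₀ ht, Real.rpow_sub (Nat.cast_pos.2 hq₀), Real.rpow_two,
    div_mul_eq_mul_div, le_div_iff₀ (by positivity)] at hq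
  linarith

lemma eventually_rpow_add_mul_le (hγ : γ < 1 / 2) (ht : 0 < t) {a : ℝ} (ha : 0 ≤ a) (d : ℝ) :
    ∀ᶠ q : ℕ in atTop, (a * (q : ℝ) ^ 4) ^ γ + d * q ≤ 2 * (t * (q : ℝ) ^ 2) := by
  filter_upwards [eventually_mul_rpow_le_mul_sq (by linarith : 4 * γ < 2) ht (a ^ γ),
    eventually_mul_rpow_le_mul_sq one_lt_two ht d] with q hq hq'
  rw [Real.rpow_one] at hq'
  rw [Real.mul_rpow ha (by positivity), ← Real.rpow_natCast, ← Real.rpow_mul (Nat.cast_nonneg q),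
    Nat.cast_ofNat]
  linarith

lemma eventually_mul_pow_mul_exp_neg_le (ht : 0 < t) (C : ℝ) {w : ℝ} (hw : 0 < w) :
    ∀ᶠ q : ℕ in atTop, C * (q : ℝ) ^ 4 * Real.exp (-(t * (q : ℝ) ^ 2)) ≤ w := by
  have hlim := (tendsto_rpow_mul_exp_neg_mul_atTop_nhds_zero 2 t ht).const_mul C
  rw [mul_zero] at hlim
  have hsq : Tendsto (fun q : ℕ => (q : ℝ) ^ 2) atTop atTop :=
    (tendsto_pow_atTop two_ne_zero).comp tendsto_natCast_atTop_atTop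
  filter_upwards [(hlim.comp hsq).eventually_le_const hw] with q hq
  rwa [Function.comp_apply, Real.rpow_two, ← pow_mul, ← mul_assoc, neg_mul] at hq

end Asymptotics

section TrapExistence

variable {ν ρ : Measure ℝ} [IsProbabilityMeasure ν] [IsProbabilityMeasure ρ] {c γ κ m : ℝ}

lemma hasTrap_of_frequently {s : ValleyShape} (hs : s.IsDeep) (hγ₀ : 0 ≤ s.γ) (hγ : s.γ < 1 / 2)
    {x : Coord → ℝ} (hx : ∃ᶠ q : ℕ in atTop, ∃ r ≤ q, x ∈ valleyEvent s (q ^ 2) r)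
    (hz : ∀ u, |x (.inl u)| ≤ c) (hD₀ : ∀ u, 0 ≤ x (.inr u)) {K : ℝ}
    (hD : ∀ u : ℤ, x (.inr u) ≤ K * Real.exp u.natAbs) (hκ : 0 < κ)
    (hw : ∀ (I : Finset ℤ) (y : ℤ),
      ∑ u ∈ I, sharpWeight s.γ s.M (u - y).natAbs ≤ κ / 2 / (1 + Real.exp c)) (m : ℝ) :
    HasTrap (potential (x ∘ .inl)) (x ∘ .inr) κ m := by
  have hc : 0 ≤ c := (abs_nonneg _).trans (hz 0)
  have hK : 0 ≤ K := by simpa using (hD₀ 0).trans (hD 0)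
  have hV (y : ℤ) : |potential (x ∘ .inl) y - potential (x ∘ .inl) (y - 1)| ≤ c :=
    (congrArg abs (potential_sub_pred (x ∘ .inl) y)).trans_le (hz y)
  obtain ⟨q, ⟨r, hrq, hvalley⟩, hpot, hends, hmass, hdepth, hq⟩ := (hx.and_eventually <|
    (eventually_rpow_add_mul_le hγ hs.t_pos (a := 2 * (1 + s.Q)) (by positivity)
      (2 * c + 1)).and <|
    (eventually_mul_pow_mul_exp_neg_le hs.t_pos (2 * (1 + Real.exp c) * (1 + s.Q)) hκ).and <|
    (eventually_mul_pow_mul_exp_neg_le hs.t_pos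
      (2 * (1 + Real.exp c) * (1 + K) * (1 + s.Q)) (half_pos hκ)).and <|
    (eventually_mul_rpow_le_mul_sq two_pos hs.t_pos m).and (eventually_gt_atTop 0)).exists
  obtain ⟨b, hb⟩ := exists_isSharpValley hs (pow_pos hq 2) hvalley
  rw [Nat.cast_pow] at hb
  have hT : 0 ≤ s.t * (q : ℝ) ^ 2 := mul_nonneg hs.t_pos.le (by positivity)
  have hrq' : (r : ℝ) ≤ q := Nat.cast_le.2 hrq
  have hcr := mul_le_mul_of_nonneg_left hrq' hc
  have hsize : ((r + s.width (q ^ 2) : ℕ) : ℝ) ≤ (1 + s.Q) * (q : ℝ) ^ 4 := by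
    have : r + s.width (q ^ 2) ≤ (1 + s.Q) * q ^ 4 :=
      (Nat.add_le_add_right (hrq.trans (Nat.le_self_pow four_ne_zero q)) _).trans_eq (by ring)
    exact_mod_cast this
  have hpow : (2 * (r + s.width (q ^ 2) : ℕ) : ℝ) ^ s.γ ≤ (2 * (1 + s.Q) * (q : ℝ) ^ 4) ^ s.γ :=
    Real.rpow_le_rpow (by positivity) (by linarith) hγ₀
  have hpow₀ : 0 ≤ (2 * (1 + s.Q) * (q : ℝ) ^ 4) ^ s.γ := by positivity
  refine hb.hasTrap hT hγ₀ (potential_zero _) hV hD₀ hD (le_trans ?_ hends)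
    (le_trans ?_ hmass) hw ?_
  · rw [mul_assoc _ (1 + (s.Q : ℝ))]
    gcongr
    linarith
  · rw [mul_assoc _ (1 + (s.Q : ℝ))]
    gcongr
    linarith
  · rw [Real.rpow_zero] at hdepth
    linarith

lemma measurePreserving_inl (u : ℤ) :
    MeasurePreserving (fun x : Coord → ℝ => x (.inl u)) (jointLaw ν ρ) ν :=
  measurePreserving_eval_infinitePi (Sum.elim (fun _ => ν) fun _ => ρ) (Sum.inl u)

lemma measurePreserving_inr (u : ℤ) :
    MeasurePreserving (fun x : Coord → ℝ => x (.inr u)) (jointLaw ν ρ) ρ :=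
  measurePreserving_eval_infinitePi (Sum.elim (fun _ => ν) fun _ => ρ) (Sum.inr u)

lemma ae_forall_inr {p : ℝ → Prop} (hp : ∀ᵐ d ∂ρ, p d) :
    ∀ᵐ x ∂jointLaw ν ρ, ∀ u, p (x (.inr u)) :=
  ae_all_iff.2 fun u => (measurePreserving_inr u).quasiMeasurePreserving.ae hp

lemma ae_exists_scenery_le_mul_exp (hγ : γ ≤ 1)
    (hsum : Summable fun j : ℕ => ρ.real (Ioi (Real.exp ((j : ℝ) ^ γ))))
    (hρ : ∀ᵐ d ∂ρ, 0 ≤ d) :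
    ∀ᵐ x ∂jointLaw ν ρ, ∃ K, ∀ u : ℤ, x (.inr u) ≤ K * Real.exp u.natAbs := by
  have hle (j : ℕ) (hj : j ≠ 0) : ρ.real (Ioi (Real.exp j)) ≤
      ρ.real (Ioi (Real.exp ((j : ℝ) ^ γ))) := by
    refine measureReal_mono (Ioi_subset_Ioi (Real.exp_le_exp.2 ?_))
    simpa using Real.rpow_le_rpow_of_exponent_le (Nat.one_le_cast.2 (Nat.pos_of_ne_zero hj)) hγ
  have hsum' : Summable fun u : ℤ => ρ.real (Ioi (Real.exp u.natAbs)) :=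
    summable_natAbs <| hsum.of_norm_bounded_eventually_nat (E := ℝ)
      (f := fun j : ℕ => ρ.real (Ioi (Real.exp j))) <| by
      filter_upwards [eventually_ne_atTop 0] with j hj
      rw [Real.norm_of_nonneg measureReal_nonneg]
      exact hle j hj
  have hfinite : ∑' u : ℤ, jointLaw ν ρ {x | x (.inr u) ∈ Ioi (Real.exp u.natAbs)} ≠ ⊤ := by
    have hpre (u : ℤ) : jointLaw ν ρ {x | x (.inr u) ∈ Ioi (Real.exp u.natAbs)} =
        ENNReal.ofReal (ρ.real (Ioi (Real.exp u.natAbs))) :=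
      ((measurePreserving_inr u).measure_preimage measurableSet_Ioi.nullMeasurableSet).trans
        (ofReal_measureReal).symm
    exact (tsum_congr hpre).trans_ne hsum'.tsum_ofReal_ne_top
  filter_upwards [ae_finite_setOfPred_mem hfinite, ae_forall_inr hρ] with x hx hnonneg
  refine ⟨1 + ∑ u ∈ hx.toFinset, x (.inr u), fun u => ?_⟩
  have hsum₀ : 0 ≤ ∑ u ∈ hx.toFinset, x (.inr u) := Finset.sum_nonneg fun u _ => hnonneg u
  have hexp : 1 ≤ Real.exp u.natAbs := Real.one_le_exp (Nat.cast_nonneg _)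
  by_cases hu : Real.exp u.natAbs < x (.inr u)
  · have := Finset.single_le_sum (f := fun u => x (.inr u)) (fun u _ => hnonneg u)
      (hx.mem_toFinset.2 hu)
    nlinarith
  · nlinarith

lemma ae_hasTrap (h : StepLaw ν c) (hγ₀ : 0 < γ) (hγ : γ < 1 / 2) (hzero : 0 < ρ.real (Iic 0))
    (hsum : Summable fun j : ℕ => ρ.real (Ioi (Real.exp ((j : ℝ) ^ γ)))) (hρ : ∀ᵐ d ∂ρ, 0 ≤ d)
    (hκ : 0 < κ) (m : ℝ) :
    ∀ᵐ x ∂jointLaw ν ρ, HasTrap (potential (x ∘ .inl)) (x ∘ .inr) κ m := by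
  obtain ⟨t, ht, hprob⟩ := exists_le_real_valleyEvent h hγ₀.le hγ hzero hsum
  obtain ⟨J, hJ⟩ := exists_nat_ge (6 * t)
  obtain ⟨Q, hQ⟩ := exists_nat_ge (J + 1 + (J + 7) * t)
  obtain ⟨M₀, hM₀⟩ := hprob J Q
  obtain ⟨M₁, hM₁⟩ := exists_sum_sharpWeight_le hγ₀ (w := κ / 2 / (1 + Real.exp c)) (by positivity)
  obtain ⟨p, hp, hlow⟩ := hM₀ (max M₀ M₁) (le_max_left _ _)
  have hz : ∀ᵐ x ∂jointLaw ν ρ, ∀ u, |x (.inl u)| ≤ c := ae_all_iff.2 fun u =>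
    (measurePreserving_inl u).quasiMeasurePreserving.ae h.bdd
  filter_upwards [ae_frequently_mem_valleyEvent _ hp hlow, hz, ae_forall_inr hρ,
    ae_exists_scenery_le_mul_exp (by linarith) hsum hρ] with x hx hz hnonneg ⟨K, hK⟩
  exact hasTrap_of_frequently ⟨ht, hJ, hQ⟩ hγ₀.le hγ hx hz hnonneg hK hκ
    (hM₁ _ (le_max_right _ _)) m

end TrapExistence

section GreenFunction

/-- The law at time `i` of the walk started from `0` in the environment `p`. -/
noncomputable def quenchedLaw (p : ℤ → ℝ) : ℕ → ℤ → ℝ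
  | 0, y => if y = 0 then 1 else 0
  | i + 1, y => quenchedLaw p i (y - 1) * p (y - 1) + quenchedLaw p i (y + 1) * (1 - p (y + 1))

/-- The Green function: the expected number of visits to `y` before time `n` of the walk started
from `0` in the environment `p`. -/
noncomputable def green (p : ℤ → ℝ) (n : ℕ) (y : ℤ) : ℝ := ∑ i ∈ Finset.range n, quenchedLaw p i y

/-- The increments `log ((1 - p y) / p y)` of the potential of the environment `p`. -/
noncomputable def logRatio (p : ℤ → ℝ) (y : ℤ) : ℝ := Real.log ((1 - p y) / p y)

/-- The resistance between `max y 0` and `b` in the potential `V`. -/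
noncomputable def resistanceFrom (V : ℤ → ℝ) (b : ℕ) (y : ℤ) : ℝ :=
  ∑ j ∈ Finset.Ico (max y 0) b, Real.exp (V j)

lemma green_succ (p : ℤ → ℝ) (n : ℕ) (y : ℤ) : green p (n + 1) y =
    (if y = 0 then 1 else 0) + green p n (y - 1) * p (y - 1) +
      green p n (y + 1) * (1 - p (y + 1)) := by
  simp only [green, Finset.sum_range_succ', quenchedLaw, Finset.sum_add_distrib, Finset.sum_mul]
  ring

@[fun_prop]
lemma measurable_quenchedLaw (i : ℕ) (y : ℤ) : Measurable fun p => quenchedLaw p i y := by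
  induction i generalizing y with
  | zero => exact measurable_const
  | succ i ih => unfold quenchedLaw; fun_prop

@[fun_prop]
lemma measurable_green (n : ℕ) (y : ℤ) : Measurable fun p => green p n y := by
  unfold green; fun_prop

lemma edgeMeasure_mul_self {p : ℤ → ℝ} {y : ℤ} (h₀ : 0 < p y) (h₁ : p y < 1) :
    edgeMeasure (potential (logRatio p)) y * p y = Real.exp (-potential (logRatio p) y) := by
  have hpred : Real.exp (-potential (logRatio p) (y - 1)) =
      Real.exp (-potential (logRatio p) y) * ((1 - p y) / p y) := by
    rw [← Real.exp_log (div_pos (sub_pos.2 h₁) h₀), ← Real.exp_add, ← logRatio,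
      ← potential_sub_pred (logRatio p) y]
    congr 1
    ring
  rw [edgeMeasure, hpred]
  field_simp
  ring

lemma edgeMeasure_mul_one_sub {p : ℤ → ℝ} {y : ℤ} (h₀ : 0 < p y) (h₁ : p y < 1) :
    edgeMeasure (potential (logRatio p)) y * (1 - p y) =
      Real.exp (-potential (logRatio p) (y - 1)) := by
  rw [mul_one_sub, edgeMeasure_mul_self h₀ h₁, edgeMeasure, add_sub_cancel_left]

lemma resistanceFrom_nonneg (V : ℤ → ℝ) (b : ℕ) (y : ℤ) : 0 ≤ resistanceFrom V b y :=
  Finset.sum_nonneg fun _ _ => (Real.exp_pos _).le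

lemma resistanceFrom_le (V : ℤ → ℝ) (b : ℕ) (y : ℤ) : resistanceFrom V b y ≤ resistance V b := by
  have hmap : Finset.Ico (0 : ℤ) b = (Finset.range b).map Nat.castEmbedding := by
    ext j
    simp only [Finset.mem_Ico, Finset.mem_map, Finset.mem_range, Nat.castEmbedding_apply]
    exact ⟨fun h => ⟨j.toNat, by omega, by omega⟩, by rintro ⟨k, hk, rfl⟩; omega⟩
  calc resistanceFrom V b y ≤ ∑ j ∈ Finset.Ico (0 : ℤ) b, Real.exp (V j) :=
        Finset.sum_le_sum_of_subset_of_nonneg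
          (Finset.Ico_subset_Ico_left (le_max_right _ _)) fun _ _ _ => (Real.exp_pos _).le
    _ = resistance V b := by rw [hmap, Finset.sum_map]; rfl

lemma exp_neg_mul_resistanceFrom (V : ℤ → ℝ) (b : ℕ) (y : ℤ) :
    Real.exp (-V y) * resistanceFrom V b y =
      Real.exp (-V y) * resistanceFrom V b (y + 1) + if 0 ≤ y ∧ y < b then 1 else 0 := by
  split_ifs with h
  · have hIco : Finset.Ico (max y 0) (b : ℤ) =
        insert y (Finset.Ico (max (y + 1) 0) (b : ℤ)) := by
      ext u; simp only [Finset.mem_Ico, Finset.mem_insert]; omega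
    rw [resistanceFrom, hIco, Finset.sum_insert (by simp only [Finset.mem_Ico]; omega), mul_add,
      ← Real.exp_add, neg_add_cancel, Real.exp_zero, add_comm]
    rfl
  · have hIco : Finset.Ico (max y 0) (b : ℤ) = Finset.Ico (max (y + 1) 0) (b : ℤ) := by
      ext u; simp only [Finset.mem_Ico]; omega
    rw [resistanceFrom, hIco, add_zero]
    rfl

/-- Up to the reversible measure, `resistanceFrom V b` is the Green function of the walk killed at
`b`. -/
lemma resistanceFrom_balance (V : ℤ → ℝ) {b : ℕ} (hb : 0 < b) (y : ℤ) :
    (if y = 0 then 1 else 0) + Real.exp (-V (y - 1)) * resistanceFrom V b (y - 1) +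
        Real.exp (-V y) * resistanceFrom V b (y + 1) =
      edgeMeasure V y * resistanceFrom V b y + if y = b then 1 else 0 := by
  have hleft := exp_neg_mul_resistanceFrom V b (y - 1)
  have hright := exp_neg_mul_resistanceFrom V b y
  rw [sub_add_cancel] at hleft
  have hindicator : (if y = 0 then 1 else 0 : ℝ) + (if 0 ≤ y - 1 ∧ y - 1 < b then 1 else 0) =
      (if 0 ≤ y ∧ y < b then 1 else 0) + if y = b then 1 else 0 := by
    split_ifs <;> first | omega | norm_num
  rw [edgeMeasure]
  linarith

lemma green_le {p : ℤ → ℝ} (h₀ : ∀ y, 0 < p y) (h₁ : ∀ y, p y < 1) {b : ℕ} (hb : 0 < b) (n : ℕ)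
    (y : ℤ) : green p n y ≤ edgeMeasure (potential (logRatio p)) y *
      (resistanceFrom (potential (logRatio p)) b y +
        n / edgeMeasure (potential (logRatio p)) b) := by
  set V := potential (logRatio p)
  have hπ := edgeMeasure_pos V
  induction n generalizing y with
  | zero =>
    simpa [green] using mul_nonneg (hπ y).le (resistanceFrom_nonneg V b y)
  | succ n ih =>
    have hsource : (if y = b then 1 else 0) ≤ edgeMeasure V y / edgeMeasure V b := by
      split_ifs with hy
      · rw [hy, div_self (hπ b).ne']
      · exact (div_pos (hπ y) (hπ b)).le
    have hdown : edgeMeasure V (y - 1) * p (y - 1) = Real.exp (-V (y - 1)) :=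
      edgeMeasure_mul_self (h₀ _) (h₁ _)
    have hup : edgeMeasure V (y + 1) * (1 - p (y + 1)) = Real.exp (-V y) := by
      rw [edgeMeasure_mul_one_sub (h₀ _) (h₁ _), add_sub_cancel_right]
    have hedge : edgeMeasure V y = Real.exp (-V y) + Real.exp (-V (y - 1)) := rfl
    calc green p (n + 1) y
        ≤ (if y = 0 then 1 else 0) +
          edgeMeasure V (y - 1) * (resistanceFrom V b (y - 1) + n / edgeMeasure V b) * p (y - 1) +
          edgeMeasure V (y + 1) * (resistanceFrom V b (y + 1) + n / edgeMeasure V b) *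
            (1 - p (y + 1)) := by
          rw [green_succ]
          have := sub_nonneg.2 (h₁ (y + 1)).le
          have := (h₀ (y - 1)).le
          gcongr <;> exact ih _
      _ = ((if y = 0 then 1 else 0) + Real.exp (-V (y - 1)) * resistanceFrom V b (y - 1) +
          Real.exp (-V y) * resistanceFrom V b (y + 1)) +
          edgeMeasure V y * (n / edgeMeasure V b) := by
          rw [mul_right_comm, hdown, mul_right_comm, hup, hedge]
          ring
      _ ≤ edgeMeasure V y * resistanceFrom V b y + edgeMeasure V y / edgeMeasure V b +
          edgeMeasure V y * (n / edgeMeasure V b) := by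
          rw [resistanceFrom_balance V hb]
          gcongr
      _ = _ := by push_cast; ring

end GreenFunction

section LocalTime

/-- The number of visits of the path `x` to the site `y` before time `n`. -/
def localTime (x : ℕ → ℤ) (n : ℕ) (y : ℤ) : ℕ := {i ∈ Finset.range n | x i = y}.card

/-- The deficit of the scenery `s` with respect to the level `a`. -/
noncomputable def deficit (a : ℝ) (s : ℤ → ℝ) (y : ℤ) : ℝ := max (a - s y) 0

/-- The weights for which the local time up to time `n` of a walk has an integral at least `1` if
the walk visits `-A` or `B`, or accumulates in `(-A, B)` a total amount `η * n` of `D`. -/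
noncomputable def failureWeight (D : ℤ → ℝ) (η : ℝ) (n A B : ℕ) (y : ℤ) : ℝ :=
  if y = -A ∨ y = B then 1 else D y / (η * n)

/-- The sites of the environment `p` between `-A` and `B` trap the walk up to time `n`, in the sense
that the expected integral of `failureWeight` is at most `κ`. -/
def TrapsUntil (p D : ℤ → ℝ) (η κ : ℝ) (n A B : ℕ) : Prop :=
  0 < n ∧ 0 < A ∧ 0 < B ∧
    ∑ y ∈ Finset.Icc (-A : ℤ) B, failureWeight D η n A B y * green p n y ≤ κ

lemma deficit_nonneg (a : ℝ) (s : ℤ → ℝ) (y : ℤ) : 0 ≤ deficit a s y := le_max_right _ _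

lemma failureWeight_nonneg {D : ℤ → ℝ} (hD : ∀ y, 0 ≤ D y) {η : ℝ} (hη : 0 ≤ η) (n A B : ℕ)
    (y : ℤ) : 0 ≤ failureWeight D η n A B y := by
  unfold failureWeight
  split_ifs
  · exact zero_le_one
  · exact div_nonneg (hD y) (by positivity)

lemma sum_mul_localTime (w : ℤ → ℝ) (I : Finset ℤ) (x : ℕ → ℤ) (n : ℕ) :
    ∑ y ∈ I, w y * localTime x n y = ∑ i ∈ Finset.range n with x i ∈ I, w (x i) := by
  simp only [localTime, ← Finset.sum_boole, Finset.mul_sum, mul_ite, mul_one, mul_zero]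
  rw [Finset.sum_comm, Finset.sum_filter]
  simp only [Finset.sum_ite_eq]

lemma mem_Ioo_of_notVisit {x : ℕ → ℤ} (h₀ : x 0 = 0)
    (hstep : ∀ i, x (i + 1) - x i = 1 ∨ x (i + 1) - x i = -1) {n A B : ℕ} (hA : 0 < A) (hB : 0 < B)
    (hx : ∀ i < n, x i ≠ -A ∧ x i ≠ B) : ∀ i < n, x i ∈ Finset.Ioo (-A : ℤ) B := by
  intro i hi
  rw [Finset.mem_Ioo]
  induction i with
  | zero => omega
  | succ i ih => have := ih (by omega); have := hx _ hi; have := hstep i; omega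

lemma one_le_sum_failureWeight {x : ℕ → ℤ} (h₀ : x 0 = 0)
    (hstep : ∀ i, x (i + 1) - x i = 1 ∨ x (i + 1) - x i = -1) {n A B : ℕ} (hn : 0 < n) (hA : 0 < A)
    (hB : 0 < B) {D : ℤ → ℝ} (hD : ∀ y, 0 ≤ D y) {η : ℝ} (hη : 0 < η)
    (hsum : η * n ≤ ∑ i ∈ Finset.range n, D (x i)) :
    1 ≤ ∑ y ∈ Finset.Icc (-A : ℤ) B, failureWeight D η n A B y * localTime x n y := by
  have hw := failureWeight_nonneg hD hη.le n A B
  rw [sum_mul_localTime]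
  by_cases hx : ∀ i < n, x i ≠ -A ∧ x i ≠ B
  · have hmem := mem_Ioo_of_notVisit h₀ hstep hA hB hx
    have hfilter : {i ∈ Finset.range n | x i ∈ Finset.Icc (-A : ℤ) B} = Finset.range n :=
      Finset.filter_true_of_mem fun i hi =>
        Finset.Ioo_subset_Icc_self (hmem i (Finset.mem_range.1 hi))
    have hweight : ∀ i ∈ Finset.range n, failureWeight D η n A B (x i) = D (x i) / (η * n) :=
      fun i hi => if_neg (not_or.2 (hx i (Finset.mem_range.1 hi)))
    rwa [hfilter, Finset.sum_congr rfl hweight, ← Finset.sum_div, one_le_div (by positivity)]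
  · push Not at hx
    obtain ⟨i, hi, hvisit⟩ := hx
    have hend : x i = -A ∨ x i = B := or_iff_not_imp_left.2 hvisit
    have hone : failureWeight D η n A B (x i) = 1 := if_pos hend
    rw [← hone]
    refine Finset.single_le_sum (f := fun i => failureWeight D η n A B (x i))
      (fun j _ => hw (x j)) (Finset.mem_filter.2 ⟨Finset.mem_range.2 hi, ?_⟩)
    rw [Finset.mem_Icc]; omega

lemma sum_failureWeight_mul (D : ℤ → ℝ) (η : ℝ) (n : ℕ) {A B : ℕ} (hA : 0 < A) (g : ℤ → ℝ) :
    ∑ y ∈ Finset.Icc (-A : ℤ) B, failureWeight D η n A B y * g y =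
      g (-A) + g B + (∑ y ∈ Finset.Ioo (-A : ℤ) B, D y * g y) / (η * n) := by
  have hIcc : Finset.Icc (-A : ℤ) B = insert (-A : ℤ) (insert (B : ℤ) (Finset.Ioo (-A : ℤ) B)) := by
    ext y; simp only [Finset.mem_Icc, Finset.mem_insert, Finset.mem_Ioo]; omega
  have hinterior : ∀ y ∈ Finset.Ioo (-A : ℤ) B, failureWeight D η n A B y * g y =
      D y * g y / (η * n) := fun y hy => by
    rw [Finset.mem_Ioo] at hy
    rw [failureWeight, if_neg (by omega), div_mul_eq_mul_div]
  rw [hIcc, Finset.sum_insert (by simp only [Finset.mem_insert, Finset.mem_Ioo]; omega),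
    Finset.sum_insert Finset.right_notMem_Ioo, Finset.sum_congr rfl hinterior, Finset.sum_div,
    failureWeight, failureWeight, if_pos (.inl rfl), if_pos (.inr rfl), one_mul, one_mul, add_assoc]

lemma HasTrap.exists_trapsUntil {p D : ℤ → ℝ} {κ η : ℝ} {m : ℕ} (hm : 0 < m)
    (h : HasTrap (potential (logRatio p)) D κ m) (h₀ : ∀ y, 0 < p y) (h₁ : ∀ y, p y < 1)
    (hD : ∀ y, 0 ≤ D y) (hη : 0 < η) :
    ∃ n ≥ m, ∃ A B, TrapsUntil p D η (3 * (κ + κ / η)) n A B := by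
  obtain ⟨A, B, b, hb, hbB, hA, hends, hmass, hdepth⟩ := h
  set V := potential (logRatio p)
  have hπ := edgeMeasure_pos V
  have hres : 1 ≤ resistance V b := one_le_resistance (potential_zero _) hb
  set n := ⌈resistance V b * edgeMeasure V b⌉₊
  have hn : resistance V b * edgeMeasure V b ≤ n := Nat.le_ceil _
  have hmn : m ≤ n := Nat.cast_le.1 (hdepth.trans hn)
  have hn₀ : (0 : ℝ) < n := Nat.cast_pos.2 (hm.trans_le hmn)
  have hn' : n / edgeMeasure V b ≤ 2 * resistance V b := by
    have : (n : ℝ) < resistance V b * edgeMeasure V b + 1 :=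
      Nat.ceil_lt_add_one (mul_nonneg (by linarith) (hπ b).le)
    have : (1 : ℝ) ≤ m := Nat.one_le_cast.2 hm
    rw [div_le_iff₀ (hπ b)]
    linarith
  have hgreen (y : ℤ) : green p n y ≤ 3 * resistance V b * edgeMeasure V y := by
    refine (green_le h₀ h₁ hb n y).trans ?_
    have := resistanceFrom_le V b y
    nlinarith [hπ y]
  have hκ : 0 ≤ κ := le_trans (by have := hπ (-A); have := hπ B; positivity) hends
  have hinterior : ∑ y ∈ Finset.Ioo (-A : ℤ) B, D y * green p n y ≤ 3 * κ * n :=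
    calc ∑ y ∈ Finset.Ioo (-A : ℤ) B, D y * green p n y
        ≤ ∑ y ∈ Finset.Ioo (-A : ℤ) B, 3 * resistance V b * (D y * edgeMeasure V y) :=
          Finset.sum_le_sum fun y _ =>
            (mul_le_mul_of_nonneg_left (hgreen y) (hD y)).trans_eq (by ring)
      _ ≤ 3 * resistance V b * (κ * edgeMeasure V b) := by rw [← Finset.mul_sum]; gcongr
      _ ≤ 3 * κ * n := by nlinarith
  refine ⟨n, hmn, A, B, hm.trans_le hmn, hA, hb.trans hbB, ?_⟩
  calc ∑ y ∈ Finset.Icc (-A : ℤ) B, failureWeight D η n A B y * green p n y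
      ≤ 3 * (resistance V b * (edgeMeasure V (-A) + edgeMeasure V B)) + 3 * κ * n / (η * n) := by
        rw [sum_failureWeight_mul D η n hA]
        gcongr
        linarith [hgreen (-A), hgreen B]
    _ ≤ 3 * κ + 3 * κ * n / (η * n) := by gcongr
    _ = 3 * (κ + κ / η) := by field_simp

end LocalTime

section QuenchedWalk

lemma measure_eq_zero_of_condProb_eq_zero {Ω : Type*} {m m₀ : MeasurableSpace Ω} {μ : Measure Ω}
    [IsFiniteMeasure μ] (hm : m ≤ m₀) {A : Set Ω} (hA : MeasurableSet A) (h : μ⟦A | m⟧ =ᵐ[μ] 0) :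
    μ A = 0 := by
  have hint := integral_condExp hm (μ := μ) (f := A.indicator fun _ => (1 : ℝ))
  rw [integral_congr_ae h, integral_indicator_const _ hA, smul_eq_mul, mul_one] at hint
  simpa [measureReal_eq_zero_iff] using hint.symm

lemma ae_nonneg_of_condProb {Ω : Type*} {m m₀ : MeasurableSpace Ω} {μ : Measure Ω} {A : Set Ω}
    {f : Ω → ℝ} (h : μ⟦A | m⟧ =ᵐ[μ] f) : ∀ᵐ ω ∂μ, 0 ≤ f ω := by
  have hnonneg : 0 ≤ᵐ[μ] μ⟦A | m⟧ :=
    condExp_nonneg (.of_forall fun ω => indicator_nonneg (fun _ _ => zero_le_one) _)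
  filter_upwards [hnonneg, h] with ω hω heq
  exact hω.trans_eq heq

/-- The event that `X` follows the path `x` between the times `i` and `n`. -/
def pathEvent {Ω : Type*} (X : ℕ → Ω → ℤ) (i n : ℕ) (x : ℕ → ℤ) : Set Ω :=
  ⋂ l ∈ Finset.Icc i n, X l ⁻¹' {x l}

lemma pathEvent_update {Ω : Type*} {X : ℕ → Ω → ℤ} {i n : ℕ} (hin : i ≤ n) (x : ℕ → ℤ)
    (y : ℤ) : pathEvent X i n (Function.update x i y) = X i ⁻¹' {y} ∩ pathEvent X (i + 1) n x := by
  have hne : ∀ l ∈ Finset.Icc (i + 1) n, Function.update x i y l = x l := fun l hl =>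
    Function.update_of_ne (by rw [Finset.mem_Icc] at hl; omega) _ _
  rw [pathEvent, ← Finset.insert_Icc_succ_left_eq_Icc hin, Finset.set_biInter_insert,
    Function.update_self, Order.succ_eq_add_one]
  exact congrArg _ (iInter₂_congr fun l hl => by rw [hne l hl])

variable {Ω : Type*} [MeasurableSpace Ω] {μ : Measure Ω} {E : Ω → ℤ → ℝ} {X : ℕ → Ω → ℤ}

/-- Under `μ`, the process `X` is a nearest-neighbour walk started from `0` in the random
environment `E`; the quenched cylinder probabilities are conditional probabilities given `E`. -/
structure IsQuenchedWalk (E : Ω → ℤ → ℝ) (X : ℕ → Ω → ℤ) (μ : Measure Ω) : Prop where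
  measurable_env : Measurable E
  measurable_walk (i : ℕ) : Measurable (X i)
  ae_zero : ∀ᵐ ω ∂μ, X 0 ω = 0
  condProb_path (n : ℕ) (x : ℕ → ℤ) : x 0 = 0 →
    μ⟦{ω | ∀ i ≤ n, X i ω = x i} | MeasurableSpace.pi.comap E⟧
      =ᵐ[μ] fun ω => ∏ i ∈ Finset.range n, stepProb (E ω (x i)) (x (i + 1) - x i)

/-- The Markov property at time `i`: the walk has quenched law `quenchedLaw (E ω) i` at time `i`,
and makes its later steps with the quenched transition probabilities. -/
def HasPathLawFrom (E : Ω → ℤ → ℝ) (X : ℕ → Ω → ℤ) (μ : Measure Ω) (i : ℕ) : Prop :=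
  ∀ n ≥ i, ∀ x : ℕ → ℤ, μ⟦pathEvent X i n x | MeasurableSpace.pi.comap E⟧
    =ᵐ[μ] fun ω => quenchedLaw (E ω) i (x i) *
      ∏ l ∈ Finset.Ico i n, stepProb (E ω (x l)) (x (l + 1) - x l)

lemma measurableSet_pathEvent (hX : ∀ i, Measurable (X i)) (i n : ℕ) (x : ℕ → ℤ) :
    MeasurableSet (pathEvent X i n x) :=
  Finset.measurableSet_biInter _ fun l _ => hX l (measurableSet_singleton _)

namespace HasPathLawFrom

variable {i : ℕ}

lemma condProb_update (h : HasPathLawFrom E X μ i) {n : ℕ} (hin : i < n) (x : ℕ → ℤ) (y : ℤ) :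
    μ⟦X i ⁻¹' {y} ∩ pathEvent X (i + 1) n x | MeasurableSpace.pi.comap E⟧
      =ᵐ[μ] fun ω => quenchedLaw (E ω) i y * stepProb (E ω y) (x (i + 1) - y) *
        ∏ l ∈ Finset.Ico (i + 1) n, stepProb (E ω (x l)) (x (l + 1) - x l) := by
  have hpath := h n hin.le (Function.update x i y)
  rw [pathEvent_update hin.le] at hpath
  refine hpath.trans (.of_forall fun ω => ?_)
  have hne : ∀ l > i, Function.update x i y l = x l := fun l hl => Function.update_of_ne hl.ne' _ _
  beta_reduce
  rw [Finset.prod_eq_prod_Ico_succ_bot hin, Function.update_self, hne _ i.lt_succ_self, mul_assoc]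
  congr 2
  refine Finset.prod_congr rfl fun l hl => ?_
  rw [Finset.mem_Ico] at hl
  rw [hne l (by omega), hne (l + 1) (by omega)]

variable [IsFiniteMeasure μ]

lemma ae_step (h : HasPathLawFrom E X μ i) (hE : Measurable E) (hX : ∀ i, Measurable (X i)) :
    ∀ᵐ ω ∂μ, X (i + 1) ω - X i ω = 1 ∨ X (i + 1) ω - X i ω = -1 := by
  have hpair (y z : ℤ) (hyz : ¬(z - y = 1 ∨ z - y = -1)) :
      ∀ᵐ ω ∂μ, ω ∉ X i ⁻¹' {y} ∩ X (i + 1) ⁻¹' {z} := by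
    rw [← measure_eq_zero_iff_ae_notMem]
    refine measure_eq_zero_of_condProb_eq_zero hE.comap_le
      ((hX i (measurableSet_singleton _)).inter (hX _ (measurableSet_singleton _))) ?_
    have hpath := h (i + 1) i.le_succ (Function.update (fun _ => z) i y)
    rw [pathEvent_update i.le_succ] at hpath
    push Not at hyz
    simpa [pathEvent, stepProb, hyz, Pi.zero_def] using hpath
  have hall : ∀ᵐ ω ∂μ, ∀ y z, ¬(z - y = 1 ∨ z - y = -1) → ω ∉ X i ⁻¹' {y} ∩ X (i + 1) ⁻¹' {z} := by
    simpa only [ae_all_iff] using hpair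
  filter_upwards [hall] with ω hω
  by_contra hstep
  exact hω _ _ hstep ⟨rfl, rfl⟩

lemma succ (h : HasPathLawFrom E X μ i) (hE : Measurable E) (hX : ∀ i, Measurable (X i)) :
    HasPathLawFrom E X μ (i + 1) := by
  intro n hin x
  set y := x (i + 1)
  set P := pathEvent X (i + 1) n x
  have hP : MeasurableSet P := measurableSet_pathEvent hX _ _ _
  have hsplit : P.indicator (fun _ => (1 : ℝ)) =ᵐ[μ]
      (X i ⁻¹' {y - 1} ∩ P).indicator (fun _ => (1 : ℝ)) +
        (X i ⁻¹' {y + 1} ∩ P).indicator fun _ => (1 : ℝ) := by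
    filter_upwards [h.ae_step hE hX] with ω hω
    by_cases hωP : ω ∈ P
    · have hy : X (i + 1) ω = y := mem_iInter₂.1 hωP _ (Finset.left_mem_Icc.2 hin)
      rw [hy] at hω
      rcases hω with hω | hω
      · simp [hωP, show X i ω = y - 1 by omega]; omega
      · simp [hωP, show X i ω = y + 1 by omega]; omega
    · simp [hωP]
  have hint (z : ℤ) : Integrable ((X i ⁻¹' {z} ∩ P).indicator fun _ => (1 : ℝ)) μ :=
    (integrable_const 1).indicator ((hX i (measurableSet_singleton _)).inter hP)
  refine (condExp_congr_ae hsplit).trans ((condExp_add (hint _) (hint _) _).trans ?_)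
  filter_upwards [h.condProb_update hin x (y - 1), h.condProb_update hin x (y + 1)] with ω hl hr
  have hup : stepProb (E ω (y - 1)) (y - (y - 1)) = E ω (y - 1) := by simp [stepProb]
  have hdown : stepProb (E ω (y + 1)) (y - (y + 1)) = 1 - E ω (y + 1) := by simp [stepProb]
  rw [Pi.add_apply, hl, hr, hup, hdown, quenchedLaw, add_mul]

end HasPathLawFrom

namespace IsQuenchedWalk

lemma hasPathLawFrom_zero (h : IsQuenchedWalk E X μ) : HasPathLawFrom E X μ 0 := by
  intro n _ x
  have hpath : pathEvent X 0 n x = {ω | ∀ i ≤ n, X i ω = x i} := by ext; simp [pathEvent]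
  by_cases hx : x 0 = 0
  · simpa [hpath, quenchedLaw, hx, ← Nat.Ico_zero_eq_range] using h.condProb_path n x hx
  · have hnull : (pathEvent X 0 n x).indicator (fun _ => (1 : ℝ)) =ᵐ[μ] 0 := by
      filter_upwards [h.ae_zero] with ω hω
      refine indicator_of_notMem (fun hωx => hx ?_) _
      rw [hpath] at hωx
      rw [← hωx 0 n.zero_le, hω]
    refine (condExp_congr_ae hnull).trans (.of_forall fun ω => ?_)
    simp only [condExp_zero, quenchedLaw, if_neg hx, zero_mul, Pi.zero_apply]

variable [IsFiniteMeasure μ]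

lemma hasPathLawFrom (h : IsQuenchedWalk E X μ) (i : ℕ) : HasPathLawFrom E X μ i := by
  induction i with
  | zero => exact h.hasPathLawFrom_zero
  | succ i ih => exact ih.succ h.measurable_env h.measurable_walk

lemma ae_step (h : IsQuenchedWalk E X μ) :
    ∀ᵐ ω ∂μ, ∀ i, X (i + 1) ω - X i ω = 1 ∨ X (i + 1) ω - X i ω = -1 :=
  ae_all_iff.2 fun i => (h.hasPathLawFrom i).ae_step h.measurable_env h.measurable_walk

lemma condProb_eq_quenchedLaw (h : IsQuenchedWalk E X μ) (i : ℕ) (y : ℤ) :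
    μ⟦X i ⁻¹' {y} | MeasurableSpace.pi.comap E⟧ =ᵐ[μ] fun ω => quenchedLaw (E ω) i y := by
  simpa [pathEvent] using h.hasPathLawFrom i i le_rfl fun _ => y

lemma ae_quenchedLaw_nonneg (h : IsQuenchedWalk E X μ) :
    ∀ᵐ ω ∂μ, ∀ i y, 0 ≤ quenchedLaw (E ω) i y :=
  ae_all_iff.2 fun i => ae_all_iff.2 fun y => ae_nonneg_of_condProb (h.condProb_eq_quenchedLaw i y)

end IsQuenchedWalk

end QuenchedWalk

section Annealed

variable {Ω : Type*} [MeasurableSpace Ω] {μ : Measure Ω}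

lemma IsQuenchedWalk.measurable_localTime {E : Ω → ℤ → ℝ} {X : ℕ → Ω → ℤ}
    (h : IsQuenchedWalk E X μ) (n : ℕ) (y : ℤ) :
    Measurable fun ω => (localTime (X · ω) n y : ENNReal) := by
  simp only [localTime, ← Finset.sum_boole]
  exact Finset.measurable_sum _ fun i _ =>
    .ite (h.measurable_walk i (measurableSet_singleton y)) measurable_const measurable_const

variable [IsFiniteMeasure μ]

lemma map_restrict_of_condProb {α : Type*} [MeasurableSpace α] {Y : Ω → α} (hY : Measurable Y)
    {A : Set Ω} (hA : MeasurableSet A) {q : α → ℝ} (hq : Measurable q)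
    (hqA : μ⟦A | MeasurableSpace.comap Y inferInstance⟧ =ᵐ[μ] fun ω => q (Y ω)) :
    (μ.restrict A).map Y = (μ.map Y).withDensity fun y => ENNReal.ofReal (q y) := by
  ext T hT
  have hint : Integrable (fun ω => q (Y ω)) μ := integrable_condExp.congr hqA
  have hreal : ∫ ω in Y ⁻¹' T, q (Y ω) ∂μ = μ.real (Y ⁻¹' T ∩ A) := by
    rw [← setIntegral_congr_ae (hY hT) (hqA.mono fun _ hω _ => hω),
      setIntegral_condExp hY.comap_le ((integrable_const 1).indicator hA) ⟨T, hT, rfl⟩,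
      setIntegral_indicator hA, setIntegral_const, smul_eq_mul, mul_one]
  rw [Measure.map_apply hY hT, Measure.restrict_apply (hY hT), withDensity_apply _ hT,
    setLIntegral_map hT hq.ennreal_ofReal hY,
    ← ofReal_integral_eq_lintegral_ofReal hint.integrableOn
      (ae_restrict_of_ae (ae_nonneg_of_condProb hqA)), hreal, ofReal_measureReal]

lemma map_restrict_prodMk {α β γ : Type*} [MeasurableSpace α] [MeasurableSpace β]
    [MeasurableSpace γ] {S : Ω → α} {Y : Ω → β} {Z : Ω → γ} (hS : Measurable S) (hY : Measurable Y)
    (h : IndepFun S (fun ω => (Y ω, Z ω)) μ) {B : Set γ} (hB : MeasurableSet B) :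
    (μ.restrict (Z ⁻¹' B)).map (fun ω => (S ω, Y ω)) =
      (μ.map S).prod ((μ.restrict (Z ⁻¹' B)).map Y) := by
  refine (Measure.prod_eq fun s t hs ht => ?_).symm
  rw [Measure.map_apply (hS.prodMk hY) (hs.prod ht), Measure.restrict_apply
    ((hS.prodMk hY) (hs.prod ht)), Measure.map_apply hS hs, Measure.map_apply hY ht,
    Measure.restrict_apply (hY ht)]
  exact (congrArg μ (by ext; simp [and_assoc])).trans
    (h.measure_inter_preimage_eq_mul _ _ hs (ht.prod hB))

namespace IsQuenchedWalk

variable {E : Ω → ℤ → ℝ} {X : ℕ → Ω → ℤ} {α : Type*} [MeasurableSpace α] {S : Ω → α}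

lemma map_restrict_eq_withDensity (h : IsQuenchedWalk E X μ) (hS : Measurable S)
    (hindep : IndepFun S (fun ω => (E ω, fun i => X i ω)) μ) (i : ℕ) (y : ℤ) :
    (μ.restrict (X i ⁻¹' {y})).map (fun ω => (S ω, E ω)) =
      (μ.map fun ω => (S ω, E ω)).withDensity
        fun z => ENNReal.ofReal (quenchedLaw z.2 i y) := by
  have hEX : IndepFun S (fun ω => (E ω, X i ω)) μ :=
    hindep.comp measurable_id
      (show Measurable fun z : (ℤ → ℝ) × (ℕ → ℤ) => (z.1, z.2 i) by fun_prop)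
  have hy := measurableSet_singleton y
  rw [map_restrict_prodMk hS h.measurable_env hEX hy,
    map_restrict_of_condProb h.measurable_env (h.measurable_walk i hy) (measurable_quenchedLaw i y)
      (h.condProb_eq_quenchedLaw i y), prod_withDensity_right (by fun_prop),
    ← (indepFun_iff_map_prod_eq_prod_map_map hS.aemeasurable h.measurable_env.aemeasurable).1
      (hindep.comp measurable_id measurable_fst)]

lemma lintegral_mul_localTime (h : IsQuenchedWalk E X μ) (hS : Measurable S)
    (hindep : IndepFun S (fun ω => (E ω, fun i => X i ω)) μ) {Φ : α × (ℤ → ℝ) → ENNReal}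
    (hΦ : Measurable Φ) (n : ℕ) (y : ℤ) :
    ∫⁻ ω, Φ (S ω, E ω) * localTime (X · ω) n y ∂μ =
      ∫⁻ ω, Φ (S ω, E ω) * ENNReal.ofReal (green (E ω) n y) ∂μ := by
  have hSE : Measurable fun ω => (S ω, E ω) := hS.prodMk h.measurable_env
  have hy (i : ℕ) : MeasurableSet (X i ⁻¹' {y}) := h.measurable_walk i (measurableSet_singleton y)
  have hΦSE : Measurable fun ω => Φ (S ω, E ω) := hΦ.comp hSE
  have hq (i : ℕ) : Measurable fun z : α × (ℤ → ℝ) => ENNReal.ofReal (quenchedLaw z.2 i y) := by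
    fun_prop
  have hterm (i : ℕ) : ∫⁻ ω, (X i ⁻¹' {y}).indicator (fun ω => Φ (S ω, E ω)) ω ∂μ =
      ∫⁻ ω, Φ (S ω, E ω) * ENNReal.ofReal (quenchedLaw (E ω) i y) ∂μ := by
    rw [lintegral_indicator (hy i), ← lintegral_map hΦ hSE,
      h.map_restrict_eq_withDensity hS hindep, lintegral_withDensity_eq_lintegral_mul _ (hq i) hΦ,
      lintegral_map ((hq i).mul hΦ) hSE]
    simp only [Pi.mul_apply, mul_comm]
  calc ∫⁻ ω, Φ (S ω, E ω) * localTime (X · ω) n y ∂μ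
      = ∫⁻ ω, ∑ i ∈ Finset.range n, (X i ⁻¹' {y}).indicator (fun ω => Φ (S ω, E ω)) ω ∂μ := by
        simp only [localTime, ← Finset.sum_boole, Finset.mul_sum, mul_ite, mul_one, mul_zero,
          indicator, mem_preimage, mem_singleton_iff]
    _ = ∑ i ∈ Finset.range n,
          ∫⁻ ω, Φ (S ω, E ω) * ENNReal.ofReal (quenchedLaw (E ω) i y) ∂μ := by
        rw [lintegral_finsetSum _ fun i _ => hΦSE.indicator (hy i)]
        exact Finset.sum_congr rfl fun i _ => hterm i
    _ = ∫⁻ ω, ∑ i ∈ Finset.range n, Φ (S ω, E ω) * ENNReal.ofReal (quenchedLaw (E ω) i y) ∂μ :=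
        (lintegral_finsetSum _ fun i _ => hΦSE.mul ((hq i).comp hSE)).symm
    _ = _ := by
        refine lintegral_congr_ae ?_
        filter_upwards [h.ae_quenchedLaw_nonneg] with ω hω
        rw [← Finset.mul_sum, green, ENNReal.ofReal_sum_of_nonneg fun i _ => hω i y]

lemma lintegral_sum_mul_localTime (h : IsQuenchedWalk E X μ) (hS : Measurable S)
    (hindep : IndepFun S (fun ω => (E ω, fun i => X i ω)) μ) {Φ : ℤ → α × (ℤ → ℝ) → ENNReal}
    (hΦ : ∀ y, Measurable (Φ y)) (I : Finset ℤ) (n : ℕ) :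
    ∫⁻ ω, ∑ y ∈ I, Φ y (S ω, E ω) * localTime (X · ω) n y ∂μ =
      ∫⁻ ω, ∑ y ∈ I, Φ y (S ω, E ω) * ENNReal.ofReal (green (E ω) n y) ∂μ := by
  have hSE : Measurable fun ω => (S ω, E ω) := hS.prodMk h.measurable_env
  have hleft (y : ℤ) : Measurable fun ω => Φ y (S ω, E ω) * localTime (X · ω) n y :=
    ((hΦ y).comp hSE).mul (h.measurable_localTime n y)
  have hright (y : ℤ) : Measurable fun ω =>
      Φ y (S ω, E ω) * ENNReal.ofReal (green (E ω) n y) :=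
    ((hΦ y).comp hSE).mul ((measurable_green n y).comp h.measurable_env).ennreal_ofReal
  rw [lintegral_finsetSum _ fun y _ => hleft y, lintegral_finsetSum _ fun y _ => hright y]
  exact Finset.sum_congr rfl fun y _ => h.lintegral_mul_localTime hS hindep (hΦ y) n y

lemma measure_one_le_sum_mul_localTime_le (h : IsQuenchedWalk E X μ) (hS : Measurable S)
    (hindep : IndepFun S (fun ω => (E ω, fun i => X i ω)) μ) {w : ℤ → α → ℝ}
    (hw : ∀ y, Measurable (w y)) (hw₀ : ∀ y s, 0 ≤ w y s) (I : Finset ℤ) (n : ℕ) {κ : ℝ}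
    {T : Set (α × (ℤ → ℝ))} (hT : MeasurableSet T)
    (hgreen : ∀ z ∈ T, ∑ y ∈ I, w y z.1 * green z.2 n y ≤ κ) :
    μ {ω | (S ω, E ω) ∈ T ∧ 1 ≤ ∑ y ∈ I, w y (S ω) * localTime (X · ω) n y} ≤
      ENNReal.ofReal κ * μ {ω | (S ω, E ω) ∈ T} := by
  have hSE : Measurable fun ω => (S ω, E ω) := hS.prodMk h.measurable_env
  set Φ : ℤ → α × (ℤ → ℝ) → ENNReal := fun y => T.indicator fun z => ENNReal.ofReal (w y z.1)
  have hΦ (y : ℤ) : Measurable (Φ y) :=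
    Measurable.indicator ((hw y).comp measurable_fst).ennreal_ofReal hT
  calc μ {ω | (S ω, E ω) ∈ T ∧ 1 ≤ ∑ y ∈ I, w y (S ω) * localTime (X · ω) n y}
      ≤ μ {ω | 1 ≤ ∑ y ∈ I, Φ y (S ω, E ω) * localTime (X · ω) n y} := by
        refine measure_mono fun ω hω => ?_
        have hle := ENNReal.ofReal_le_ofReal hω.2
        rw [ENNReal.ofReal_one, ENNReal.ofReal_sum_of_nonneg fun y _ =>
          mul_nonneg (hw₀ y _) (Nat.cast_nonneg _)] at hle
        simpa [Φ, indicator_of_mem hω.1, ENNReal.ofReal_mul, hw₀] using hle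
    _ ≤ ∫⁻ ω, ∑ y ∈ I, Φ y (S ω, E ω) * localTime (X · ω) n y ∂μ := by
        simpa using mul_meas_ge_le_lintegral (Finset.measurable_sum I fun y _ =>
          ((hΦ y).comp hSE).mul (h.measurable_localTime n y)) 1
    _ = ∫⁻ ω, ∑ y ∈ I, Φ y (S ω, E ω) * ENNReal.ofReal (green (E ω) n y) ∂μ :=
        h.lintegral_sum_mul_localTime hS hindep hΦ I n
    _ ≤ ∫⁻ ω, {ω | (S ω, E ω) ∈ T}.indicator (fun _ => ENNReal.ofReal κ) ω ∂μ := by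
        refine lintegral_mono_ae ?_
        filter_upwards [h.ae_quenchedLaw_nonneg] with ω hω
        by_cases hωT : (S ω, E ω) ∈ T
        · have hg (y : ℤ) : 0 ≤ green (E ω) n y := Finset.sum_nonneg fun i _ => hω i y
          have hle := ENNReal.ofReal_le_ofReal (hgreen _ hωT)
          rw [ENNReal.ofReal_sum_of_nonneg fun y _ => mul_nonneg (hw₀ y _) (hg y)] at hle
          simpa [Φ, hωT, ENNReal.ofReal_mul, hw₀] using hle
        · simp [Φ, hωT]
    _ = _ := lintegral_indicator_const (hSE hT) _

end IsQuenchedWalk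

end Annealed

section Frequently

variable {Ω : Type*} [MeasurableSpace Ω] {μ : Measure Ω}

lemma measure_forall_mem_imp_le {ι α : Type*} [Countable ι] [Nonempty ι] [MeasurableSpace α]
    {Z : Ω → α} (hZ : Measurable Z) {G : ι → Set α} (hG : ∀ i, MeasurableSet (G i))
    {bad : ι → Set Ω} {c : ENNReal} (hcover : ∀ᵐ ω ∂μ, ∃ i, Z ω ∈ G i)
    (hbad : ∀ i T, MeasurableSet T → T ⊆ G i → μ (Z ⁻¹' T ∩ bad i) ≤ c * μ (Z ⁻¹' T)) :
    μ {ω | ∀ i, Z ω ∈ G i → ω ∈ bad i} ≤ c * μ univ := by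
  obtain ⟨f, hf⟩ := exists_surjective_nat ι
  set T : ℕ → Set α := disjointed fun k => G (f k)
  have hT (k : ℕ) : MeasurableSet (T k) := .disjointed (fun k => hG (f k)) k
  have hTG (k : ℕ) : T k ⊆ G (f k) := disjointed_subset _ k
  have hdisj : Pairwise (Function.onFun Disjoint fun k => Z ⁻¹' T k) := fun i j hij =>
    (disjoint_disjointed _ hij).preimage Z
  have hsub : ∀ᵐ ω ∂μ, (∀ i, Z ω ∈ G i → ω ∈ bad i) → ω ∈ ⋃ k, Z ⁻¹' T k ∩ bad (f k) := by
    filter_upwards [hcover] with ω ⟨i, hi⟩ hω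
    obtain ⟨k, rfl⟩ := hf i
    have hmem : Z ω ∈ ⋃ k, T k := by rw [iUnion_disjointed]; exact mem_iUnion_of_mem k hi
    obtain ⟨l, hl⟩ := mem_iUnion.1 hmem
    exact mem_iUnion_of_mem l ⟨hl, hω _ (hTG l hl)⟩
  calc μ {ω | ∀ i, Z ω ∈ G i → ω ∈ bad i}
      ≤ μ (⋃ k, Z ⁻¹' T k ∩ bad (f k)) := measure_mono_ae hsub
    _ ≤ ∑' k, μ (Z ⁻¹' T k ∩ bad (f k)) := measure_iUnion_le _
    _ ≤ ∑' k, c * μ (Z ⁻¹' T k) := ENNReal.tsum_le_tsum fun k => hbad _ _ (hT k) (hTG k)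
    _ = c * μ (⋃ k, Z ⁻¹' T k) := by
        rw [ENNReal.tsum_mul_left, measure_iUnion hdisj fun k => hZ (hT k)]
    _ ≤ c * μ univ := by gcongr; exact subset_univ _

lemma measurable_deficit (a : ℝ) (y : ℤ) : Measurable fun s : ℤ → ℝ => deficit a s y :=
  (measurable_const.sub (measurable_pi_apply y)).max measurable_const

lemma measurable_failureWeight_deficit (a η : ℝ) (n A B : ℕ) (y : ℤ) :
    Measurable fun s : ℤ → ℝ => failureWeight (deficit a s) η n A B y :=
  .ite (.const _) measurable_const ((measurable_deficit a y).div_const _)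

lemma measurableSet_trapsUntil (a η κ : ℝ) (n A B : ℕ) :
    MeasurableSet {z : (ℤ → ℝ) × (ℤ → ℝ) | TrapsUntil z.2 (deficit a z.1) η κ n A B} := by
  have hsum : Measurable fun z : (ℤ → ℝ) × (ℤ → ℝ) =>
      ∑ y ∈ Finset.Icc (-A : ℤ) B, failureWeight (deficit a z.1) η n A B y * green z.2 n y :=
    Finset.measurable_sum _ fun y _ =>
      ((measurable_failureWeight_deficit a η n A B y).comp measurable_fst).mul
        ((measurable_green n y).comp measurable_snd)
  simp only [TrapsUntil, ofPred_and]
  exact (MeasurableSet.const _).inter ((MeasurableSet.const _).inter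
    ((MeasurableSet.const _).inter (measurableSet_le hsum measurable_const)))

lemma mul_le_sum_deficit {a η : ℝ} {s : ℤ → ℝ} {x : ℕ → ℤ} {n : ℕ}
    (h : ∑ i ∈ Finset.range n, s (x i) < (a - η) * n) :
    η * n ≤ ∑ i ∈ Finset.range n, deficit a s (x i) := by
  have hle : ∑ i ∈ Finset.range n, (a - s (x i)) ≤ ∑ i ∈ Finset.range n, deficit a s (x i) :=
    Finset.sum_le_sum fun i _ => le_max_left _ _
  rw [Finset.sum_sub_distrib, Finset.sum_const, Finset.card_range, nsmul_eq_mul] at hle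
  linarith

variable [IsProbabilityMeasure μ] {E S : Ω → ℤ → ℝ} {X : ℕ → Ω → ℤ} {a η : ℝ}

namespace IsQuenchedWalk

lemma measure_sum_lt_inter_le (h : IsQuenchedWalk E X μ) (hS : Measurable S)
    (hindep : IndepFun S (fun ω => (E ω, fun i => X i ω)) μ) (hη : 0 < η) {κ : ℝ} {n A B : ℕ}
    {T : Set ((ℤ → ℝ) × (ℤ → ℝ))} (hT : MeasurableSet T)
    (htraps : ∀ z ∈ T, TrapsUntil z.2 (deficit a z.1) η κ n A B) :
    μ ((fun ω => (S ω, E ω)) ⁻¹' T ∩ {ω | ∑ i ∈ Finset.range n, S ω (X i ω) < (a - η) * n}) ≤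
      ENNReal.ofReal κ * μ ((fun ω => (S ω, E ω)) ⁻¹' T) := by
  refine (measure_mono_ae ?_).trans (h.measure_one_le_sum_mul_localTime_le hS hindep
    (measurable_failureWeight_deficit a η n A B)
    (fun y s => failureWeight_nonneg (deficit_nonneg a s) hη.le n A B y) (Finset.Icc (-A) B) n hT
    fun z hz => (htraps z hz).2.2.2)
  filter_upwards [h.ae_zero, h.ae_step] with ω h₀ hstep ⟨hωT, hω⟩
  obtain ⟨hn, hA, hB, -⟩ := htraps _ hωT
  exact ⟨hωT, one_le_sum_failureWeight h₀ hstep hn hA hB (deficit_nonneg a _) hη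
    (mul_le_sum_deficit hω)⟩

lemma measure_forall_sum_lt_le (h : IsQuenchedWalk E X μ) (hS : Measurable S)
    (hindep : IndepFun S (fun ω => (E ω, fun i => X i ω)) μ) (hη : 0 < η) {κ : ℝ} {m : ℕ}
    (htraps : ∀ᵐ ω ∂μ, ∃ n ≥ m, ∃ A B, TrapsUntil (E ω) (deficit a (S ω)) η κ n A B) :
    μ {ω | ∀ n ≥ m, ∑ i ∈ Finset.range n, S ω (X i ω) < (a - η) * n} ≤ ENNReal.ofReal κ := by
  set G : ℕ × ℕ × ℕ → Set ((ℤ → ℝ) × (ℤ → ℝ)) := fun k =>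
    {z | m ≤ k.1 ∧ TrapsUntil z.2 (deficit a z.1) η κ k.1 k.2.1 k.2.2}
  have hcover : ∀ᵐ ω ∂μ, ∃ k, (S ω, E ω) ∈ G k := htraps.mono fun ω ⟨n, hn, A, B, h⟩ =>
    ⟨(n, A, B), hn, h⟩
  refine (measure_mono ?_).trans ((measure_forall_mem_imp_le (hS.prodMk h.measurable_env)
    (fun k => (MeasurableSet.const _).inter (measurableSet_trapsUntil a η κ _ _ _)) hcover
    fun k T hT hTG => h.measure_sum_lt_inter_le hS hindep hη hT fun z hz => (hTG hz).2).trans_eq ?_)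
  · exact fun ω hω k hk => hω k.1 hk.1
  · rw [measure_univ, mul_one]

theorem ae_frequently_le_sum (h : IsQuenchedWalk E X μ) (hS : Measurable S)
    (hindep : IndepFun S (fun ω => (E ω, fun i => X i ω)) μ) (hη : 0 < η)
    (htraps : ∀ κ > 0, ∀ m > 0, ∀ᵐ ω ∂μ,
      ∃ n ≥ m, ∃ A B, TrapsUntil (E ω) (deficit a (S ω)) η κ n A B) :
    ∀ᵐ ω ∂μ, ∃ᶠ n : ℕ in atTop, (a - η) * n ≤ ∑ i ∈ Finset.range n, S ω (X i ω) := by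
  have hex : ∀ m : ℕ, ∀ᵐ ω ∂μ, ∃ n ≥ m + 1,
      (a - η) * n ≤ ∑ i ∈ Finset.range n, S ω (X i ω) := fun m => by
    have hnull : μ {ω | ∀ n ≥ m + 1, ∑ i ∈ Finset.range n, S ω (X i ω) < (a - η) * n} = 0 :=
      nonpos_iff_eq_zero.1 <| ENNReal.le_of_forall_pos_le_add fun κ hκ _ => by
        simpa using h.measure_forall_sum_lt_le hS hindep hη (htraps κ hκ (m + 1) m.succ_pos)
    filter_upwards [measure_eq_zero_iff_ae_notMem.1 hnull] with ω hω
    simpa using hω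
  filter_upwards [ae_all_iff.2 hex] with ω hω
  exact frequently_atTop.2 fun m => (hω m).imp fun n hn => ⟨m.le_succ.trans hn.1, hn.2⟩

end IsQuenchedWalk

end Frequently

section IID

/-- A family of i.i.d. real random variables indexed by `ℤ`. -/
structure IsIID {Ω : Type*} [MeasurableSpace Ω] (Y : ℤ → Ω → ℝ) (μ : Measure Ω) : Prop where
  measurable (x : ℤ) : Measurable (Y x)
  iIndepFun : iIndepFun Y μ
  identDistrib (x : ℤ) : IdentDistrib (Y x) (Y 0) μ μ

lemma preimage_pi_eq_biInter {ι Ω β : Type*} (f : ι → Ω → β) (s : Finset ι) (t : ι → Set β) :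
    (fun ω i => f i ω) ⁻¹' (s : Set ι).pi t = ⋂ i ∈ s, f i ⁻¹' t i := by
  ext; simp

variable {Ω : Type*} [MeasurableSpace Ω] {μ : Measure Ω}

lemma iIndepFun_sumElim {ι κ β : Type*} [MeasurableSpace β] {f : ι → Ω → β} {g : κ → Ω → β}
    (hf : iIndepFun f μ) (hg : iIndepFun g μ)
    (hfg : IndepFun (fun ω i => f i ω) (fun ω j => g j ω) μ) :
    iIndepFun (m := fun _ : ι ⊕ κ => ‹MeasurableSpace β›) (Sum.elim f g) μ := by
  rw [iIndepFun_iff_measure_inter_preimage_eq_mul]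
  intro s t ht
  have htl : ∀ i ∈ s.toLeft, MeasurableSet (t (.inl i)) := fun i hi => ht _ (Finset.mem_toLeft.1 hi)
  have htr : ∀ j ∈ s.toRight, MeasurableSet (t (.inr j)) := fun j hj =>
    ht _ (Finset.mem_toRight.1 hj)
  have hsplit : ⋂ k ∈ s, Sum.elim f g k ⁻¹' t k =
      (fun ω i => f i ω) ⁻¹' (s.toLeft : Set ι).pi (fun i => t (.inl i)) ∩
        (fun ω j => g j ω) ⁻¹' (s.toRight : Set κ).pi (fun j => t (.inr j)) := by
    ext ω
    simp only [mem_iInter, mem_preimage, mem_inter_iff, Set.mem_pi, Finset.mem_coe, Sum.forall,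
      Finset.mem_toLeft, Finset.mem_toRight, Sum.elim_inl, Sum.elim_inr]
  rw [hsplit, hfg.measure_inter_preimage_eq_mul _ _
      (.pi s.toLeft.countable_toSet htl) (.pi s.toRight.countable_toSet htr),
    preimage_pi_eq_biInter, preimage_pi_eq_biInter,
    hf.measure_inter_preimage_eq_mul _ htl, hg.measure_inter_preimage_eq_mul _ htr,
    Finset.prod_sum_eq_prod_toLeft_mul_prod_toRight]
  rfl

namespace IsIID

variable {Y Z : ℤ → Ω → ℝ}

lemma comp (h : IsIID Y μ) {f : ℝ → ℝ} (hf : Measurable f) : IsIID (fun x ω => f (Y x ω)) μ where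
  measurable x := hf.comp (h.measurable x)
  iIndepFun := h.iIndepFun.comp (fun _ => f) fun _ => hf
  identDistrib x := (h.identDistrib x).comp hf

lemma map_sumElim_eq_jointLaw (hY : IsIID Y μ) (hZ : IsIID Z μ)
    (h : IndepFun (fun ω x => Y x ω) (fun ω x => Z x ω) μ) :
    μ.map (fun ω k => Sum.elim Y Z k ω) = jointLaw (μ.map (Y 0)) (μ.map (Z 0)) := by
  have hmeas : ∀ k, Measurable (Sum.elim Y Z k) := Sum.forall.2 ⟨hY.measurable, hZ.measurable⟩
  rw [(iIndepFun_sumElim hY.iIndepFun hZ.iIndepFun h).map_fun_eq_infinitePi_map hmeas]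
  refine congrArg Measure.infinitePi (funext fun k => ?_)
  cases k with
  | inl x => exact (hY.identDistrib x).map_eq
  | inr x => exact (hZ.identDistrib x).map_eq

end IsIID

end IID

section Assembly

variable {Ω : Type*} [MeasurableSpace Ω] {μ : Measure Ω}

lemma abs_log_one_sub_div_le {δ p : ℝ} (hδ : 0 < δ) (h₁ : δ ≤ p) (h₂ : p ≤ 1 - δ) :
    |Real.log ((1 - p) / p)| ≤ Real.log ((1 - δ) / δ) := by
  have hp : 0 < p := hδ.trans_le h₁
  have hp' : 0 < 1 - p := by linarith
  have hδ' : 0 < 1 - δ := hp.trans_le h₂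
  rw [abs_le']
  constructor
  · gcongr
  · rw [← Real.log_inv, inv_div]
    gcongr
    linarith

lemma stepLaw_map_log {p : Ω → ℝ} (hp : AEMeasurable p μ) {δ : ℝ}
    (hδ : 0 < δ) (hell : ∀ᵐ ω ∂μ, δ ≤ p ω ∧ p ω ≤ 1 - δ)
    (hmean : ∫ ω, Real.log ((1 - p ω) / p ω) ∂μ = 0)
    (hvar : 0 < Var[fun ω => Real.log ((1 - p ω) / p ω); μ]) :
    StepLaw (μ.map fun ω => Real.log ((1 - p ω) / p ω)) (Real.log ((1 - δ) / δ)) where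
  bdd := by
    rw [ae_map_iff (by fun_prop) (measurableSet_le (by fun_prop) (by fun_prop))]
    exact hell.mono fun ω hω => abs_log_one_sub_div_le hδ hω.1 hω.2
  integral_eq_zero := by rwa [integral_map (by fun_prop) (by fun_prop)]
  variance_pos := by rwa [variance_map aemeasurable_id (by fun_prop)]

lemma isCoboundedUnder_le_ae [NeZero μ] (ξ : Ω → ℝ) : IsCoboundedUnder (· ≤ ·) (ae μ) ξ := by
  suffices h : ∃ n : ℕ, ∃ᶠ ω in ae μ, -(n : ℝ) ≤ ξ ω from
    h.elim fun n hn => .of_frequently_ge hn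
  by_contra! h
  obtain ⟨ω, hω⟩ := (ae_all_iff.2 h).exists
  obtain ⟨n, hn⟩ := exists_nat_gt (-ξ ω)
  linarith [hω n]

lemma real_le_pos_of_lt_essSup [IsFiniteMeasure μ] [NeZero μ] {ξ : Ω → ℝ} {b : ℝ}
    (hb : b < essSup ξ μ) : 0 < μ.real {ω | b ≤ ξ ω} := by
  have hfreq := frequently_ae_iff.1 (frequently_lt_of_lt_limsup (isCoboundedUnder_le_ae ξ) hb)
  exact (ENNReal.toReal_pos hfreq (measure_ne_top _ _)).trans_le
    (measureReal_mono fun _ (hω : b < ξ _) => hω.le)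

lemma summable_real_exp_lt_sub [IsFiniteMeasure μ] {ξ : Ω → ℝ} {ε lam₀ : ℝ} (hε : 0 < ε)
    (htail : ∀ lam ≥ lam₀, μ.real {ω | lam < max (-ξ ω) 0} ≤ 1 / Real.log lam ^ (2 + ε)) (b : ℝ) :
    Summable fun j : ℕ => μ.real {ω | Real.exp ((j : ℝ) ^ (2 / (4 + ε))) < b - ξ ω} := by
  have hγ : 0 < 2 / (4 + ε) := by positivity
  have hbound : Summable fun j : ℕ =>
      2 ^ (2 + ε) * (1 / (j : ℝ) ^ (2 / (4 + ε) * (2 + ε))) := by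
    refine .mul_left _ (Real.summable_one_div_nat_rpow.2 ?_)
    rw [div_mul_eq_mul_div, lt_div_iff₀ (by positivity)]
    linarith
  have hexp : Tendsto (fun j : ℕ => Real.exp ((j : ℝ) ^ (2 / (4 + ε)) / 2)) atTop atTop :=
    Real.tendsto_exp_atTop.comp <|
      ((tendsto_rpow_atTop hγ).comp tendsto_natCast_atTop_atTop).atTop_div_const two_pos
  refine hbound.of_norm_bounded_eventually_nat ?_
  filter_upwards [hexp.eventually_ge_atTop (1 + |b|), hexp.eventually_ge_atTop lam₀,
    eventually_gt_atTop 0] with j hbj hlam hj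
  set t : ℝ := (j : ℝ) ^ (2 / (4 + ε)) with ht
  have ht₀ : 0 < t := by positivity
  have hsub : {ω | Real.exp t < b - ξ ω} ⊆ {ω | Real.exp (t / 2) < max (-ξ ω) 0} := by
    intro ω (hω : Real.exp t < b - ξ ω)
    have hsq : Real.exp (t / 2) * Real.exp (t / 2) = Real.exp t := by
      rw [← Real.exp_add, add_halves]
    have hmul : (1 + |b|) * Real.exp (t / 2) ≤ Real.exp t := by rw [← hsq]; gcongr
    have hone : |b| * 1 ≤ |b| * Real.exp (t / 2) := by gcongr; linarith [abs_nonneg b]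
    have hlt : Real.exp (t / 2) < -ξ ω := by linarith [le_abs_self b]
    exact lt_max_of_lt_left hlt
  rw [Real.norm_of_nonneg measureReal_nonneg]
  calc μ.real {ω | Real.exp t < b - ξ ω} ≤ μ.real {ω | Real.exp (t / 2) < max (-ξ ω) 0} :=
        measureReal_mono hsub
    _ ≤ 1 / (t / 2) ^ (2 + ε) := by simpa only [Real.log_exp] using htail _ hlam
    _ = 2 ^ (2 + ε) * (1 / (j : ℝ) ^ (2 / (4 + ε) * (2 + ε))) := by
        rw [Real.div_rpow ht₀.le zero_le_two, Real.rpow_mul j.cast_nonneg, ← ht, one_div_div,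
          mul_one_div]

lemma ae_exists_trapsUntil [IsProbabilityMeasure μ] {p s : ℤ → Ω → ℝ} (hp : IsIID p μ)
    (hs : IsIID s μ) (hsp : IndepFun (fun ω x => s x ω) (fun ω x => p x ω) μ) {c : ℝ}
    (hstep : StepLaw (μ.map fun ω => Real.log ((1 - p 0 ω) / p 0 ω)) c)
    (hp₀₁ : ∀ᵐ ω ∂μ, ∀ y, 0 < p y ω ∧ p y ω < 1) {γ : ℝ} (hγ₀ : 0 < γ) (hγ : γ < 1 / 2) {b : ℝ}
    (hb : 0 < μ.real {ω | b ≤ s 0 ω})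
    (hsum : Summable fun j : ℕ => μ.real {ω | Real.exp ((j : ℝ) ^ γ) < b - s 0 ω})
    {η κ : ℝ} (hη : 0 < η) (hκ : 0 < κ) {m : ℕ} (hm : 0 < m) :
    ∀ᵐ ω ∂μ, ∃ n ≥ m, ∃ A B, TrapsUntil (p · ω) (deficit b (s · ω)) η κ n A B := by
  have hlog : Measurable fun q : ℝ => Real.log ((1 - q) / q) := by fun_prop
  have hmax : Measurable fun q : ℝ => max (b - q) 0 := by fun_prop
  have hV := hp.comp hlog
  have hD := hs.comp hmax
  have hlaw := hV.map_sumElim_eq_jointLaw hD (hsp.symm.comp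
    (φ := fun q x => Real.log ((1 - q x) / q x)) (ψ := fun q x => max (b - q x) 0)
    (by fun_prop) (by fun_prop))
  have := Measure.isProbabilityMeasure_map (hV.measurable 0).aemeasurable (μ := μ)
  have := Measure.isProbabilityMeasure_map (hD.measurable 0).aemeasurable (μ := μ)
  have hκ' : 0 < κ / 3 / (1 + 1 / η) := by positivity
  have htrap := ae_hasTrap (ρ := μ.map fun ω => max (b - s 0 ω) 0) hstep hγ₀ hγ ?_ ?_ ?_ hκ' m
  · rw [← hlaw] at htrap
    have hmeas : Measurable fun ω k => Sum.elim (fun x ω => Real.log ((1 - p x ω) / p x ω))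
        (fun x ω => max (b - s x ω) 0) k ω :=
      measurable_pi_iff.2 (Sum.forall.2 ⟨hV.measurable, hD.measurable⟩)
    have hκeq : 3 * (κ / 3 / (1 + 1 / η) + κ / 3 / (1 + 1 / η) / η) = κ := by field_simp
    filter_upwards [ae_of_ae_map hmeas.aemeasurable htrap, hp₀₁] with ω hω hp
    rw [← hκeq]
    exact HasTrap.exists_trapsUntil (p := (p · ω)) hm hω (fun y => (hp y).1) (fun y => (hp y).2)
      (deficit_nonneg _ _) hη
  · rw [map_measureReal_apply (hD.measurable 0) measurableSet_Iic]
    simpa [preimage] using hb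
  · refine hsum.congr fun j => ?_
    rw [map_measureReal_apply (hD.measurable 0) measurableSet_Ioi]
    simp [preimage, (Real.exp_pos _).not_gt]
  · exact (ae_map_iff (hD.measurable 0).aemeasurable measurableSet_Ici).2
      (.of_forall fun ω => le_max_right _ _)

theorem ae_frequently_sub_mul_le_sum [IsProbabilityMeasure μ] {p s : ℤ → Ω → ℝ} {X : ℕ → Ω → ℤ}
    (hp : IsIID p μ) (hs : IsIID s μ) (hX : IsQuenchedWalk (fun ω x => p x ω) X μ)
    (hindep : IndepFun (fun ω x => s x ω) (fun ω => (fun x => p x ω, fun i => X i ω)) μ) {c : ℝ}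
    (hstep : StepLaw (μ.map fun ω => Real.log ((1 - p 0 ω) / p 0 ω)) c)
    (hp₀₁ : ∀ᵐ ω ∂μ, ∀ y, 0 < p y ω ∧ p y ω < 1) {ε lam₀ : ℝ} (hε : 0 < ε)
    (htail : ∀ lam ≥ lam₀, μ.real {ω | lam < max (-s 0 ω) 0} ≤ 1 / Real.log lam ^ (2 + ε))
    {b η : ℝ} (hb : b < essSup (s 0) μ) (hη : 0 < η) :
    ∀ᵐ ω ∂μ, ∃ᶠ n : ℕ in atTop, (b - η) * n ≤ ∑ i ∈ Finset.range n, s (X i ω) ω := by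
  have hγ : 2 / (4 + ε) < 1 / 2 := by rw [div_lt_div_iff₀] <;> linarith
  have hsp : IndepFun (fun ω x => s x ω) (fun ω x => p x ω) μ :=
    hindep.comp measurable_id measurable_fst
  exact hX.ae_frequently_le_sum (measurable_pi_lambda _ hs.measurable) hindep hη fun κ hκ m hm =>
    ae_exists_trapsUntil hp hs hsp hstep hp₀₁ (by positivity) hγ (real_le_pos_of_lt_essSup hb)
      (summable_real_exp_lt_sub hε htail b) hη hκ hm

lemma tendsto_mul_succ_div (c : ℝ) :
    Tendsto (fun n : ℕ => c * (n + 1 : ℕ) / n) atTop (nhds c) := by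
  have h := (tendsto_const_nhds (x := c)).add (tendsto_one_div_atTop_nhds_zero_nat.const_mul c)
  rw [mul_zero, add_zero] at h
  refine h.congr' ?_
  filter_upwards [eventually_ne_atTop 0] with n hn
  push_cast
  field_simp

lemma limsup_succ_div_eq {s : ℕ → ℝ} {a : ℝ} (hle : ∀ n : ℕ, s n ≤ a * n)
    (hfreq : ∀ j : ℕ, ∃ᶠ n : ℕ in atTop, (a - 1 / (j + 1)) * n ≤ s n) :
    limsup (fun n : ℕ => s (n + 1) / n) atTop = a := by
  have hupper : (fun n : ℕ => s (n + 1) / n) ≤ᶠ[atTop] fun n => a * (n + 1 : ℕ) / n :=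
    .of_forall fun n => div_le_div_of_nonneg_right (hle _) n.cast_nonneg
  have hbdd := (tendsto_mul_succ_div a).isBoundedUnder_le.mono_le hupper
  have hlower : ∀ b < a, ∃ᶠ n : ℕ in atTop, b ≤ s (n + 1) / n := by
    intro b hb
    obtain ⟨j, hj⟩ := exists_nat_one_div_lt (sub_pos.2 hb)
    have hlim := (tendsto_mul_succ_div (a - 1 / (j + 1))).eventually_const_le
      (show b < a - 1 / (j + 1) by linarith)
    have hshift : ∃ᶠ n : ℕ in atTop, (a - 1 / (j + 1)) * (n + 1 : ℕ) ≤ s (n + 1) := by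
      have := hfreq j
      rwa [← map_add_atTop_eq_nat 1] at this
    exact (hshift.and_eventually hlim).mono fun n ⟨hn, hbn⟩ =>
      hbn.trans (div_le_div_of_nonneg_right hn n.cast_nonneg)
  have hcobdd := IsCoboundedUnder.of_frequently_ge (hlower (a - 1) (sub_one_lt a))
  refine le_antisymm ?_ (le_of_forall_lt_imp_le_of_dense fun b hb =>
    le_limsup_of_frequently_le (hlower b hb) hbdd)
  exact (limsup_le_limsup hupper hcobdd (tendsto_mul_succ_div a).isBoundedUnder_le).trans_eq
    (tendsto_mul_succ_div a).limsup_eq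

end Assembly

end Sinai

/-- Theorem 1.1 (i): Sinai's walk in i.i.d. random scenery. If
`a := ess sup ξ₀ < ∞` and `Q{ξ₀⁻ > λ} ≤ 1/(log λ)^{2+ε}` for all large `λ`, then
`ℙ⊗Q`-almost surely `limsup_{n→∞} Z_n/n = a`, where `Z_n = ∑_{i=0}^n ξ(X_i)`. -/
theorem stmt0 {Ω : Type*} [MeasurableSpace Ω] (μ : Measure Ω) [IsProbabilityMeasure μ]
    -- the i.i.d. environment
    (env : ℤ → Ω → ℝ) (henv_meas : ∀ i, Measurable (env i))
    (henv_indep : iIndepFun (m := fun _ : ℤ => (inferInstance : MeasurableSpace ℝ)) env μ)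
    (henv_ident : ∀ i, IdentDistrib (env i) (env 0) μ μ)
    (δ : ℝ) (hδ0 : 0 < δ) (hδ1 : δ < 1 / 2)
    (henv_ell : ∀ i, ∀ᵐ ω ∂μ, δ ≤ env i ω ∧ env i ω ≤ 1 - δ)
    (henv_mean : ∫ ω, Real.log ((1 - env 0 ω) / env 0 ω) ∂μ = 0)
    (henv_var : 0 < variance (fun ω => Real.log ((1 - env 0 ω) / env 0 ω)) μ)
    -- Sinai's walk: a nearest-neighbour Markov chain in the environment `env`,
    -- characterized by its quenched cylinder probabilities given `σ(env)`
    (X : ℕ → Ω → ℤ) (hX_meas : ∀ n, Measurable (X n))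
    (hX0 : ∀ᵐ ω ∂μ, X 0 ω = 0)
    (hquenched : ∀ (n : ℕ) (x : ℕ → ℤ), x 0 = 0 →
      μ[Set.indicator {ω | ∀ i ≤ n, X i ω = x i} (fun _ => (1 : ℝ)) |
          MeasurableSpace.comap (fun ω i => env i ω) MeasurableSpace.pi]
        =ᵐ[μ] fun ω => ∏ i ∈ Finset.range n, stepProb (env (x i) ω) (x (i + 1) - x i))
    -- the i.i.d. scenery, independent of the environment and of the walk
    (sce : ℤ → Ω → ℝ) (hsce_meas : ∀ x, Measurable (sce x))
    (hsce_indep : iIndepFun (m := fun _ : ℤ => (inferInstance : MeasurableSpace ℝ)) sce μ)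
    (hsce_ident : ∀ x, IdentDistrib (sce x) (sce 0) μ μ)
    (hsce_env_walk_indep :
      IndepFun (fun ω => (fun x : ℤ => sce x ω))
        (fun ω => ((fun i : ℤ => env i ω), (fun n : ℕ => X n ω))) μ)
    -- `a := ess sup ξ₀ < ∞`
    (a : ℝ) (ha : a = essSup (fun ω => sce 0 ω) μ) (ha_fin : ∀ᵐ ω ∂μ, sce 0 ω ≤ a)
    -- thin negative tails: `Q{ξ₀⁻ > λ} ≤ 1/(log λ)^{2+ε}` for all large `λ`
    (ε : ℝ) (hε : 0 < ε) (lam₀ : ℝ) (hlam₀ : 1 < lam₀)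
    (htail : ∀ lam : ℝ, lam₀ ≤ lam →
      (μ {ω | lam < max (-(sce 0 ω)) 0}).toReal ≤ 1 / Real.log lam ^ (2 + ε : ℝ)) :
    ∀ᵐ ω ∂μ,
      Filter.atTop.limsup
        (fun n : ℕ => (∑ i ∈ Finset.range (n + 1), sce (X i ω) ω) / (n : ℝ)) = a := by
  have henv : Sinai.IsIID env μ := ⟨henv_meas, henv_indep, henv_ident⟩
  have hsce : Sinai.IsIID sce μ := ⟨hsce_meas, hsce_indep, hsce_ident⟩
  have hwalk : Sinai.IsQuenchedWalk (fun ω i => env i ω) X μ :=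
    ⟨measurable_pi_lambda _ henv_meas, hX_meas, hX0, hquenched⟩
  have hstep := Sinai.stepLaw_map_log (henv_meas 0).aemeasurable hδ0 (henv_ell 0) henv_mean henv_var
  have henv₀₁ : ∀ᵐ ω ∂μ, ∀ y, 0 < env y ω ∧ env y ω < 1 :=
    ae_all_iff.2 fun y => (henv_ell y).mono fun ω hω => ⟨by linarith, by linarith⟩
  have hfreq (j : ℕ) : ∀ᵐ ω ∂μ, ∃ᶠ n : ℕ in atTop,
      (a - 1 / (j + 1)) * n ≤ ∑ i ∈ Finset.range n, sce (X i ω) ω := by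
    have hη : (0 : ℝ) < 1 / (j + 1) / 2 := by positivity
    have hfreq_half := Sinai.ae_frequently_sub_mul_le_sum henv hsce hwalk hsce_env_walk_indep hstep
      henv₀₁ hε htail ((sub_lt_self a hη).trans_eq ha) hη
    rwa [sub_sub, add_halves] at hfreq_half
  have hle : ∀ᵐ ω ∂μ, ∀ x, sce x ω ≤ a := ae_all_iff.2 fun x =>
    (hsce_ident x).symm.ae_snd (p := (· ≤ a)) measurableSet_Iic ha_fin
  filter_upwards [ae_all_iff.2 hfreq, hle] with ω hω hωa
  refine Sinai.limsup_succ_div_eq (s := fun n => ∑ i ∈ Finset.range n, sce (X i ω) ω)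
    (fun n => ?_) hω
  simpa [mul_comm] using Finset.sum_le_sum fun i (_ : i ∈ Finset.range n) => hωa (X i ω)
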